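/- arXiv:1210.6410 — 3 statements merged into one kernel-verified Lean document; each statement's English description precedes it below -/
import Mathlib

section
/- Let A = ℂ[x_1,…,x_N] be a polynomial ring, I an ideal of A, R = A/I, and let F_• : F_0 ←d_1 F_1 ← … ←d_n F_n ← 0 be a free resolution of R by finitely generated free A-modules. Suppose depth_A(I) = c. Then the local ring A_𝔭 has depth c for all primes 𝔭 associated to I if and only if depth(I(d_k)) > k for all k > c, where I(d_k) is the ideal of A generated by the maximal non-vanishing minors of d_k. -/
noncomputable section

open MvPolynomial

/-- The rank of a matrix over a commutative ring: the largest size of a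
square submatrix with nonzero determinant. -/
def Matrix.detRank {A : Type*} [CommRing A] {m n : Type*} [Fintype m] [Fintype n]
    (M : Matrix m n A) : ℕ :=
  sSup {r : ℕ | ∃ (f : Fin r → m) (g : Fin r → n),
    Function.Injective f ∧ Function.Injective g ∧ (M.submatrix f g).det ≠ 0}

/-- The ideal generated by the `r × r` minors of a matrix. -/
def Matrix.minorsIdeal {A : Type*} [CommRing A] {m n : Type*} [Fintype m] [Fintype n]
    (M : Matrix m n A) (r : ℕ) : Ideal A :=
  Ideal.span {x | ∃ (f : Fin r → m) (g : Fin r → n),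
    Function.Injective f ∧ Function.Injective g ∧ x = (M.submatrix f g).det}

/-- The ideal generated by the maximal non-vanishing minors of a matrix. -/
def Matrix.maxMinorsIdeal {A : Type*} [CommRing A] {m n : Type*} [Fintype m] [Fintype n]
    (M : Matrix m n A) : Ideal A :=
  M.minorsIdeal M.detRank

/-- The ideal `J` contains a weakly `A`-regular sequence of length `k`. -/
def Ideal.hasRegSeqOfLength {A : Type*} [CommRing A] (J : Ideal A) (k : ℕ) : Prop :=
  ∃ rs : List A, rs.length = k ∧ (∀ x ∈ rs, x ∈ J) ∧
    RingTheory.Sequence.IsWeaklyRegular A rs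

/-- The depth (grade) of an ideal. -/
def idealDepth {A : Type*} [CommRing A] (J : Ideal A) : ℕ∞ :=
  sSup {k : ℕ∞ | ∃ l : ℕ, k = l ∧ J.hasRegSeqOfLength l}

/-- The depth of the local ring `A_P`: the supremum of the lengths of regular
sequences contained in the maximal ideal `P A_P`. -/
def primeLocalDepth {A : Type*} [CommRing A] (P : Ideal A) (hP : P.IsPrime) : ℕ∞ :=
  letI := hP
  sSup {k : ℕ∞ | ∃ l : ℕ, k = l ∧ ∃ rs : List (Localization.AtPrime P),
    rs.length = l ∧ (∀ x ∈ rs, x ∈ IsLocalRing.maximalIdeal (Localization.AtPrime P)) ∧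
    RingTheory.Sequence.IsWeaklyRegular (Localization.AtPrime P) rs}

/-!
Write `M` for the resolved module and `Zₖ` for the cokernel of `d k`, so `Z₀ ≅ M`. Comparing ranks
of `d k` over the residue field of `P` and over the fraction field, the maximal non-vanishing minors
of `d k` are not all in `P` exactly when `Zₖ` is free at `P`; since `Zₖ` is a `k`-th syzygy of `M`,
this says `pd M_P ≤ k`. On the other side, the depth of an ideal `J` is attained as the depth of
`A_P` for some prime `P ⊇ J`. Hence everything is decided by comparing `pd M_P` and `depth A_P`:
a finite `pd M_P` is at most `depth A_P`, with equality if `P` is associated to `M` and strict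
inequality if it is not.

For `P` associated to `M`, `depth A_P ≥ c` because `P` contains the annihilator of `M`. If
`depth A_P = pd M_P = k + 1` with `k ≥ c`, then the minors of `d k` lie in `P`, so their ideal has
depth at most `k + 1`, which the depth condition on minors excludes. Conversely, if the minors of
`d k` had depth at most `k + 1` for some `k ≥ c`, they would lie in a prime `P` with
`depth A_P ≤ k + 1`, where `pd M_P > k`. By the strict inequality `P` is then associated to `M`, so
`k < pd M_P = depth A_P = c`, a contradiction.
-/

open CategoryTheory IsLocalRing RingTheory.Sequence TensorProduct
open scoped Pointwise

universe u

section Depth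

variable {A : Type*} [CommRing A] {J : Ideal A}

theorem hasRegSeqOfLength_zero (J : Ideal A) : J.hasRegSeqOfLength 0 :=
  ⟨[], rfl, by simp, .nil A A⟩

theorem natCast_le_idealDepth_iff {l : ℕ} : (l : ℕ∞) ≤ idealDepth J ↔ J.hasRegSeqOfLength l := by
  refine ⟨fun h ↦ ?_, fun h ↦ le_sSup ⟨l, rfl, h⟩⟩
  cases l with
  | zero => exact hasRegSeqOfLength_zero J
  | succ k =>
    obtain ⟨_, ⟨_, rfl, xs, rfl, hxs, hreg⟩, hk⟩ :=
      lt_sSup_iff.mp ((Nat.cast_lt.mpr k.lt_succ_self).trans_le h)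
    rw [← xs.take_append_drop (k + 1), isWeaklyRegular_append_iff] at hreg
    exact ⟨xs.take (k + 1), List.length_take_of_le (Nat.cast_lt.mp hk),
      fun x hx ↦ hxs x (List.mem_of_mem_take hx), hreg.1⟩

theorem idealDepth_le_natCast_iff {c : ℕ} :
    idealDepth J ≤ c ↔ ∀ l, J.hasRegSeqOfLength l → l ≤ c := by
  simp only [← natCast_le_idealDepth_iff]
  refine ⟨fun h l hl ↦ by exact_mod_cast hl.trans h, fun h ↦ ?_⟩
  by_contra! hlt
  have := h (c + 1) (by exact_mod_cast Order.add_one_le_of_lt hlt)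
  omega

theorem isWeaklyRegular_cons_iff_quotient {x : A} {xs : List A} :
    IsWeaklyRegular A (x :: xs) ↔ IsSMulRegular A x ∧
      IsWeaklyRegular (A ⧸ Ideal.span {x}) (xs.map (Ideal.Quotient.mk (Ideal.span {x}))) := by
  have e : QuotSMulTop x A ≃ₗ[A] A ⧸ Ideal.span {x} :=
    Submodule.quotEquivOfEq _ _ (by
      rw [← Submodule.ideal_span_singleton_smul, smul_eq_mul, Ideal.mul_top])
  rw [isWeaklyRegular_cons_iff', (e.extendScalarsOfSurjective (S := A ⧸ Ideal.span {x})
    Ideal.Quotient.mk_surjective).isWeaklyRegular_congr]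

theorem hasRegSeqOfLength_succ_of_map_mk {x : A} (hx : x ∈ J) (hxA : IsSMulRegular A x) {l : ℕ}
    (h : (J.map (Ideal.Quotient.mk (Ideal.span {x}))).hasRegSeqOfLength l) :
    J.hasRegSeqOfLength (l + 1) := by
  obtain ⟨ys, rfl, hys, hreg⟩ := h
  choose lift hlift hmk using fun y (hy : y ∈ ys) ↦
    (Ideal.mem_map_iff_of_surjective _ Ideal.Quotient.mk_surjective).mp (hys y hy)
  refine ⟨x :: ys.attach.map fun y ↦ lift y.1 y.2, by simp, ?_,
    isWeaklyRegular_cons_iff_quotient.mpr ⟨hxA, ?_⟩⟩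
  · simp only [List.mem_cons, List.mem_map, forall_eq_or_imp]
    exact ⟨hx, fun _ ⟨y, _, hy⟩ ↦ hy ▸ hlift y.1 y.2⟩
  · simpa [Function.comp_def, hmk] using hreg

end Depth

section PrimeAvoidance

variable {A : Type*} [CommRing A] [IsNoetherianRing A] (M : Type*) [AddCommGroup M] [Module A M]
  [Module.Finite A M]

theorem exists_isSMulRegular_or_exists_le_associatedPrime (J : Ideal A) :
    (∃ x ∈ J, IsSMulRegular M x) ∨ ∃ P ∈ associatedPrimes A M, J ≤ P := by
  refine or_iff_not_imp_left.mpr fun h ↦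
    (Ideal.subset_union_prime_finite (associatedPrimes.finite A M) (f := id) ⊤ ⊤
      fun P hP _ _ ↦ hP.1).mp fun x hx ↦ ?_
  simp only [id, biUnion_associatedPrimes_eq_compl_regular]
  exact fun hreg ↦ h ⟨x, hx, hreg⟩

theorem exists_isSMulRegular_of_maximalIdeal_notMem_associatedPrimes [IsLocalRing A]
    (h : maximalIdeal A ∉ associatedPrimes A M) : ∃ x ∈ maximalIdeal A, IsSMulRegular M x := by
  refine (exists_isSMulRegular_or_exists_le_associatedPrime M _).resolve_right ?_
  rintro ⟨P, hP, hle⟩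
  exact h ((maximalIdeal.isMaximal A).eq_of_le hP.1.ne_top hle ▸ hP)

end PrimeAvoidance

section ProjectiveDimension

variable {S : Type u} [CommRing S] {K F M : Type u} [AddCommGroup K] [Module S K]
  [AddCommGroup F] [Module S F] [AddCommGroup M] [Module S M]

theorem hasProjectiveDimensionLE_zero_iff :
    HasProjectiveDimensionLE (ModuleCat.of S M) 0 ↔ Module.Projective S M := by
  rw [← projective_iff_hasProjectiveDimensionLE_zero, ← IsProjective.iff_projective]

theorem hasProjectiveDimensionLE_mono {m n : ℕ}
    (h : HasProjectiveDimensionLE (ModuleCat.of S M) m) (hmn : m ≤ n) :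
    HasProjectiveDimensionLE (ModuleCat.of S M) n :=
  hasProjectiveDimensionLT_of_ge _ (m + 1) (n + 1) (by omega)

theorem hasProjectiveDimensionLE_succ_iff_ker [Module.Projective S F] {f : F →ₗ[S] M}
    (hf : Function.Surjective f) (n : ℕ) :
    HasProjectiveDimensionLE (ModuleCat.of S M) (n + 1) ↔
      HasProjectiveDimensionLE (ModuleCat.of S (LinearMap.ker f)) n :=
  (LinearMap.shortExact_shortComplexKer hf).hasProjectiveDimensionLT_X₃_iff n
    (ModuleCat.projective_of_categoryTheory_projective (ModuleCat.of S F))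

theorem hasProjectiveDimensionLE_succ_iff_of_exact [Module.Projective S F] {g : K →ₗ[S] F}
    {f : F →ₗ[S] M} (hg : Function.Injective g) (hgf : Function.Exact g f)
    (hf : Function.Surjective f) (n : ℕ) :
    HasProjectiveDimensionLE (ModuleCat.of S M) (n + 1) ↔
      HasProjectiveDimensionLE (ModuleCat.of S K) n := by
  let e : K ≃ₗ[S] LinearMap.ker f :=
    (LinearEquiv.ofInjective g hg).trans (LinearEquiv.ofEq _ _ hgf.linearMap_ker_eq.symm)
  rw [hasProjectiveDimensionLE_succ_iff_ker hf]
  exact ⟨fun _ ↦ hasProjectiveDimensionLT_of_iso e.symm.toModuleIso _,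
    fun _ ↦ hasProjectiveDimensionLT_of_iso e.toModuleIso _⟩

end ProjectiveDimension

section QuotSMulTop

variable {S : Type*} [CommRing S] {x : S} {F M : Type*} [AddCommGroup F] [Module S F]
  [AddCommGroup M] [Module S M]

theorem isSMulRegular_of_projective [Module.Projective S M] (hx : IsSMulRegular S x) :
    IsSMulRegular M x :=
  Module.Flat.isSMulRegular_of_isRegular (isLeftRegular_iff_isRegular.mp hx)

theorem isSMulRegular_ker [Module.Projective S F]
    (f : F →ₗ[S] M) (hx : IsSMulRegular S x) : IsSMulRegular (LinearMap.ker f) x :=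
  (isSMulRegular_of_projective hx).of_injective (LinearMap.ker f).subtype Subtype.val_injective

theorem projective_quotSMulTop [Module.Projective S M] :
    Module.Projective (S ⧸ Ideal.span {x}) (QuotSMulTop x M) :=
  .of_equiv ((QuotSMulTop.equivQuotTensor x M).extendScalarsOfSurjective
    Ideal.Quotient.mk_surjective).symm

theorem quotSMulTop_map_subtype_ker_injective
    (f : F →ₗ[S] M) (hx : IsSMulRegular M x) :
    Function.Injective (QuotSMulTop.map x (LinearMap.ker f).subtype) := by
  refine (injective_iff_map_eq_zero _).mpr fun a ha ↦ ?_
  obtain ⟨v, rfl⟩ := Submodule.mkQ_surjective _ a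
  obtain ⟨w, -, hw⟩ := (Submodule.mem_smul_pointwise_iff_exists _ _ _).mp
    ((Submodule.Quotient.mk_eq_zero _).mp ha)
  have hfw : f w = 0 := hx.right_eq_zero_of_smul (by rw [← map_smul, hw]; exact v.2)
  exact (Submodule.Quotient.mk_eq_zero _).mpr
    ((Submodule.mem_smul_pointwise_iff_exists _ _ _).mpr ⟨⟨w, hfw⟩, trivial, Subtype.ext hw⟩)

theorem isLocalRing_quotient_span_singleton [IsLocalRing S] (hx : x ∈ maximalIdeal S) :
    IsLocalRing (S ⧸ Ideal.span {x}) := by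
  have : Nontrivial (S ⧸ Ideal.span {x}) := Ideal.Quotient.nontrivial_iff.mpr
    (ne_top_of_le_ne_top (maximalIdeal.isMaximal S).ne_top
      ((Ideal.span_singleton_le_iff_mem _).mpr hx))
  exact .of_surjective' _ Ideal.Quotient.mk_surjective

end QuotSMulTop

section ProjectiveDimensionQuotSMulTop

variable {S : Type u} [CommRing S] {x : S} {F M : Type u} [AddCommGroup F] [Module S F]
  [AddCommGroup M] [Module S M]

theorem hasProjectiveDimensionLE_succ_quotSMulTop_iff_ker [Module.Projective S F]
    {f : F →ₗ[S] M} (hf : Function.Surjective f) (hx : IsSMulRegular M x)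
    (n : ℕ) :
    HasProjectiveDimensionLE (ModuleCat.of (S ⧸ Ideal.span {x}) (QuotSMulTop x M)) (n + 1) ↔
      HasProjectiveDimensionLE
        (ModuleCat.of (S ⧸ Ideal.span {x}) (QuotSMulTop x (LinearMap.ker f))) n := by
  have : Module.Projective (S ⧸ Ideal.span {x}) (QuotSMulTop x F) := projective_quotSMulTop
  have hmk : Function.Surjective (algebraMap S (S ⧸ Ideal.span {x})) :=
    Ideal.Quotient.mk_surjective
  exact hasProjectiveDimensionLE_succ_iff_of_exact
    (g := (QuotSMulTop.map x (LinearMap.ker f).subtype).extendScalarsOfSurjective hmk)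
    (f := (QuotSMulTop.map x f).extendScalarsOfSurjective hmk)
    (quotSMulTop_map_subtype_ker_injective f hx)
    (QuotSMulTop.map_exact x (LinearMap.exact_subtype_ker_map f) hf)
    (QuotSMulTop.map_surjective x hf) n

theorem hasProjectiveDimensionLE_quotSMulTop (hxS : IsSMulRegular S x) (hxM : IsSMulRegular M x)
    {n : ℕ} (h : HasProjectiveDimensionLE (ModuleCat.of S M) n) :
    HasProjectiveDimensionLE (ModuleCat.of (S ⧸ Ideal.span {x}) (QuotSMulTop x M)) n := by
  induction n generalizing M with
  | zero =>
    rw [hasProjectiveDimensionLE_zero_iff] at h ⊢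
    exact projective_quotSMulTop
  | succ n ih =>
    have hf := Finsupp.linearCombination_id_surjective S M
    rw [hasProjectiveDimensionLE_succ_quotSMulTop_iff_ker hf hxM]
    exact ih (isSMulRegular_ker _ hxS) ((hasProjectiveDimensionLE_succ_iff_ker hf n).mp h)

theorem hasProjectiveDimensionLE_of_quotSMulTop [IsLocalRing S] [IsNoetherianRing S]
    [Module.Finite S M] (hx : x ∈ maximalIdeal S) (hxS : IsSMulRegular S x)
    (hxM : IsSMulRegular M x) {n : ℕ}
    (h : HasProjectiveDimensionLE (ModuleCat.of (S ⧸ Ideal.span {x}) (QuotSMulTop x M)) n) :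
    HasProjectiveDimensionLE (ModuleCat.of S M) n := by
  induction n generalizing M with
  | zero =>
    have := isLocalRing_quotient_span_singleton hx
    have := Module.finitePresentation_of_finite S M
    have : Module.Finite (S ⧸ Ideal.span {x}) (QuotSMulTop x M) :=
      .of_restrictScalars_finite S _ _
    rw [hasProjectiveDimensionLE_zero_iff] at h ⊢
    have hfree : Module.Free S M :=
      (Module.free_quotSMulTop_iff_free S M (maximalIdeal_le_jacobson _ hx) hxM).mp
        Module.free_of_flat_of_isLocalRing
    infer_instance
  | succ n ih =>
    obtain ⟨r, f, hf⟩ := Module.Finite.exists_fin' S M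
    rw [hasProjectiveDimensionLE_succ_quotSMulTop_iff_ker hf hxM] at h
    exact (hasProjectiveDimensionLE_succ_iff_ker hf n).mpr (ih (isSMulRegular_ker f hxS) h)

end ProjectiveDimensionQuotSMulTop

section Local

variable {S : Type u} [CommRing S] {M : Type u} [AddCommGroup M] [Module S M]

/- A nonzero element killed by `x` lifts to some `w` in a free cover; then `x • w` is a relation,
and its class modulo `x` is an element of the first syzygy over `S ⧸ (x)` of the same kind. -/
theorem eq_zero_of_isWeaklyRegular_of_forall_smul_eq_zero {xs : List S}
    (hreg : IsWeaklyRegular S xs) {p : ℕ} (hp : p < xs.length)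
    (hM : HasProjectiveDimensionLE (ModuleCat.of S M) p) {y : M} (hy : ∀ x ∈ xs, x • y = 0) :
    y = 0 := by
  induction p generalizing S M with
  | zero =>
    obtain ⟨x, rs, rfl⟩ := List.exists_cons_of_length_pos hp
    have : Module.Projective S M := hasProjectiveDimensionLE_zero_iff.mp hM
    exact (isSMulRegular_of_projective (isWeaklyRegular_cons_iff_quotient.mp hreg).1)
      |>.right_eq_zero_of_smul (hy x (by simp))
  | succ p ih =>
    obtain ⟨x, rs, rfl⟩ := List.exists_cons_of_length_pos (p.zero_lt_succ.trans hp)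
    obtain ⟨hxS, hrs⟩ := isWeaklyRegular_cons_iff_quotient.mp hreg
    let f : (M →₀ S) →ₗ[S] M := Finsupp.linearCombination S id
    have hf : Function.Surjective f := Finsupp.linearCombination_id_surjective S M
    have hK : HasProjectiveDimensionLE
        (ModuleCat.of (S ⧸ Ideal.span {x}) (QuotSMulTop x (LinearMap.ker f))) p :=
      hasProjectiveDimensionLE_quotSMulTop hxS (isSMulRegular_ker f hxS)
        ((hasProjectiveDimensionLE_succ_iff_ker hf p).mp hM)
    obtain ⟨w, rfl⟩ := hf y
    have hmem : ∀ a ∈ x :: rs, a • w ∈ LinearMap.ker f := fun a ha ↦ by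
      rw [LinearMap.mem_ker, map_smul, hy a ha]
    have hxw : (Submodule.Quotient.mk ⟨x • w, hmem x (by simp)⟩ :
        QuotSMulTop x (LinearMap.ker f)) = 0 := by
      refine ih hrs (by simpa using hp) hK fun b hb ↦ ?_
      obtain ⟨a, ha, rfl⟩ := List.mem_map.mp hb
      exact (Submodule.Quotient.mk_eq_zero _).mpr
        ((Submodule.mem_smul_pointwise_iff_exists _ _ _).mpr
          ⟨⟨a • w, hmem a (by simp [ha])⟩, trivial, Subtype.ext (smul_comm _ _ _)⟩)
    obtain ⟨v, -, hv⟩ := (Submodule.mem_smul_pointwise_iff_exists _ _ _).mp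
      ((Submodule.Quotient.mk_eq_zero _).mp hxw)
    have hvw : (v : M →₀ S) = w := isSMulRegular_of_projective hxS (congrArg Subtype.val hv)
    exact hvw ▸ v.2

theorem idealDepth_le_of_mem_associatedPrimes [IsNoetherianRing S] {P : Ideal S}
    (hP : P ∈ associatedPrimes S M) {p : ℕ}
    (hM : HasProjectiveDimensionLE (ModuleCat.of S M) p) : idealDepth P ≤ p := by
  obtain ⟨hprime, y, hy⟩ := isAssociatedPrime_iff.mp hP
  refine idealDepth_le_natCast_iff.mpr ?_
  rintro _ ⟨xs, rfl, hxs, hreg⟩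
  by_contra! hlt
  have hy0 : y = 0 := eq_zero_of_isWeaklyRegular_of_forall_smul_eq_zero hreg hlt hM fun x hx ↦ by
    simpa [hy, Submodule.mem_colon_singleton] using hxs x hx
  exact hprime.ne_top ((Ideal.eq_top_iff_one _).mpr (by simp [hy, hy0]))

end Local

section MinimalCover

variable {S : Type*} [CommRing S] {M : Type*} [AddCommGroup M] [Module S M]

variable (S M) in
theorem exists_surjective_of_finrank_residueField_tensor [IsLocalRing S] [Module.Finite S M] :
    ∃ f : (Fin (Module.finrank (ResidueField S) (ResidueField S ⊗[S] M)) → S) →ₗ[S] M,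
      Function.Surjective f := by
  let b := Module.finBasis (ResidueField S) (ResidueField S ⊗[S] M)
  choose v hv using fun i ↦
    TensorProduct.mk_surjective S M (ResidueField S) IsLocalRing.residue_surjective (b i)
  refine ⟨Fintype.linearCombination S v, ?_⟩
  rw [← LinearMap.range_eq_top, Fintype.range_linearCombination]
  exact span_eq_top_of_tmul_eq_basis v b hv

theorem algebraMap_eq_zero_of_mem_ker_of_card_eq_finrank {L : Type*} [Field L]
    [Algebra S L] {ι : Type*} [Fintype ι] (hι : Fintype.card ι = Module.finrank L (L ⊗[S] M))
    {f : (ι → S) →ₗ[S] M} (hf : Function.Surjective f) {v : ι → S} (hv : v ∈ LinearMap.ker f)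
    (i : ι) :
    algebraMap S L (v i) = 0 := by
  classical
  have := (algebraMap S L).domain_nontrivial
  have : Module.Finite S M := .of_surjective f hf
  have hinj : Function.Injective (f.baseChange L) :=
    (LinearMap.injective_iff_surjective_of_finrank_eq_finrank (by
      rw [← hι, Module.finrank_baseChange, Module.finrank_fintype_fun_eq_card])).mpr
      (LinearMap.lTensor_surjective L hf)
  have h0 : (1 : L) ⊗ₜ[S] v = 0 := hinj (by simp [LinearMap.mem_ker.mp hv])
  have hi := congrArg (fun z ↦ TensorProduct.piScalarRight S L L ι z i) h0
  simpa [Algebra.smul_def] using hi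

end MinimalCover

section AuslanderBuchsbaum

variable {S : Type u} [CommRing S] [IsLocalRing S] [IsNoetherianRing S] {M : Type u}
  [AddCommGroup M] [Module S M] [Module.Finite S M]

/- The relations of a minimal cover have coefficients in `𝔪`, so a nonzero `s` with `𝔪 * s = 0`
kills them; a free module of relations must then vanish. -/
theorem projective_of_maximalIdeal_mem_associatedPrimes
    (hS : maximalIdeal S ∈ associatedPrimes S S) {n : ℕ}
    (hM : HasProjectiveDimensionLE (ModuleCat.of S M) n) : Module.Projective S M := by
  induction n generalizing M with
  | zero => exact hasProjectiveDimensionLE_zero_iff.mp hM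
  | succ n ih =>
    obtain ⟨f, hf⟩ := exists_surjective_of_finrank_residueField_tensor S M
    have : Module.Projective S (LinearMap.ker f) :=
      ih ((hasProjectiveDimensionLE_succ_iff_ker hf n).mp hM)
    have : Module.Free S (LinearMap.ker f) := Module.free_of_flat_of_isLocalRing
    obtain ⟨hprime, s, hs⟩ := isAssociatedPrime_iff.mp hS
    have hsm : ∀ a ∈ maximalIdeal S, a * s = 0 := fun a ha ↦ by
      simpa [hs, Submodule.mem_colon_singleton] using ha
    have hs0 : s ≠ 0 := by
      rintro rfl
      exact hprime.ne_top ((Ideal.eq_top_iff_one _).mpr (by simp [hs]))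
    have hann : s ∈ Module.annihilator S (LinearMap.ker f) :=
      Module.mem_annihilator.mpr fun v ↦ Subtype.ext <| funext fun i ↦ by
        have hvi := algebraMap_eq_zero_of_mem_ker_of_card_eq_finrank
          (L := ResidueField S) (by simp) hf v.2 i
        rw [ResidueField.algebraMap_eq, residue_eq_zero_iff] at hvi
        simpa [mul_comm] using hsm _ hvi
    have hker : LinearMap.ker f = ⊥ := by
      by_contra hne
      have := Submodule.nontrivial_iff_ne_bot.mpr hne
      rw [Module.annihilator_eq_bot.mpr inferInstance] at hann
      exact hs0 hann
    exact .of_equiv (LinearEquiv.ofBijective f ⟨LinearMap.ker_eq_bot.mp hker, hf⟩)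

/- Reduce the first syzygy of `M`, rather than `M`, modulo a regular `x ∈ 𝔪`: `x` is regular on it
even if it is not on `M`, and depth drops along with projective dimension. -/
theorem hasProjectiveDimensionLE_of_idealDepth_maximalIdeal_le {c n : ℕ}
    (hc : idealDepth (maximalIdeal S) ≤ c)
    (hM : HasProjectiveDimensionLE (ModuleCat.of S M) n) :
    HasProjectiveDimensionLE (ModuleCat.of S M) c := by
  induction c using Nat.strong_induction_on generalizing S M n with
  | _ c ih =>
    by_cases hS : maximalIdeal S ∈ associatedPrimes S S
    · exact hasProjectiveDimensionLE_mono (hasProjectiveDimensionLE_zero_iff.mpr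
        (projective_of_maximalIdeal_mem_associatedPrimes hS hM)) c.zero_le
    obtain ⟨x, hx, hxS⟩ := exists_isSMulRegular_of_maximalIdeal_notMem_associatedPrimes S hS
    have := isLocalRing_quotient_span_singleton hx
    have hdrop : ∀ l, (maximalIdeal (S ⧸ Ideal.span {x})).hasRegSeqOfLength l → l + 1 ≤ c := by
      rw [← map_maximalIdeal_of_surjective _ Ideal.Quotient.mk_surjective]
      exact fun l hl ↦
        idealDepth_le_natCast_iff.mp hc _ (hasRegSeqOfLength_succ_of_map_mk hx hxS hl)
    obtain ⟨k, rfl⟩ := Nat.exists_eq_add_of_le' (hdrop 0 (hasRegSeqOfLength_zero _))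
    obtain ⟨r, f, hf⟩ := Module.Finite.exists_fin' S M
    have : Module.Finite (S ⧸ Ideal.span {x}) (QuotSMulTop x (LinearMap.ker f)) :=
      .of_restrictScalars_finite S _ _
    have hxK : IsSMulRegular (LinearMap.ker f) x := isSMulRegular_ker f hxS
    have hK : HasProjectiveDimensionLE (ModuleCat.of S (LinearMap.ker f)) n :=
      (hasProjectiveDimensionLE_succ_iff_ker hf n).mp (hasProjectiveDimensionLE_mono hM n.le_succ)
    exact (hasProjectiveDimensionLE_succ_iff_ker hf k).mpr <|
      hasProjectiveDimensionLE_of_quotSMulTop hx hxS hxK <|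
        ih k k.lt_succ_self (idealDepth_le_natCast_iff.mpr fun l hl ↦ by simpa using hdrop l hl)
          (hasProjectiveDimensionLE_quotSMulTop hxS hxK hK)

theorem hasProjectiveDimensionLE_succ_quotSMulTop_iff {x : S} (hx : x ∈ maximalIdeal S)
    (hxM : IsSMulRegular M x) {m : ℕ} :
    HasProjectiveDimensionLE (ModuleCat.of S (QuotSMulTop x M)) (m + 1) ↔
      HasProjectiveDimensionLE (ModuleCat.of S M) m := by
  rw [← projectiveDimension_le_iff, ← projectiveDimension_le_iff, Nat.cast_add, Nat.cast_one,
    ModuleCat.projectiveDimension_quotSMulTop_eq_succ_of_isSMulRegular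
      (ModuleCat.of S M) x hxM hx, ENat.WithBot.add_le_add_one_right_iff]

/- If `x ∈ 𝔪` is regular on `M`, then `M ⧸ xM` has projective dimension one more than `M`, and the
general bound applies to `M ⧸ xM`. -/
theorem hasProjectiveDimensionLE_of_maximalIdeal_notMem_associatedPrimes {k n : ℕ}
    (hk : idealDepth (maximalIdeal S) ≤ k + 1) (hass : maximalIdeal S ∉ associatedPrimes S M)
    (hM : HasProjectiveDimensionLE (ModuleCat.of S M) n) :
    HasProjectiveDimensionLE (ModuleCat.of S M) k := by
  obtain ⟨x, hx, hxM⟩ := exists_isSMulRegular_of_maximalIdeal_notMem_associatedPrimes M hass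
  rw [← hasProjectiveDimensionLE_succ_quotSMulTop_iff hx hxM] at hM ⊢
  exact hasProjectiveDimensionLE_of_idealDepth_maximalIdeal_le (by exact_mod_cast hk) hM

end AuslanderBuchsbaum

section Localization

theorem hasProjectiveDimensionLE_quotient_ofList {A : Type u} [CommRing A] {M : Type u}
    [AddCommGroup M] [Module A M] {xs : List A} (hxs : IsWeaklyRegular M xs) {n : ℕ}
    (hM : HasProjectiveDimensionLE (ModuleCat.of A M) n) :
    HasProjectiveDimensionLE (ModuleCat.of A (M ⧸ (Ideal.ofList xs • ⊤ : Submodule A M)))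
      (n + xs.length) := by
  induction xs generalizing M n with
  | nil =>
    exact ModuleCat.hasProjectiveDimensionLE_of_linearEquiv (M := ModuleCat.of A M)
      (Submodule.quotEquivOfEqBot _ (by simp)).symm n
  | cons x xs ih =>
    obtain ⟨hx, hxs⟩ := (isWeaklyRegular_cons_iff M x xs).mp hxs
    have hquot : HasProjectiveDimensionLE (ModuleCat.of A (QuotSMulTop x M)) (n + 1) :=
      (IsSMulRegular.smulShortComplex_shortExact (M := ModuleCat.of A M) hx)
        |>.hasProjectiveDimensionLT_X₃ (n + 1) hM (hasProjectiveDimensionLE_mono hM n.le_succ)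
    have := ih hxs hquot
    rw [List.length_cons, add_comm xs.length, ← add_assoc]
    exact ModuleCat.hasProjectiveDimensionLE_of_linearEquiv
      (M := ModuleCat.of A (QuotSMulTop x M ⧸ (Ideal.ofList xs • ⊤ : Submodule A _)))
      (Submodule.quotOfListConsSMulTopEquivQuotSMulTopInner M x xs).symm _

theorem hasProjectiveDimensionLE_localizedModule {A : Type u} [CommRing A] {M : Type u}
    [AddCommGroup M] [Module A M] (T : Submonoid A) {n : ℕ}
    (hM : HasProjectiveDimensionLE (ModuleCat.of A M) n) :
    HasProjectiveDimensionLE (ModuleCat.of (Localization T) (LocalizedModule T M)) n := by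
  have := (ModuleCat.of A M).localizedModule_hasProjectiveDimensionLE n T
  have hloc := (ModuleCat.of A M).localizedModule_isLocalizedModule T
  exact ModuleCat.hasProjectiveDimensionLE_of_linearEquiv
    (LinearEquiv.extendScalarsOfIsLocalization T (Localization T)
      (IsLocalizedModule.linearEquiv T ((ModuleCat.of A M).localizedModuleMkLinearMap T)
        (LocalizedModule.mkLinearMap T M))) n

theorem idealDepth_le_idealDepth_localization {A : Type*} [CommRing A] {J P : Ideal A}
    [P.IsPrime] (hJP : J ≤ P) :
    idealDepth J ≤ idealDepth (maximalIdeal (Localization.AtPrime P)) := by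
  refine sSup_le ?_
  rintro _ ⟨_, rfl, xs, rfl, hJ, hreg⟩
  refine natCast_le_idealDepth_iff.mpr ⟨xs.map (algebraMap A (Localization.AtPrime P)),
    by simp, ?_, hreg.of_isLocalization _ P.primeCompl⟩
  simp only [List.mem_map, forall_exists_index, and_imp, forall_apply_eq_imp_iff₂]
  exact fun x hx ↦ (IsLocalization.AtPrime.to_map_mem_maximal_iff _ P x).mpr (hJP (hJ x hx))

variable {A : Type u} [CommRing A] [IsNoetherianRing A]

/- The prime is associated to `A ⧸ (xs)` for a maximal regular sequence `xs` in `J`, and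
`A ⧸ (xs)` has projective dimension at most the length of `xs`. -/
theorem exists_isPrime_idealDepth_localization_le {J : Ideal A} {c : ℕ} (hJ : idealDepth J ≤ c) :
    ∃ (P : Ideal A) (_ : P.IsPrime), J ≤ P ∧
      idealDepth (maximalIdeal (Localization.AtPrime P)) ≤ c := by
  obtain ⟨t, ht⟩ := ENat.ne_top_iff_exists.mp (ne_top_of_le_ne_top (ENat.natCast_ne_top c) hJ)
  obtain ⟨xs, rfl, hxs, hreg⟩ := natCast_le_idealDepth_iff.mp ht.le
  let Q := A ⧸ (Ideal.ofList xs • ⊤ : Submodule A A)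
  obtain ⟨y, hy, hyQ⟩ | ⟨P, hP, hJP⟩ := exists_isSMulRegular_or_exists_le_associatedPrime Q J
  · have hlong : J.hasRegSeqOfLength (xs.length + 1) := by
      refine ⟨xs ++ [y], by simp, ?_, ?_⟩
      · simpa [or_imp, forall_and] using ⟨hxs, hy⟩
      · rw [isWeaklyRegular_append_iff, isWeaklyRegular_singleton_iff]
        exact ⟨hreg, hyQ⟩
    have := idealDepth_le_natCast_iff.mp ht.ge _ hlong
    omega
  · have := hP.1
    have : IsNoetherianRing (Localization.AtPrime P) :=
      IsLocalization.isNoetherianRing P.primeCompl _ inferInstance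
    have hQ : HasProjectiveDimensionLE (ModuleCat.of A Q) xs.length := by
      rw [← zero_add xs.length]
      exact hasProjectiveDimensionLE_quotient_ofList hreg
        (hasProjectiveDimensionLE_zero_iff.mpr inferInstance)
    refine ⟨P, hP.1, hJP, le_trans ?_ (ht.trans_le hJ)⟩
    exact idealDepth_le_of_mem_associatedPrimes
      (Module.associatedPrimes.mem_associatedPrimes_atPrime_of_mem_associatedPrimes hP)
      (hasProjectiveDimensionLE_localizedModule P.primeCompl hQ)

open Module.associatedPrimes in
theorem maximalIdeal_mem_associatedPrimes_localizedModule_iff {M : Type*} [AddCommGroup M]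
    [Module A M] {P : Ideal A} [P.IsPrime] :
    maximalIdeal (Localization.AtPrime P) ∈
      associatedPrimes (Localization.AtPrime P) (LocalizedModule P.primeCompl M) ↔
      P ∈ associatedPrimes A M := by
  rw [← preimage_comap_associatedPrimes_eq_associatedPrimes_of_isLocalizedModule P.primeCompl
    (Localization.AtPrime P) (LocalizedModule.mkLinearMap P.primeCompl M), Set.mem_preimage,
    ← Ideal.under_def, Localization.AtPrime.under_maximalIdeal]

end Localization

section MatrixRank

variable {A L : Type*} [CommRing A] [Field L] {m n : Type*} [Finite m]
  [Fintype n]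

theorem exists_linearIndependent_submatrix_rows (B : Matrix m n L) {ρ : ℕ} (h : ρ ≤ B.rank) :
    ∃ f : Fin ρ → m, LinearIndependent L (B.submatrix f id).row := by
  rw [Matrix.rank_eq_finrank_span_row] at h
  obtain ⟨w, hw, -, hli⟩ := Submodule.exists_fun_fin_finrank_span_eq L (Set.range B.row)
  choose f hf using hw
  refine ⟨f ∘ Fin.castLE h, ?_⟩
  have := hli.comp _ (Fin.castLE_injective h)
  rwa [← funext hf] at this

theorem le_rank_iff_exists_det_submatrix_ne_zero (B : Matrix m n L) {ρ : ℕ} :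
    ρ ≤ B.rank ↔ ∃ (f : Fin ρ → m) (g : Fin ρ → n), Function.Injective f ∧
      Function.Injective g ∧ (B.submatrix f g).det ≠ 0 := by
  refine ⟨fun h ↦ ?_, fun ⟨f, g, _, _, h⟩ ↦ ?_⟩
  · obtain ⟨f, hf⟩ := exists_linearIndependent_submatrix_rows B h
    have hrank : ρ ≤ (B.submatrix f id).transpose.rank := by
      rw [Matrix.rank_transpose, hf.rank_matrix, Fintype.card_fin]
    obtain ⟨g, hg⟩ := exists_linearIndependent_submatrix_rows _ hrank
    have hdet : (B.submatrix f g).det ≠ 0 := by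
      rw [← Matrix.det_transpose]
      exact ((Matrix.isUnit_iff_isUnit_det _).mp
        (Matrix.linearIndependent_rows_iff_isUnit.mp hg)).ne_zero
    refine ⟨f, g, fun i j hij ↦ ?_, fun i j hij ↦ ?_, hdet⟩ <;> by_contra hne
    · exact hdet (Matrix.det_zero_of_row_eq hne (by ext; simp [hij]))
    · exact hdet (Matrix.det_zero_of_column_eq hne (by simp [hij]))
  · have hρ := Matrix.rank_of_isUnit (B.submatrix f g)
      ((Matrix.isUnit_iff_isUnit_det _).mpr h.isUnit)
    rw [Fintype.card_fin] at hρ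
    exact hρ ▸ Matrix.rank_submatrix_le B f g

theorem le_rank_map_iff_exists_algebraMap_det_submatrix_ne_zero [Algebra A L] (B : Matrix m n A)
    {ρ : ℕ} : ρ ≤ (B.map (algebraMap A L)).rank ↔ ∃ (f : Fin ρ → m) (g : Fin ρ → n),
      Function.Injective f ∧ Function.Injective g ∧
        algebraMap A L (B.submatrix f g).det ≠ 0 := by
  simp only [le_rank_iff_exists_det_submatrix_ne_zero, RingHom.map_det, RingHom.mapMatrix_apply,
    Matrix.submatrix_map]

theorem rank_map_le_rank_map (K : Type*) [Field K] [Algebra A K] [Algebra A L] [FaithfulSMul A L]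
    (B : Matrix m n A) : (B.map (algebraMap A K)).rank ≤ (B.map (algebraMap A L)).rank := by
  obtain ⟨f, g, hf, hg, h⟩ :=
    (le_rank_map_iff_exists_algebraMap_det_submatrix_ne_zero (L := K) B).mp le_rfl
  refine (le_rank_map_iff_exists_algebraMap_det_submatrix_ne_zero B).mpr
    ⟨f, g, hf, hg, fun h0 ↦ h ?_⟩
  rw [(FaithfulSMul.algebraMap_eq_zero_iff A L).mp h0, map_zero]

end MatrixRank

section MinorsIdeal

variable {A L : Type*} [CommRing A] [Field L] [Algebra A L] {m n : Type*} [Fintype m] [Fintype n]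

theorem detRank_eq_rank_map [FaithfulSMul A L] (B : Matrix m n A) :
    B.detRank = (B.map (algebraMap A L)).rank := by
  have hset : {r : ℕ | ∃ (f : Fin r → m) (g : Fin r → n), Function.Injective f ∧
      Function.Injective g ∧ (B.submatrix f g).det ≠ 0} =
      Set.Iic (B.map (algebraMap A L)).rank := by
    ext r
    simp [le_rank_map_iff_exists_algebraMap_det_submatrix_ne_zero]
  rw [Matrix.detRank, hset, csSup_Iic]

theorem not_minorsIdeal_le_ker_algebraMap_iff (B : Matrix m n A) (ρ : ℕ) :
    ¬ B.minorsIdeal ρ ≤ RingHom.ker (algebraMap A L) ↔ ρ ≤ (B.map (algebraMap A L)).rank := by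
  rw [le_rank_map_iff_exists_algebraMap_det_submatrix_ne_zero, Matrix.minorsIdeal, Ideal.span_le,
    Set.not_subset]
  constructor
  · rintro ⟨_, ⟨f, g, hf, hg, rfl⟩, h⟩
    exact ⟨f, g, hf, hg, h⟩
  · rintro ⟨f, g, hf, hg, h⟩
    exact ⟨_, ⟨f, g, hf, hg, rfl⟩, h⟩

theorem not_maxMinorsIdeal_le_ker_algebraMap_iff (K : Type*) [Field K] [Algebra A K]
    [FaithfulSMul A K] (B : Matrix m n A) :
    ¬ B.maxMinorsIdeal ≤ RingHom.ker (algebraMap A L) ↔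
      (B.map (algebraMap A L)).rank = (B.map (algebraMap A K)).rank := by
  rw [Matrix.maxMinorsIdeal, not_minorsIdeal_le_ker_algebraMap_iff,
    detRank_eq_rank_map (L := K), (rank_map_le_rank_map L B).ge_iff_eq]

end MinorsIdeal

section Cokernel

theorem finrank_tensor_coker_add_rank {A L : Type*} [CommRing A] [Field L] [Algebra A L]
    {m n : Type*} [Fintype m] [Fintype n] (B : Matrix m n A) :
    Module.finrank L (L ⊗[A] ((m → A) ⧸ LinearMap.range B.mulVecLin)) +
      (B.map (algebraMap A L)).rank = Fintype.card m := by
  classical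
  have := (algebraMap A L).domain_nontrivial
  let π := (LinearMap.range B.mulVecLin).mkQ
  have hexact : Function.Exact (B.mulVecLin.baseChange L) (π.baseChange L) :=
    lTensor_exact L (LinearMap.exact_map_mkQ_range _) (Submodule.mkQ_surjective _)
  have hsurj : Function.Surjective (π.baseChange L) :=
    LinearMap.lTensor_surjective L (Submodule.mkQ_surjective _)
  have hrank : (B.map (algebraMap A L)).rank =
      Module.finrank L (LinearMap.range (B.mulVecLin.baseChange L)) := by
    let bm := Algebra.TensorProduct.basis L (Pi.basisFun A m)
    let bn := Algebra.TensorProduct.basis L (Pi.basisFun A n)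
    have htoMatrix : LinearMap.toMatrix bn bm (B.mulVecLin.baseChange L) =
        B.map (algebraMap A L) := by
      rw [LinearMap.toMatrix_baseChange]
      exact congrArg (fun C : Matrix m n A ↦ C.map (algebraMap A L)) (LinearMap.toMatrix'_toLin' B)
    rw [Matrix.rank_eq_finrank_range_toLin _ bm bn, ← htoMatrix, Matrix.toLin_toMatrix]
  rw [hrank, ← hexact.linearMap_ker_eq, ← finrank_top, ← LinearMap.range_eq_top.mpr hsurj,
    LinearMap.finrank_range_add_finrank_ker, Module.finrank_baseChange,
    Module.finrank_fintype_fun_eq_card]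

theorem finrank_tensor_of_isLocalizedModule {A S L : Type*} [CommRing A] (T : Submonoid A)
    [CommRing S] [Algebra A S] [IsLocalization T S] [Field L] [Algebra A L] [Algebra S L]
    [IsScalarTower A S L] {M M' : Type*} [AddCommGroup M] [Module A M]
    [AddCommGroup M'] [Module A M'] [Module S M'] [IsScalarTower A S M']
    (φ : M →ₗ[A] M') [IsLocalizedModule T φ] :
    Module.finrank L (L ⊗[S] M') = Module.finrank L (L ⊗[A] M) :=
  LinearEquiv.finrank_eq <|
    (TensorProduct.AlgebraTensorModule.congr (LinearEquiv.refl L L)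
      (IsLocalizedModule.isBaseChange T S φ).equiv.symm).trans
      (TensorProduct.AlgebraTensorModule.cancelBaseChange A S L L M)

theorem projective_iff_finrank_residueField_tensor {S : Type*} [CommRing S] [IsLocalRing S]
    (K : Type*) [Field K] [Algebra S K] [FaithfulSMul S K]
    (M : Type*) [AddCommGroup M] [Module S M] [Module.Finite S M] :
    Module.Projective S M ↔
      Module.finrank (ResidueField S) (ResidueField S ⊗[S] M) = Module.finrank K (K ⊗[S] M) := by
  refine ⟨fun hM ↦ ?_, fun hrank ↦ ?_⟩
  · have : Module.Free S M := Module.free_of_flat_of_isLocalRing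
    rw [Module.finrank_baseChange, Module.finrank_baseChange]
  · obtain ⟨f, hf⟩ := exists_surjective_of_finrank_residueField_tensor S M
    have hinj : Function.Injective f := (injective_iff_map_eq_zero f).mpr fun v hv ↦
      funext fun i ↦ (FaithfulSMul.algebraMap_eq_zero_iff S K).mp
        (algebraMap_eq_zero_of_mem_ker_of_card_eq_finrank (by rwa [Fintype.card_fin]) hf hv i)
    exact .of_equiv (LinearEquiv.ofBijective f ⟨hinj, hf⟩)

theorem projective_localizedModule_coker_iff {A : Type*} [CommRing A] [IsDomain A]
    (P : Ideal A) [P.IsPrime] {m n : Type*} [Fintype m] [Fintype n] (B : Matrix m n A) :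
    Module.Projective (Localization.AtPrime P)
      (LocalizedModule P.primeCompl ((m → A) ⧸ LinearMap.range B.mulVecLin)) ↔
      ¬ B.maxMinorsIdeal ≤ P := by
  have : IsFractionRing (Localization.AtPrime P) (FractionRing A) :=
    IsFractionRing.isFractionRing_of_isDomain_of_isLocalization P.primeCompl _ _
  have : FaithfulSMul (Localization.AtPrime P) (FractionRing A) :=
    (faithfulSMul_iff_algebraMap_injective _ _).mpr (IsFractionRing.injective _ _)
  have hfinrank (L : Type _) [Field L] [Algebra A L] [Algebra (Localization.AtPrime P) L]
      [IsScalarTower A (Localization.AtPrime P) L] := finrank_tensor_of_isLocalizedModule (L := L)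
    (S := Localization.AtPrime P) P.primeCompl (LocalizedModule.mkLinearMap P.primeCompl
      ((m → A) ⧸ LinearMap.range B.mulVecLin))
  have hker := not_maxMinorsIdeal_le_ker_algebraMap_iff (L := P.ResidueField) (FractionRing A) B
  rw [Ideal.ker_algebraMap_residueField] at hker
  rw [projective_iff_finrank_residueField_tensor (FractionRing A), hker, hfinrank, hfinrank]
  have hκ := finrank_tensor_coker_add_rank (L := P.ResidueField) B
  have hK := finrank_tensor_coker_add_rank (L := FractionRing A) B
  change Module.finrank P.ResidueField (P.ResidueField ⊗[A] _) = _ ↔ _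
  omega

end Cokernel

section FreeResolution

theorem hasProjectiveDimensionLE_iff_projective_of_exact {S : Type u} [CommRing S] {n : ℕ}
    {W F : ℕ → Type u} [∀ k, AddCommGroup (W k)] [∀ k, Module S (W k)]
    [∀ k, AddCommGroup (F k)] [∀ k, Module S (F k)] [∀ k, Module.Projective S (F k)]
    (hW : ∀ k < n, ∃ (g : W (k + 1) →ₗ[S] F k) (f : F k →ₗ[S] W k), Function.Injective g ∧
      Function.Exact g f ∧ Function.Surjective f)
    (hn : ∀ k, n ≤ k → Module.Projective S (W k)) (k : ℕ) :
    HasProjectiveDimensionLE (ModuleCat.of S (W 0)) k ↔ Module.Projective S (W k) := by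
  induction k generalizing W F n with
  | zero => exact hasProjectiveDimensionLE_zero_iff
  | succ k ih =>
    cases n with
    | zero =>
      exact iff_of_true (hasProjectiveDimensionLE_mono
        (hasProjectiveDimensionLE_zero_iff.mpr (hn 0 le_rfl)) k.succ.zero_le) (hn _ k.succ.zero_le)
    | succ n =>
      obtain ⟨g, f, hg, hgf, hf⟩ := hW 0 n.succ_pos
      rw [hasProjectiveDimensionLE_succ_iff_of_exact hg hgf hf]
      exact ih (W := fun k ↦ W (k + 1)) (F := fun k ↦ F (k + 1))
        (fun k hk ↦ hW (k + 1) (Nat.succ_lt_succ hk)) fun k hk ↦ hn (k + 1) (Nat.succ_le_succ hk)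

variable {A : Type u} [CommRing A] {n : ℕ} {r : ℕ → ℕ}
  {d : ∀ k, Matrix (Fin (r k)) (Fin (r (k + 1))) A}

theorem projective_localizedModule_coker_of_eq_zero {a b : Type*} [Finite a] [Fintype b]
    {B : Matrix a b A} (hB : B = 0) (T : Submonoid A) :
    Module.Projective (Localization T)
      (LocalizedModule T ((a → A) ⧸ LinearMap.range B.mulVecLin)) := by
  have : Module.Projective A ((a → A) ⧸ LinearMap.range B.mulVecLin) :=
    .of_equiv (Submodule.quotEquivOfEqBot _ (by simp [hB])).symm
  exact Module.projective_of_isLocalizedModule T (LocalizedModule.mkLinearMap T _)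

theorem hasProjectiveDimensionLE_localizedModule_coker_iff_projective (hlen : ∀ k, n ≤ k → d k = 0)
    (hexact : ∀ k < n, LinearMap.ker (d k).mulVecLin = LinearMap.range (d (k + 1)).mulVecLin)
    (T : Submonoid A) (k : ℕ) :
    HasProjectiveDimensionLE (ModuleCat.of (Localization T)
      (LocalizedModule T ((Fin (r 0) → A) ⧸ LinearMap.range (d 0).mulVecLin))) k ↔
      Module.Projective (Localization T)
        (LocalizedModule T ((Fin (r k) → A) ⧸ LinearMap.range (d k).mulVecLin)) := by
  refine hasProjectiveDimensionLE_iff_projective_of_exact (S := Localization T)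
    (W := fun k ↦ LocalizedModule T ((Fin (r k) → A) ⧸ LinearMap.range (d k).mulVecLin))
    (F := fun k ↦ LocalizedModule T (Fin (r k) → A)) (fun k hk ↦ ?_)
    (fun k hk ↦ projective_localizedModule_coker_of_eq_zero (hlen k hk) T) k
  let g := (LinearMap.range (d (k + 1)).mulVecLin).liftQ (d k).mulVecLin (hexact k hk).ge
  let f := (LinearMap.range (d k).mulVecLin).mkQ
  have hg : Function.Injective g :=
    LinearMap.ker_eq_bot.mp (Submodule.ker_liftQ_eq_bot _ _ _ (hexact k hk).le)
  have hgf : Function.Exact g f := by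
    rw [LinearMap.exact_iff, Submodule.ker_mkQ, Submodule.range_liftQ]
  exact ⟨LocalizedModule.map T g, LocalizedModule.map T f, LocalizedModule.map_injective T g hg,
    LocalizedModule.map_exact T g f hgf,
    LocalizedModule.map_surjective T f (Submodule.mkQ_surjective _)⟩

theorem hasProjectiveDimensionLE_localizedModule_coker (hlen : ∀ k, n ≤ k → d k = 0)
    (hexact : ∀ k < n, LinearMap.ker (d k).mulVecLin = LinearMap.range (d (k + 1)).mulVecLin)
    (T : Submonoid A) :
    HasProjectiveDimensionLE (ModuleCat.of (Localization T)
      (LocalizedModule T ((Fin (r 0) → A) ⧸ LinearMap.range (d 0).mulVecLin))) n :=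
  (hasProjectiveDimensionLE_localizedModule_coker_iff_projective hlen hexact T n).mpr
    (projective_localizedModule_coker_of_eq_zero (hlen n le_rfl) T)

theorem hasProjectiveDimensionLE_localizedModule_coker_iff_not_maxMinorsIdeal_le [IsDomain A]
    (hlen : ∀ k, n ≤ k → d k = 0)
    (hexact : ∀ k < n, LinearMap.ker (d k).mulVecLin = LinearMap.range (d (k + 1)).mulVecLin)
    (P : Ideal A) [P.IsPrime] (k : ℕ) :
    HasProjectiveDimensionLE (ModuleCat.of (Localization.AtPrime P)
      (LocalizedModule P.primeCompl ((Fin (r 0) → A) ⧸ LinearMap.range (d 0).mulVecLin))) k ↔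
      ¬ (d k).maxMinorsIdeal ≤ P :=
  (hasProjectiveDimensionLE_localizedModule_coker_iff_projective hlen hexact P.primeCompl k).trans
    (projective_localizedModule_coker_iff P (d k))

end FreeResolution

section AssociatedPrimes

variable {A : Type u} [CommRing A] [IsNoetherianRing A] {M : Type u} [AddCommGroup M] [Module A M]
  {n c k : ℕ}

theorem idealDepth_maximalIdeal_le_of_lt_idealDepth {P : Ideal A} [P.IsPrime]
    (hP : P ∈ associatedPrimes A M) {J : ℕ → Ideal A}
    (hn : HasProjectiveDimensionLE
      (ModuleCat.of (Localization.AtPrime P) (LocalizedModule P.primeCompl M)) n)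
    (hpd : ∀ k, ¬ J k ≤ P → HasProjectiveDimensionLE
      (ModuleCat.of (Localization.AtPrime P) (LocalizedModule P.primeCompl M)) k)
    (hJ : ∀ k : ℕ, c < k + 1 → (k : ℕ∞) + 1 < idealDepth (J k)) :
    idealDepth (maximalIdeal (Localization.AtPrime P)) ≤ c := by
  have : IsNoetherianRing (Localization.AtPrime P) :=
    IsLocalization.isNoetherianRing P.primeCompl _ inferInstance
  have hle {p : ℕ} := idealDepth_le_of_mem_associatedPrimes (p := p)
    (maximalIdeal_mem_associatedPrimes_localizedModule_iff.mpr hP)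
  obtain ⟨t, ht⟩ := ENat.ne_top_iff_exists.mp (ne_top_of_le_ne_top (ENat.natCast_ne_top n) (hle hn))
  rw [← ht] at hle ⊢
  by_contra! hct
  rw [Nat.cast_lt] at hct
  obtain ⟨k, rfl⟩ := Nat.exists_eq_add_one_of_ne_zero hct.ne_bot
  by_cases hJP : J k ≤ P
  · refine (hJ k hct).not_ge ?_
    exact_mod_cast ht ▸ idealDepth_le_idealDepth_localization hJP
  · have := hle (hpd k hJP)
    rw [Nat.cast_le] at this
    omega

theorem lt_idealDepth_of_idealDepth_maximalIdeal_le [Module.Finite A M] {J : Ideal A}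
    (hn : ∀ (P : Ideal A) [P.IsPrime], HasProjectiveDimensionLE
      (ModuleCat.of (Localization.AtPrime P) (LocalizedModule P.primeCompl M)) n)
    (hJ : ∀ (P : Ideal A) [P.IsPrime], J ≤ P → ¬ HasProjectiveDimensionLE
      (ModuleCat.of (Localization.AtPrime P) (LocalizedModule P.primeCompl M)) k)
    (hdepth : ∀ (P : Ideal A) [P.IsPrime], P ∈ associatedPrimes A M →
      idealDepth (maximalIdeal (Localization.AtPrime P)) ≤ k) :
    (k : ℕ∞) + 1 < idealDepth J := by
  by_contra! hle
  obtain ⟨P, hP, hJP, hdepthP⟩ :=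
    exists_isPrime_idealDepth_localization_le (c := k + 1) (by exact_mod_cast hle)
  have : IsNoetherianRing (Localization.AtPrime P) :=
    IsLocalization.isNoetherianRing P.primeCompl _ inferInstance
  refine hJ P hJP ?_
  by_cases hass : P ∈ associatedPrimes A M
  · exact hasProjectiveDimensionLE_of_idealDepth_maximalIdeal_le (hdepth P hass) (hn P)
  · exact hasProjectiveDimensionLE_of_maximalIdeal_notMem_associatedPrimes
      (by exact_mod_cast hdepthP)
      (mt maximalIdeal_mem_associatedPrimes_localizedModule_iff.mp hass) (hn P)

theorem idealDepth_annihilator_le_of_mem_associatedPrimes {A M : Type*} [CommRing A]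
    [AddCommGroup M] [Module A M] {P : Ideal A} [P.IsPrime] (hP : P ∈ associatedPrimes A M) :
    idealDepth (Module.annihilator A M) ≤ idealDepth (maximalIdeal (Localization.AtPrime P)) :=
  idealDepth_le_idealDepth_localization (Submodule.annihilator_top.ge.trans hP.annihilator_le)

theorem primeLocalDepth_eq_idealDepth_maximalIdeal {A : Type*} [CommRing A] {P : Ideal A}
    [hP : P.IsPrime] :
    primeLocalDepth P hP = idealDepth (maximalIdeal (Localization.AtPrime P)) :=
  rfl

end AssociatedPrimes

theorem depth_at_associated_primes_iff_depth_of_minors_general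
    {A : Type u} [CommRing A] [IsDomain A] [IsNoetherianRing A]
    {M : Type*} [AddCommGroup M] [Module A M] {c n : ℕ} {r : ℕ → ℕ}
    (d : ∀ k, Matrix (Fin (r k)) (Fin (r (k + 1))) A) (ε : (Fin (r 0) → A) →ₗ[A] M)
    (hsur : Function.Surjective ε)
    (hker : LinearMap.ker ε = LinearMap.range (d 0).mulVecLin)
    (hlen : ∀ k, n ≤ k → d k = 0)
    (hexact : ∀ k < n, LinearMap.ker (d k).mulVecLin = LinearMap.range (d (k + 1)).mulVecLin)
    (hdepth : (c : ℕ∞) ≤ idealDepth (Module.annihilator A M)) :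
    (∀ (P : Ideal A) (hP : IsAssociatedPrime P M), primeLocalDepth P hP.1 = (c : ℕ∞)) ↔
      ∀ k : ℕ, c < k + 1 → (k : ℕ∞) + 1 < idealDepth (d k).maxMinorsIdeal := by
  let e := (Submodule.quotEquivOfEq _ _ hker.symm).trans (ε.quotKerEquivOfSurjective hsur)
  have hAss := LinearEquiv.AssociatedPrimes.eq e
  have hpd (P : Ideal A) [P.IsPrime] (k : ℕ) :=
    hasProjectiveDimensionLE_localizedModule_coker_iff_not_maxMinorsIdeal_le hlen hexact P k
  have hn (P : Ideal A) [P.IsPrime] :=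
    hasProjectiveDimensionLE_localizedModule_coker hlen hexact P.primeCompl
  refine ⟨fun h k hk ↦ ?_, fun h P hP ↦ ?_⟩
  · refine lt_idealDepth_of_idealDepth_maximalIdeal_le hn
      (fun P _ hle hP ↦ (hpd P k).mp hP hle) fun P _ hP ↦ ?_
    calc idealDepth (maximalIdeal (Localization.AtPrime P)) = c := h P (hAss.le hP)
      _ ≤ k := by exact_mod_cast Nat.lt_succ_iff.mp hk
  · have := hP.1
    rw [primeLocalDepth_eq_idealDepth_maximalIdeal]
    exact le_antisymm
      (idealDepth_maximalIdeal_le_of_lt_idealDepth (hAss.ge hP) (hn P)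
        (fun k ↦ (hpd P k).mpr) h)
      (hdepth.trans (idealDepth_annihilator_le_of_mem_associatedPrimes hP))

theorem depth_at_associated_primes_iff_depth_of_minors
    {N : ℕ} (I : Ideal (MvPolynomial (Fin N) ℂ)) (c : ℕ) (n : ℕ) (r : ℕ → ℕ)
    (d : ∀ k : ℕ, Matrix (Fin (r k)) (Fin (r (k + 1))) (MvPolynomial (Fin N) ℂ))
    -- `F₀ ← F₁ ← ⋯ ← Fₙ ← 0` is a free resolution of `R = A/I`:
    (ε : (Fin (r 0) → MvPolynomial (Fin N) ℂ) →ₗ[MvPolynomial (Fin N) ℂ]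
      (MvPolynomial (Fin N) ℂ ⧸ I))
    (hsur : Function.Surjective ε)
    (hker : LinearMap.ker ε = LinearMap.range (d 0).mulVecLin)
    (hlen : ∀ k, n ≤ k → d k = 0)
    (hexact : ∀ k < n, LinearMap.ker (d k).mulVecLin = LinearMap.range (d (k + 1)).mulVecLin)
    (hdepth : idealDepth I = (c : ℕ∞)) :
    (∀ (P : Ideal (MvPolynomial (Fin N) ℂ))
        (hP : IsAssociatedPrime P (MvPolynomial (Fin N) ℂ ⧸ I)),
        primeLocalDepth P hP.1 = (c : ℕ∞)) ↔
      (∀ k : ℕ, c < k + 1 → ((k : ℕ∞) + 1) < idealDepth ((d k).maxMinorsIdeal)) :=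
  depth_at_associated_primes_iff_depth_of_minors_general d ε hsur hker hlen hexact
    (by rw [Ideal.annihilator_quotient, hdepth])
end
end

section
/- The action of the general linear group GL_6(ℂ) on the third exterior power ⋀³ℂ⁶ (induced by the standard action on ℂ⁶) has exactly 5 orbits; representatives are 0, e_1∧e_2∧e_3, e_1∧e_2∧e_3 + e_1∧e_4∧e_5, e_1∧e_2∧e_3 + e_1∧e_4∧e_5 + e_2∧e_4∧e_6, and e_1∧e_2∧e_3 + e_4∧e_5∧e_6. -/
noncomputable section

open ExteriorAlgebra

/-- The standard basis vectors of `ℂ⁶`. -/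
def stdBasis6 (i : Fin 6) : Fin 6 → ℂ := Pi.single i 1

/-- The wedge `e_a ∧ e_b ∧ e_c` as an element of the exterior algebra of `ℂ⁶`
(it lies in the third exterior power `⋀[ℂ]^3 ℂ⁶`). -/
def wedge3 (a b c : Fin 6) : ExteriorAlgebra ℂ (Fin 6 → ℂ) :=
  ExteriorAlgebra.ιMulti ℂ 3 ![stdBasis6 a, stdBasis6 b, stdBasis6 c]

/-- The representatives of the five `GL₆(ℂ)`-orbits on `⋀³ℂ⁶`. -/
def orbitRep : Fin 5 → ExteriorAlgebra ℂ (Fin 6 → ℂ) :=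
  ![0,
    wedge3 0 1 2,
    wedge3 0 1 2 + wedge3 0 3 4,
    wedge3 0 1 2 + wedge3 0 3 4 + wedge3 1 3 5,
    wedge3 0 1 2 + wedge3 3 4 5]

/-!
A trivector on a six-dimensional space is the same as an alternating trilinear form `F` on the dual
space, so it suffices to classify such forms. The contraction `F e` of `F` with a vector `e` is an
alternating bilinear form with `e` in its kernel, hence of rank `0`, `2` or `4`.

If all contractions have rank at most two, then `F` is zero or a product of three linear forms.
Otherwise fix `e` with `F e` of rank four. The kernel of `F e` is a plane spanned by `e` and some
`f`, and it lies in the kernel of `F f`. Over an algebraically closed field `F f` has an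
eigenvalue `t` relative to `F e`, so replacing `f` by `f - t • e` makes the rank of `F f` at most
two. If `F f = 0`, then `F` is of the third type. Otherwise choose `p` and `q` with `F f p q = 1`:
if `F e` vanishes on the vectors orthogonal to `p` and `q` for `F f`, then `F` is of the fourth
type, else of the fifth. In other words, the pencil spanned by `F e` and `F f` has one, respectively
two, members of rank two.

The dimension of the radical separates all types except the last two. These differ because the
vectors `x` for which `F x` has rank at most two span the space only in the fifth type.
-/

namespace Trivector

open Module

section AlternatingForms

variable {K : Type*} [Field K] {n : ℕ} {ι X Y Z V W : Type*}
  [AddCommGroup X] [Module K X] [AddCommGroup Y] [Module K Y] [AddCommGroup Z] [Module K Z]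
  [AddCommGroup V] [Module K V] [AddCommGroup W] [Module K W]

lemma ext_alternating_of_strictMono [LinearOrder ι] (b : Basis ι K X) {F G : X [⋀^Fin n]→ₗ[K] Y}
    (h : ∀ s : Fin n → ι, StrictMono s → F (b ∘ s) = G (b ∘ s)) : F = G := by
  refine b.ext_alternating fun v hv ↦ ?_
  have hsort : StrictMono (v ∘ Tuple.sort v) :=
    (Tuple.monotone_sort v).strictMono_of_injective (hv.comp (Tuple.sort v).injective)
  have key := h _ hsort
  rw [← Function.comp_assoc, F.map_perm, G.map_perm] at key
  exact MulAction.injective _ key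

/-- Two alternating forms are equivalent if a linear isomorphism pulls one back to the other. -/
def FormEquiv (F : X [⋀^Fin n]→ₗ[K] K) (G : Y [⋀^Fin n]→ₗ[K] K) : Prop :=
  ∃ φ : X ≃ₗ[K] Y, G.compLinearMap φ = F

namespace FormEquiv

variable {F : X [⋀^Fin n]→ₗ[K] K} {G : Y [⋀^Fin n]→ₗ[K] K} {H : Z [⋀^Fin n]→ₗ[K] K}

lemma symm (h : FormEquiv F G) : FormEquiv G F := by
  obtain ⟨φ, rfl⟩ := h
  exact ⟨φ.symm, by ext v; simp⟩

lemma trans (h₁ : FormEquiv F G) (h₂ : FormEquiv G H) : FormEquiv F H := by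
  obtain ⟨φ, rfl⟩ := h₁
  obtain ⟨ψ, rfl⟩ := h₂
  exact ⟨φ.trans ψ, rfl⟩

end FormEquiv

/-- The alternating form on the dual space that an `n`-vector defines by evaluation. It turns
`n`-vectors into objects that can be restricted to subspaces and contracted with vectors. -/
def dualForm (v : ⋀[K]^n V) : Dual K V [⋀^Fin n]→ₗ[K] K :=
  (Dual.eval K _ v).compAlternatingMap (exteriorPower.alternatingMapToDual K V n)

lemma dualForm_apply (v : ⋀[K]^n V) (f : Fin n → Dual K V) :
    dualForm v f = exteriorPower.alternatingMapToDual K V n f v := rfl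

lemma dualForm_map (g : V →ₗ[K] W) (v : ⋀[K]^n V) :
    dualForm (exteriorPower.map n g v) = (dualForm v).compLinearMap g.dualMap := by
  ext f
  suffices exteriorPower.alternatingMapToDual K W n f ∘ₗ exteriorPower.map n g =
      exteriorPower.alternatingMapToDual K V n (g.dualMap ∘ f) from LinearMap.congr_fun this v
  ext m
  simp [exteriorPower.map_apply_ιMulti, exteriorPower.alternatingMapToDual_apply_ιMulti]

lemma dualForm_injective : Function.Injective (dualForm : ⋀[K]^n V → _) := by
  classical
  obtain ⟨ι, b⟩ := Free.exists_basis K V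
  let : LinearOrder ι := linearOrderOfSTO WellOrderingRel
  intro v w h
  refine (b.exteriorPower n).ext_elem fun s ↦ ?_
  rw [exteriorPower.basis_repr_apply, exteriorPower.basis_repr_apply, exteriorPower.ιMultiDual,
    exteriorPower.pairingDual, exteriorPower.ιMulti_family,
    exteriorPower.alternatingMapLinearEquiv_apply_ιMulti, ← dualForm_apply, ← dualForm_apply, h]

lemma formEquiv_dualForm_iff [FiniteDimensional K V] [FiniteDimensional K W]
    {v : ⋀[K]^n V} {w : ⋀[K]^n W} :
    FormEquiv (dualForm w) (dualForm v) ↔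
      ∃ g : V ≃ₗ[K] W, exteriorPower.map n g.toLinearMap v = w := by
  constructor
  · rintro ⟨φ, hφ⟩
    let g : V ≃ₗ[K] W := evalEquiv K V ≪≫ₗ φ.dualMap ≪≫ₗ (evalEquiv K W).symm
    have hg : g.toLinearMap.dualMap = φ := by
      ext f x
      simp [g]
    exact ⟨g, dualForm_injective (by rw [dualForm_map, hg, hφ])⟩
  · rintro ⟨g, rfl⟩
    exact ⟨g.dualMap, by rw [dualForm_map]; rfl⟩

end AlternatingForms

section NormalForms

variable {K : Type*} [Field K] {A B V X : Type*} [AddCommMonoid A] [AddCommMonoid B]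
  [AddCommGroup V] [Module K V] [AddCommGroup X] [Module K X]

/-- The five normal forms, as sums of terms `w ![i, j, k]` standing for `eᵢ ∧ eⱼ ∧ eₖ`. The terms
are abstract because the same sums are taken of wedge products and of `3 × 3` minors. -/
def orbitSum (w : (Fin 3 → Fin 6) → A) : Fin 5 → A :=
  ![0, w ![0, 1, 2], w ![0, 1, 2] + w ![0, 3, 4], w ![0, 1, 2] + w ![0, 3, 4] + w ![1, 3, 5],
    w ![0, 1, 2] + w ![3, 4, 5]]

lemma map_orbitSum {T : Type*} [FunLike T A B] [AddMonoidHomClass T A B] (φ : T)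
    (w : (Fin 3 → Fin 6) → A) (r : Fin 5) : φ (orbitSum w r) = orbitSum (φ ∘ w) r := by
  fin_cases r <;> simp [orbitSum]

lemma orbitSum_congr {v w : (Fin 3 → Fin 6) → A} (h : ∀ s, StrictMono s → v s = w s) :
    orbitSum v = orbitSum w := by
  unfold orbitSum
  rw [h ![0, 1, 2] (by decide), h ![0, 3, 4] (by decide), h ![1, 3, 5] (by decide),
    h ![3, 4, 5] (by decide)]

/-- The minor of three vectors of `K⁶` on the coordinates `s`. -/
def minorForm (K : Type*) [Field K] (s : Fin 3 → Fin 6) : (Fin 6 → K) [⋀^Fin 3]→ₗ[K] K :=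
  Matrix.detRowAlternating.compLinearMap (LinearMap.funLeft K K s)

/-- The alternating trilinear form on `K⁶` of each of the five types. -/
def stdForm (K : Type*) [Field K] : Fin 5 → (Fin 6 → K) [⋀^Fin 3]→ₗ[K] K :=
  orbitSum (minorForm K)

lemma stdForm_apply (r : Fin 5) (x : Fin 3 → Fin 6 → K) :
    stdForm K r x = orbitSum (fun s ↦ (Matrix.of fun i j ↦ x i (s j)).det) r := by
  fin_cases r <;> rfl

lemma formEquiv_dualForm_orbitSum (b : Basis (Fin 6) K V) (r : Fin 5) :
    FormEquiv (dualForm (orbitSum (fun s ↦ exteriorPower.ιMulti K 3 (b ∘ s)) r)) (stdForm K r) := by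
  refine ⟨(b.constr K).symm, AlternatingMap.ext fun f ↦ ?_⟩
  rw [AlternatingMap.compLinearMap_apply, stdForm_apply, dualForm_apply, map_orbitSum]
  congr! 2 with s
  rw [Function.comp_apply, exteriorPower.alternatingMapToDual_apply_ιMulti, ← Matrix.det_transpose]
  rfl

lemma coe_map (g : V →ₗ[K] X) {n : ℕ} (v : ⋀[K]^n V) :
    (exteriorPower.map n g v : ExteriorAlgebra K X) = ExteriorAlgebra.map g v := by
  suffices (⋀[K]^n X).subtype ∘ₗ exteriorPower.map n g =
      (ExteriorAlgebra.map g).toLinearMap ∘ₗ (⋀[K]^n V).subtype from LinearMap.congr_fun this v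
  ext m
  simp [exteriorPower.map_apply_ιMulti, ExteriorAlgebra.map_apply_ιMulti]

lemma coe_orbitSum (b : Fin 6 → V) (r : Fin 5) :
    ((orbitSum (fun s ↦ exteriorPower.ιMulti K 3 (b ∘ s)) r : ⋀[K]^3 V) : ExteriorAlgebra K V) =
      orbitSum (fun s ↦ ExteriorAlgebra.ιMulti K 3 (b ∘ s)) r :=
  map_orbitSum (⋀[K]^3 V).subtype _ r

end NormalForms

section Trilinear

variable {K X Y : Type*} [Field K] [AddCommGroup X] [Module K X] [AddCommGroup Y] [Module K Y]

/-- An alternating form in three variables in curried form; `trilin F e` is the contraction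
of `F` with `e`. -/
def trilin (F : X [⋀^Fin 3]→ₗ[K] K) : X →ₗ[K] X →ₗ[K] X →ₗ[K] K :=
  LinearMap.mk₂ K
    (fun x y ↦ (AlternatingMap.ofSubsingleton K X K 0).symm ((F.curryLeft x).curryLeft y))
    (by intros; ext; simp) (by intros; ext; simp) (by intros; ext; simp) (by intros; ext; simp)

lemma trilin_apply (F : X [⋀^Fin 3]→ₗ[K] K) (x y z : X) : trilin F x y z = F ![x, y, z] :=
  congrArg F (by ext i; fin_cases i <;> rfl)

lemma trilin_apply_fin (F : X [⋀^Fin 3]→ₗ[K] K) (v : Fin 3 → X) :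
    trilin F (v 0) (v 1) (v 2) = F v := by
  rw [trilin_apply]
  exact congrArg F (FinVec.etaExpand_eq v)

lemma trilin_compLinearMap (F : Y [⋀^Fin 3]→ₗ[K] K) (φ : X →ₗ[K] Y) (x y z : X) :
    trilin (F.compLinearMap φ) x y z = trilin F (φ x) (φ y) (φ z) := by
  rw [trilin_apply]
  exact (trilin_apply_fin F (φ ∘ ![x, y, z])).symm

variable (F : X [⋀^Fin 3]→ₗ[K] K)

@[simp]
lemma trilin_self (x : X) : trilin F x x = 0 := by
  ext z
  rw [trilin_apply]
  exact F.map_eq_zero_of_eq _ (i := 0) (j := 1) rfl (by decide)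

lemma isAlt_trilin_apply (x : X) : (trilin F x).IsAlt := fun y ↦ by
  rw [trilin_apply]
  exact F.map_eq_zero_of_eq _ (i := 1) (j := 2) rfl (by decide)

lemma trilin_swap (x y : X) : trilin F y x = -trilin F x y := by
  have h := trilin_self F (x + y)
  simp only [map_add, LinearMap.add_apply, trilin_self, zero_add, add_zero] at h
  exact eq_neg_of_add_eq_zero_left h

lemma trilin_rotate (x y z : X) : trilin F y z x = trilin F x y z := by
  rw [← (isAlt_trilin_apply F y).neg, trilin_swap F x y, LinearMap.neg_apply, neg_neg]

end Trilinear

section Bilinear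

variable {K X : Type*} [Field K] [AddCommGroup X] [Module K X] {B : X →ₗ[K] X →ₗ[K] K}

/-- The Plücker relations: an alternating bilinear form satisfies them if and only if it has rank
at most two, that is, it is the wedge product of two linear forms. -/
def IsDecomposable (B : X →ₗ[K] X →ₗ[K] K) : Prop :=
  ∀ a b c d, B a b * B c d - B a c * B b d + B a d * B b c = 0

/-- The vectors `a, b` and `c, d` form two orthogonal hyperbolic pairs for `B`. -/
structure IsSymplectic (B : X →ₗ[K] X →ₗ[K] K) (a b c d : X) : Prop where
  ab : B a b = 1
  cd : B c d = 1
  ac : B a c = 0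
  ad : B a d = 0
  bc : B b c = 0
  bd : B b d = 0

/-- The vectors orthogonal to `p` and `q`. If `B p q = 1`, it is a complement of the plane spanned
by `p` and `q`. -/
def orthogonalPair (B : X →ₗ[K] X →ₗ[K] K) (p q : X) : Submodule K X :=
  LinearMap.ker (B p) ⊓ LinearMap.ker (B q)

lemma mem_orthogonalPair {p q x : X} : x ∈ orthogonalPair B p q ↔ B p x = 0 ∧ B q x = 0 :=
  Iff.rfl

lemma mem_orthogonalPair_iff_apply (hB : B.IsAlt) {p q x : X} :
    x ∈ orthogonalPair B p q ↔ B x p = 0 ∧ B x q = 0 := by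
  rw [← hB.neg p x, ← hB.neg q x, neg_eq_zero, neg_eq_zero, mem_orthogonalPair]

lemma IsDecomposable.apply_eq_zero (h : IsDecomposable B) {p q r s : X} (hpq : B p q = 1)
    (hr : r ∈ orthogonalPair B p q) (hs : s ∈ orthogonalPair B p q) : B r s = 0 := by
  rw [mem_orthogonalPair] at hr hs
  simpa [hpq, hr, hs] using h p q r s

lemma add_smul_sub_smul_mem_orthogonalPair (hB : B.IsAlt) {p q : X} (hpq : B p q = 1) (y : X) :
    y + B q y • p - B p y • q ∈ orthogonalPair B p q := by
  simp [mem_orthogonalPair, ← hB.neg p q, hpq, hB.self_eq_zero]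

lemma isDecomposable_of_forall_orthogonalPair (hB : B.IsAlt) {p q : X} (hpq : B p q = 1)
    (h : ∀ r ∈ orthogonalPair B p q, ∀ s ∈ orthogonalPair B p q, B r s = 0) :
    IsDecomposable B := by
  have expand (y z : X) : B y z = B p y * B q z - B p z * B q y := by
    have := h _ (add_smul_sub_smul_mem_orthogonalPair hB hpq y)
      _ (add_smul_sub_smul_mem_orthogonalPair hB hpq z)
    simp only [map_add, map_sub, map_smul, LinearMap.add_apply, LinearMap.sub_apply,
      LinearMap.smul_apply, smul_eq_mul, hpq, hB.self_eq_zero, ← hB.neg p q, ← hB.neg p y,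
      ← hB.neg q y] at this
    linear_combination this
  intro a b c d
  simp only [expand a, expand b, expand c]
  ring

lemma apply_inv_smul_self {φ : Dual K X} {x : X} (h : φ x ≠ 0) : φ ((φ x)⁻¹ • x) = 1 := by
  rw [map_smul, smul_eq_mul, inv_mul_cancel₀ h]

lemma exists_isSymplectic (hB : B.IsAlt) (h : ¬ IsDecomposable B) :
    ∃ a b c d, IsSymplectic B a b c d := by
  obtain ⟨p, q, hpq⟩ : ∃ p q, B p q ≠ 0 := by
    contrapose! h
    simp [IsDecomposable, h]
  have hpq' := apply_inv_smul_self hpq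
  generalize (B p q)⁻¹ • q = q' at hpq'
  obtain ⟨r, hr, s, hs, hrs⟩ : ∃ r ∈ orthogonalPair B p q', ∃ s ∈ orthogonalPair B p q',
      B r s ≠ 0 := by
    contrapose! h
    exact isDecomposable_of_forall_orthogonalPair hB hpq' h
  rw [mem_orthogonalPair] at hr hs
  exact ⟨p, q', r, _, hpq', apply_inv_smul_self hrs, hr.1, by simp [hs], hr.2, by simp [hs]⟩

/- Writing `p*, q*` for the coordinates dual to `p, q`, the form is
`ω p q • p* ∧ q* + p* ∧ ω p + q* ∧ ω q`, so its Pfaffians are combinations of the `2 × 2` minors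
of `ω p` and `ω q` on the complement of the plane. -/
lemma isDecomposable_of_proportional {ω : X →ₗ[K] X →ₗ[K] K} (hB : B.IsAlt) (hω : ω.IsAlt)
    {p q : X} (hpq : B p q = 1)
    (h : ∀ r ∈ orthogonalPair B p q, ∀ s ∈ orthogonalPair B p q, ω r s = 0)
    (hprop : ∀ r ∈ orthogonalPair B p q, ∀ s ∈ orthogonalPair B p q,
      ω p r * ω q s = ω p s * ω q r) : IsDecomposable ω := by
  let n (y : X) : X := y + B q y • p - B p y • q
  have hn (y : X) : n y ∈ orthogonalPair B p q := add_smul_sub_smul_mem_orthogonalPair hB hpq y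
  have expand (y z : X) : ω y z = ω p q * (B p y * B q z - B p z * B q y)
      + (B q z * ω p (n y) - B q y * ω p (n z)) + (B p y * ω q (n z) - B p z * ω q (n y)) := by
    have := h (n y) (hn y) (n z) (hn z)
    simp only [n, map_add, map_sub, map_smul, LinearMap.add_apply, LinearMap.sub_apply,
      LinearMap.smul_apply, smul_eq_mul, hω.self_eq_zero, ← hω.neg p q, ← hω.neg p y,
      ← hω.neg q y] at this ⊢
    linear_combination this
  intro a b c d
  have minor (y z : X) : ω p (n y) * ω q (n z) = ω p (n z) * ω q (n y) :=
    hprop (n y) (hn y) (n z) (hn z)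
  simp only [expand a, expand b, expand c]
  linear_combination (B q a * B p b - B q b * B p a) * minor c d
    - (B q a * B p c - B q c * B p a) * minor b d + (B q a * B p d - B q d * B p a) * minor b c
    + (B q b * B p c - B q c * B p b) * minor a d - (B q b * B p d - B q d * B p b) * minor a c
    + (B q c * B p d - B q d * B p c) * minor a b

lemma exists_dual_pair {ω : X →ₗ[K] X →ₗ[K] K} (hB : B.IsAlt) (hω : ω.IsAlt) {p q : X}
    (hpq : B p q = 1)
    (h : ∀ r ∈ orthogonalPair B p q, ∀ s ∈ orthogonalPair B p q, ω r s = 0)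
    (hdec : ¬ IsDecomposable ω) :
    ∃ r ∈ orthogonalPair B p q, ∃ s ∈ orthogonalPair B p q,
      ω p r = 1 ∧ ω q r = 0 ∧ ω p s = 0 ∧ ω q s = 1 := by
  obtain ⟨m, hm, n, hn, hmn⟩ : ∃ m ∈ orthogonalPair B p q, ∃ n ∈ orthogonalPair B p q,
      ω p m * ω q n - ω p n * ω q m ≠ 0 := by
    contrapose! hdec
    exact isDecomposable_of_proportional hB hω hpq h fun r hr s hs ↦ sub_eq_zero.1 (hdec r hr s hs)
  set Δ := ω p m * ω q n - ω p n * ω q m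
  refine ⟨Δ⁻¹ • (ω q n • m - ω q m • n), ?_, Δ⁻¹ • (ω p m • n - ω p n • m), ?_, ?_⟩
  · exact Submodule.smul_mem _ _ (sub_mem (Submodule.smul_mem _ _ hm) (Submodule.smul_mem _ _ hn))
  · exact Submodule.smul_mem _ _ (sub_mem (Submodule.smul_mem _ _ hn) (Submodule.smul_mem _ _ hm))
  · simp only [map_smul, map_sub, smul_eq_mul]
    refine ⟨?_, ?_, ?_, ?_⟩
    · rw [mul_comm (ω q n), mul_comm (ω q m), inv_mul_cancel₀ hmn]
    · ring
    · ring
    · exact inv_mul_cancel₀ hmn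

variable {a b c d : X}

lemma IsSymplectic.swapped_values (hB : B.IsAlt) (h : IsSymplectic B a b c d) :
    B b a = -1 ∧ B d c = -1 ∧ B c a = 0 ∧ B d a = 0 ∧ B c b = 0 ∧ B d b = 0 := by
  simp [← hB.neg a b, ← hB.neg c d, ← hB.neg a c, ← hB.neg a d, ← hB.neg b c, ← hB.neg b d,
    h.ab, h.cd, h.ac, h.ad, h.bc, h.bd]

lemma ker_le_ker_pi (hB : B.IsAlt) {ι : Type*} (x : ι → X) :
    LinearMap.ker B ≤ LinearMap.ker (LinearMap.pi fun i ↦ B (x i)) := by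
  intro y hy
  ext i
  simp [← hB.neg y, LinearMap.mem_ker.1 hy]

lemma IsSymplectic.finrank_ker_pi [FiniteDimensional K X] (hB : B.IsAlt)
    (h : IsSymplectic B a b c d) :
    finrank K (LinearMap.ker (LinearMap.pi fun i ↦ B (![a, b, c, d] i))) + 4 = finrank K X := by
  obtain ⟨hba, hdc, hca, hda, hcb, hdb⟩ := h.swapped_values hB
  have hsurj : Function.Surjective (LinearMap.pi fun i ↦ B (![a, b, c, d] i)) := by
    intro x
    refine ⟨x 0 • b - x 1 • a + x 2 • d - x 3 • c, ?_⟩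
    ext i
    fin_cases i <;>
      simp [h.ab, h.cd, h.ac, h.ad, h.bc, h.bd, hB.self_eq_zero, hba, hdc, hca, hda, hcb, hdb]
  rw [← LinearMap.finrank_range_add_finrank_ker (LinearMap.pi fun i ↦ B (![a, b, c, d] i)),
    LinearMap.range_eq_top.2 hsurj, finrank_top, finrank_fin_fun, add_comm]

lemma isDecomposable_of_finrank_le [FiniteDimensional K X] (hB : B.IsAlt)
    (h : finrank K X ≤ finrank K (LinearMap.ker B) + 3) : IsDecomposable B := by
  by_contra hdec
  obtain ⟨a, b, c, d, hs⟩ := exists_isSymplectic hB hdec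
  have := Submodule.finrank_mono (ker_le_ker_pi hB ![a, b, c, d])
  have := hs.finrank_ker_pi hB
  lia

lemma span_pair_eq_of_linearIndependent [FiniteDimensional K X] {N : Submodule K X} {e f : X}
    (hef : LinearIndependent K ![e, f]) (he : e ∈ N) (hf : f ∈ N) (hN : finrank K N = 2) :
    Submodule.span K {e, f} = N := by
  refine Submodule.eq_of_le_of_finrank_eq (Submodule.span_le.2 ?_) ?_
  · rintro x (rfl | rfl) <;> assumption
  · have := finrank_span_eq_card hef
    rw [Matrix.range_cons_cons_empty, Fintype.card_fin] at this
    exact this.trans hN.symm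

lemma exists_linearIndependent_pair_mem {N : Submodule K X} {e : X}
    (he : e ≠ 0) (heN : e ∈ N) (hN : 1 < finrank K N) :
    ∃ f ∈ N, LinearIndependent K ![e, f] := by
  obtain ⟨f, hef⟩ := exists_linearIndependent_pair_of_one_lt_finrank hN
    (show (⟨e, heN⟩ : N) ≠ 0 by simpa using he)
  refine ⟨f, f.2, ?_⟩
  rw [LinearIndependent.pair_iff] at hef ⊢
  exact fun s t h ↦ hef s t (Subtype.ext h)

-- Alternating forms have even rank, so a kernel of positive dimension has dimension two here.
lemma IsSymplectic.exists_ker_eq_span_pair (hB : B.IsAlt) (hX : finrank K X = 6)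
    (h : IsSymplectic B a b c d) {e : X} (he : e ≠ 0) (hBe : B e = 0) :
    ∃ f, LinearIndependent K ![e, f] ∧ LinearMap.ker B = Submodule.span K {e, f} := by
  have : FiniteDimensional K X := .of_finrank_pos (by lia)
  let N := LinearMap.ker (LinearMap.pi fun i ↦ B (![a, b, c, d] i))
  have mem_N {x : X} : x ∈ N ↔ B a x = 0 ∧ B b x = 0 ∧ B c x = 0 ∧ B d x = 0 := by
    simp [N, funext_iff, Fin.forall_fin_succ]
  have hN : finrank K N = 2 := by
    have : finrank K N + 4 = _ := h.finrank_ker_pi hB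
    lia
  have hBN : LinearMap.ker B ≤ N := ker_le_ker_pi hB _
  obtain ⟨f, hfN, hef⟩ := exists_linearIndependent_pair_mem he (hBN hBe) (by lia)
  have hspan := span_pair_eq_of_linearIndependent hef (hBN hBe) hfN hN
  have hBf : B f = 0 := by
    ext y
    obtain ⟨s, t, hst⟩ : ∃ s t : K, s • e + t • f =
        y - (B y b • a + B a y • b + B y d • c + B c y • d) := by
      obtain ⟨hba, hdc, hca, hda, hcb, hdb⟩ := h.swapped_values hB
      rw [← Submodule.mem_span_pair, hspan, mem_N]
      simp [h.ab, h.cd, h.ac, h.ad, h.bc, h.bd, hB.self_eq_zero, hba, hdc, hca, hda, hcb, hdb,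
        ← hB.neg b y, ← hB.neg d y]
    have hfe : B f e = 0 := by simp [← hB.neg e, hBe]
    have hf : B f a = 0 ∧ B f b = 0 ∧ B f c = 0 ∧ B f d = 0 := by
      simpa [← hB.neg f] using mem_N.1 hfN
    have := congrArg (B f) (eq_sub_iff_add_eq.1 hst)
    simpa [hfe, hf, hB.self_eq_zero] using this.symm
  refine ⟨f, hef, le_antisymm (hspan ▸ hBN) (Submodule.span_le.2 ?_)⟩
  rintro x (rfl | rfl) <;> assumption

lemma exists_apply_eq_smul_apply [IsAlgClosed K] [FiniteDimensional K X]
    {C : X →ₗ[K] X →ₗ[K] K} (hB : B.IsAlt) (hC : C.IsAlt) (hB0 : B ≠ 0)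
    (h : LinearMap.ker B ≤ LinearMap.ker C) : ∃ t : K, ∃ y, B y ≠ 0 ∧ C y = t • B y := by
  obtain ⟨U, hU⟩ := (LinearMap.ker B).exists_isCompl
  have eq_zero_of_U {D : X →ₗ[K] X →ₗ[K] K} (hD : D.IsAlt)
      (hBD : LinearMap.ker B ≤ LinearMap.ker D) {x : X} (hx : ∀ u ∈ U, D x u = 0) : D x = 0 := by
    ext z
    obtain ⟨k, hk, u, hu, rfl⟩ := Submodule.mem_sup.1 (hU.sup_eq_top ▸ Submodule.mem_top (x := z))
    simp [hx u hu, ← hD.neg k x, LinearMap.mem_ker.1 (hBD hk)]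
  have ne_zero {u : U} (hu : u ≠ 0) : B u ≠ 0 := fun h0 ↦ hu <| Subtype.ext <| by
    simpa using hU.disjoint.le_bot ⟨h0, u.2⟩
  have hinj : Function.Injective (B.domRestrict₁₂ U U) :=
    (injective_iff_map_eq_zero _).2 fun u hu ↦ by_contra fun h0 ↦ ne_zero h0 <|
      eq_zero_of_U hB le_rfl fun v hv ↦ LinearMap.congr_fun hu ⟨v, hv⟩
  have : Nontrivial U := by
    rw [Submodule.nontrivial_iff_ne_bot]
    rintro rfl
    exact hB0 (LinearMap.ker_eq_top.1 (by simpa using hU.sup_eq_top))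
  let β := LinearMap.linearEquivOfInjective _ hinj Subspace.dual_finrank_eq.symm
  obtain ⟨t, ht⟩ := Module.End.exists_eigenvalue (β.symm.toLinearMap ∘ₗ C.domRestrict₁₂ U U)
  obtain ⟨y, hy⟩ := ht.exists_hasEigenvector
  refine ⟨t, y, ne_zero hy.2, ?_⟩
  have hCy : C.domRestrict₁₂ U U y = t • B.domRestrict₁₂ U U y := by
    have := congrArg β hy.apply_eq_smul
    simpa [β] using this
  have halt : (C - t • B).IsAlt := fun x ↦ by simp [hB.self_eq_zero, hC.self_eq_zero]
  have : (C - t • B) y = 0 := by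
    refine eq_zero_of_U halt (fun x hx ↦ ?_) fun u hu ↦ ?_
    · simp [LinearMap.mem_ker.1 hx, LinearMap.mem_ker.1 (h hx)]
    · exact sub_eq_zero.2 (LinearMap.congr_fun hCy ⟨u, hu⟩)
  simpa [sub_eq_zero] using this

end Bilinear

section StandardForms

variable {K X : Type*} [Field K] [AddCommGroup X] [Module K X]

lemma det_single_of_strictMono {m n : ℕ} {s t : Fin n → Fin m} (hs : StrictMono s)
    (ht : StrictMono t) :
    (Matrix.of fun i j ↦ (Pi.single (s i) 1 : Fin m → K) (t j)).det = if t = s then 1 else 0 := by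
  split_ifs with h
  · subst h
    rw [← Matrix.det_one (n := Fin n)]
    congr 1
    ext i j
    simp [Matrix.one_apply, Pi.single_apply, ht.injective.eq_iff, eq_comm]
  · obtain ⟨j, hj⟩ : ∃ j, t j ∉ Set.range s := by
      contrapose! h
      refine (StrictMono.range_inj ht hs).1 (Set.eq_of_subset_of_ncard_le ?_ ?_)
      · rintro _ ⟨j, rfl⟩
        exact h j
      · rw [← Set.image_univ, ← Set.image_univ, Set.ncard_image_of_injective _ hs.injective,
          Set.ncard_image_of_injective _ ht.injective]
    refine Matrix.det_eq_zero_of_column_eq_zero j fun i ↦ ?_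
    exact Pi.single_eq_of_ne (fun h ↦ hj ⟨i, h.symm⟩) _

lemma stdForm_single_of_strictMono {s : Fin 3 → Fin 6} (hs : StrictMono s) (r : Fin 5) :
    stdForm K r (fun i ↦ Pi.single (s i) 1) = orbitSum (fun t ↦ if t = s then 1 else 0) r := by
  rw [stdForm_apply]
  exact congrFun (orbitSum_congr fun t ht ↦ det_single_of_strictMono hs ht) r

/-- The coordinates that do not occur in the normal form of type `r`. -/
def radicalIndices : Fin 5 → Finset (Fin 6) :=
  ![Finset.univ, {3, 4, 5}, {5}, ∅, ∅]

lemma mem_ker_trilin_stdForm {r : Fin 5} {g : Fin 6 → K} :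
    g ∈ LinearMap.ker (trilin (stdForm K r)) ↔ ∀ i ∉ radicalIndices r, g i = 0 := by
  have mem_ker : g ∈ LinearMap.ker (trilin (stdForm K r)) ↔
      ∀ j k, trilin (stdForm K r) g (Pi.single j 1) (Pi.single k 1) = 0 := by
    rw [LinearMap.mem_ker]
    refine ⟨fun h j k ↦ by simp [h], fun h ↦ ?_⟩
    exact LinearMap.ext_basis (Pi.basisFun K (Fin 6)) (Pi.basisFun K (Fin 6)) (by simpa using h)
  rw [mem_ker]
  simp only [trilin_apply, stdForm_apply, Matrix.det_fin_three, Matrix.of_apply]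
  constructor
  · intro h
    fin_cases r
    · simp [radicalIndices]
    · simpa [radicalIndices, orbitSum, Fin.forall_fin_succ] using
        (⟨h 1 2, h 2 0, h 0 1⟩ : _ ∧ _ ∧ _)
    · simpa [radicalIndices, orbitSum, Fin.forall_fin_succ] using
        (⟨h 1 2, h 2 0, h 0 1, h 4 0, h 0 3⟩ : _ ∧ _ ∧ _ ∧ _ ∧ _)
    · simpa [radicalIndices, orbitSum, Fin.forall_fin_succ] using
        (⟨h 1 2, h 2 0, h 0 1, h 4 0, h 0 3, h 1 3⟩ : _ ∧ _ ∧ _ ∧ _ ∧ _ ∧ _)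
    · simpa [radicalIndices, orbitSum, Fin.forall_fin_succ] using
        (⟨h 1 2, h 2 0, h 0 1, h 4 5, h 5 3, h 3 4⟩ : _ ∧ _ ∧ _ ∧ _ ∧ _ ∧ _)
  · intro h j k
    fin_cases r <;> simp [radicalIndices] at h <;> simp [orbitSum, h]

variable {Y : Type*} [AddCommGroup Y] [Module K Y] {F : X [⋀^Fin 3]→ₗ[K] K}

lemma formEquiv_stdForm_of_values (hX : finrank K X = 6) (x : Fin 6 → X) {r : Fin 5}
    (hval : ∀ i j k, i < j → j < k →
      trilin F (x i) (x j) (x k) = orbitSum (fun s ↦ if s = ![i, j, k] then 1 else 0) r)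
    (hind : LinearIndepOn K x (radicalIndices r)) : FormEquiv F (stdForm K r) := by
  let ψ : (Fin 6 → K) →ₗ[K] X := Fintype.linearCombination K x
  have hψ : F.compLinearMap ψ = stdForm K r := by
    refine ext_alternating_of_strictMono (Pi.basisFun K (Fin 6)) fun s hs ↦ ?_
    have hv := hval _ _ _ (hs (show 0 < 1 by decide)) (hs (show 1 < 2 by decide))
    rw [show ![s 0, s 1, s 2] = s from FinVec.etaExpand_eq s,
      ← stdForm_single_of_strictMono hs] at hv
    rw [← trilin_apply_fin, trilin_compLinearMap]
    simpa [ψ, Function.comp_def] using hv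
  have hinj : Function.Injective ψ := by
    refine (injective_iff_map_eq_zero _).2 fun g hg ↦ ?_
    have hg_off : ∀ i ∉ radicalIndices r, g i = 0 := by
      rw [← mem_ker_trilin_stdForm, LinearMap.mem_ker]
      ext y z
      simp [← hψ, trilin_compLinearMap, show ψ g = 0 from hg]
    have hg_on := linearIndepOn_finset_iff.1 hind g (by
      rwa [Finset.sum_subset (Finset.subset_univ _) fun i _ hi ↦ by rw [hg_off i hi, zero_smul]])
    ext i
    by_cases hi : i ∈ radicalIndices r
    exacts [hg_on i hi, hg_off i hi]
  have hX' : FiniteDimensional K X := .of_finrank_pos (by lia)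
  exact FormEquiv.symm ⟨LinearMap.linearEquivOfInjective ψ hinj (by simp [hX]), hψ⟩

lemma FormEquiv.finrank_ker_trilin {G : Y [⋀^Fin 3]→ₗ[K] K} (h : FormEquiv F G) :
    finrank K (LinearMap.ker (trilin F)) = finrank K (LinearMap.ker (trilin G)) := by
  obtain ⟨φ, rfl⟩ := h
  have : LinearMap.ker (trilin (G.compLinearMap φ)) =
      (LinearMap.ker (trilin G)).comap φ.toLinearMap := by
    ext x
    simp only [LinearMap.mem_ker, Submodule.mem_comap, LinearMap.ext_iff, trilin_compLinearMap]
    exact ⟨fun h y z ↦ by simpa using h (φ.symm y) (φ.symm z), fun h y z ↦ h _ _⟩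
  rw [this]
  exact (φ.ofSubmodule' (LinearMap.ker (trilin G))).finrank_eq

lemma finrank_ker_trilin_stdForm (r : Fin 5) :
    finrank K (LinearMap.ker (trilin (stdForm K r))) = (radicalIndices r).card := by
  have : LinearMap.ker (trilin (stdForm K r)) =
      Pi.spanSubset K (radicalIndices r : Set (Fin 6)) := by
    ext g
    rw [mem_ker_trilin_stdForm, Pi.mem_spanSubset_iff]
    rfl
  rw [this, Pi.dim_spanSubset, Set.ncard_coe_finset]

lemma isDecomposable_trilin_stdForm_four_single (i : Fin 6) :
    IsDecomposable (trilin (stdForm K 4) (Pi.single i 1)) := by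
  intro a b c d
  simp only [trilin_apply, stdForm_apply, orbitSum, Matrix.det_fin_three]
  fin_cases i <;> simp <;> ring

lemma eq_zero_of_isDecomposable_trilin_stdForm_three {x : Fin 6 → K}
    (h : IsDecomposable (trilin (stdForm K 3) x)) : x 0 = 0 := by
  simpa [trilin_apply, stdForm_apply, orbitSum, Matrix.det_fin_three] using
    h (Pi.single 1 1) (Pi.single 2 1) (Pi.single 3 1) (Pi.single 4 1)

lemma not_formEquiv_stdForm_three_four : ¬ FormEquiv (stdForm K 3) (stdForm K 4) := by
  rintro ⟨φ, hφ⟩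
  have hzero : LinearMap.proj 0 ∘ₗ φ.symm.toLinearMap = (0 : (Fin 6 → K) →ₗ[K] K) := by
    refine (Pi.basisFun K (Fin 6)).ext fun i ↦ eq_zero_of_isDecomposable_trilin_stdForm_three ?_
    intro a b c d
    simp only [← hφ, trilin_compLinearMap]
    simpa using isDecomposable_trilin_stdForm_four_single i (φ a) (φ b) (φ c) (φ d)
  simpa using LinearMap.congr_fun hzero (φ (Pi.single 0 1))

theorem eq_of_formEquiv_stdForm {r s : Fin 5} (h : FormEquiv (stdForm K r) (stdForm K s)) :
    r = s := by
  have hcard : (radicalIndices r).card = (radicalIndices s).card := by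
    rw [← finrank_ker_trilin_stdForm (K := K), ← finrank_ker_trilin_stdForm (K := K),
      h.finrank_ker_trilin]
  have h34 := not_formEquiv_stdForm_three_four (K := K)
  fin_cases r <;> fin_cases s <;>
    first | rfl | exact absurd hcard (by decide) | exact absurd h h34 | exact absurd h.symm h34

end StandardForms

section Pencils

variable {K X : Type*} [Field K] [AddCommGroup X] [Module K X] {F : X [⋀^Fin 3]→ₗ[K] K}
  {a b c d e f : X}

/-- The contraction `trilin F e` has the symplectic basis `a, b, c, d`, the vector `f` lies in its
kernel, and `F` vanishes on the span of `a, b, c, d`. Then `F` is determined by the restriction of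
`trilin F f` to that span. -/
structure IsPencil (F : X [⋀^Fin 3]→ₗ[K] K) (e f a b c d : X) : Prop
    extends IsSymplectic (trilin F e) a b c d where
  ef : trilin F e f = 0
  abc : trilin F a b c = 0
  abd : trilin F a b d = 0
  acd : trilin F a c d = 0
  bcd : trilin F b c d = 0

lemma trilin_sub_smul (hef : trilin F e f = 0) (s t : K) (y z : X) :
    trilin F f (y - s • e) (z - t • e) = trilin F f y z := by
  simp [trilin_swap F e f, hef, trilin_rotate F e f]

lemma IsSymplectic.exists_isPencil (h : IsSymplectic (trilin F e) a b c d)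
    (hef : trilin F e f = 0) :
    ∃ α β γ δ : K, IsPencil F e f (a - α • e) (b - β • e) (c - γ • e) (d - δ • e) := by
  refine ⟨trilin F a c d, trilin F b c d, trilin F a b c, trilin F a b d, ?_⟩
  constructor <;> [constructor; skip; skip; skip; skip; skip] <;>
    simp [h.ab, h.cd, h.ac, h.ad, h.bc, h.bd, hef, trilin_rotate F e, trilin_swap F e a,
      trilin_swap F e b]

lemma forall_lt_lt_fin_six {P : Fin 6 → Fin 6 → Fin 6 → Prop}
    (h : P 0 1 2 ∧ P 0 1 3 ∧ P 0 1 4 ∧ P 0 1 5 ∧ P 0 2 3 ∧ P 0 2 4 ∧ P 0 2 5 ∧ P 0 3 4 ∧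
      P 0 3 5 ∧ P 0 4 5 ∧ P 1 2 3 ∧ P 1 2 4 ∧ P 1 2 5 ∧ P 1 3 4 ∧ P 1 3 5 ∧ P 1 4 5 ∧
      P 2 3 4 ∧ P 2 3 5 ∧ P 2 4 5 ∧ P 3 4 5) : ∀ i j k, i < j → j < k → P i j k := by
  simpa [Fin.forall_fin_succ, and_assoc] using h

namespace IsPencil

lemma formEquiv_stdForm_two (hX : finrank K X = 6) (h : IsPencil F e f a b c d)
    (hf : f ≠ 0) (hσ : trilin F f = 0) : FormEquiv F (stdForm K 2) := by
  refine formEquiv_stdForm_of_values hX ![e, a, b, c, d, f] (forall_lt_lt_fin_six ?_) ?_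
  · simp [h.ab, h.cd, h.ac, h.ad, h.bc, h.bd, h.abc, h.abd, h.acd, h.bcd, hσ,
      trilin_rotate F f, orbitSum]
  · simpa [radicalIndices] using hf

lemma formEquiv_stdForm_three (hX : finrank K X = 6) (h : IsPencil F e f a b c d)
    (hac : trilin F f a c = 1) (hab : trilin F f a b = 0) (had : trilin F f a d = 0)
    (hbc : trilin F f b c = 0) (hbd : trilin F f b d = 0) (hcd : trilin F f c d = 0) :
    FormEquiv F (stdForm K 3) := by
  refine formEquiv_stdForm_of_values hX ![e, a, b, c, d, f] (forall_lt_lt_fin_six ?_) ?_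
  · simp [h.ab, h.cd, h.ac, h.ad, h.bc, h.bd, h.ef, h.abc, h.abd, h.acd, h.bcd,
      trilin_swap F e f, trilin_rotate F f a, trilin_rotate F f b, trilin_rotate F f c,
      trilin_rotate F f e, hab, hac, had, hbc, hbd, hcd, orbitSum]
  · simp [radicalIndices]

lemma formEquiv_stdForm_four (hX : finrank K X = 6) (h : IsPencil F e f a b c d)
    (hab : trilin F f a b = 1) (hac : trilin F f a c = 0) (had : trilin F f a d = 0)
    (hbc : trilin F f b c = 0) (hbd : trilin F f b d = 0) (hcd : trilin F f c d = 0) :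
    FormEquiv F (stdForm K 4) := by
  refine formEquiv_stdForm_of_values hX ![f, a, b, e - f, c, d] (forall_lt_lt_fin_six ?_) ?_
  · simp [h.ab, h.cd, h.ac, h.ad, h.bc, h.bd, h.ef, h.abc, h.abd, h.acd, h.bcd,
      trilin_swap F e f, trilin_swap F e a, trilin_swap F e b, trilin_swap F f a,
      trilin_swap F f b, trilin_rotate F f, trilin_rotate F e,
      hab, hac, had, hbc, hbd, hcd, orbitSum]
  · simp [radicalIndices]

end IsPencil

end Pencils

section Classification

variable {K X : Type*} [Field K] [AddCommGroup X] [Module K X] {F : X [⋀^Fin 3]→ₗ[K] K}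
  {e f p q : X}

lemma formEquiv_stdForm_zero (hX : finrank K X = 6) :
    FormEquiv (0 : X [⋀^Fin 3]→ₗ[K] K) (stdForm K 0) := by
  have : FiniteDimensional K X := .of_finrank_pos (by lia)
  exact ⟨.ofFinrankEq _ _ (by simp [hX]), rfl⟩

lemma exists_linearIndependent_forall_apply_eq_zero [FiniteDimensional K X] {m n : ℕ}
    (h : m + n ≤ finrank K X) (φ : X →ₗ[K] Fin m → K) :
    ∃ x : Fin n → X, LinearIndependent K x ∧ ∀ i, φ (x i) = 0 := by
  have hker : n ≤ finrank K (LinearMap.ker φ) := by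
    have hrank := φ.finrank_range_add_finrank_ker
    have hrange := Submodule.finrank_le (LinearMap.range φ)
    rw [finrank_fin_fun] at hrange
    lia
  obtain ⟨x, hx⟩ := exists_linearIndependent_of_le_finrank hker
  exact ⟨_, hx.map' _ (LinearMap.ker φ).ker_subtype, fun i ↦ (x i).2⟩

lemma formEquiv_stdForm_one (hX : finrank K X = 6) (hF : F ≠ 0)
    (hdec : ∀ x, IsDecomposable (trilin F x)) : FormEquiv F (stdForm K 1) := by
  obtain ⟨a, b, c, habc⟩ : ∃ a b c, trilin F a b c = 1 := by
    obtain ⟨v, hv⟩ := DFunLike.ne_iff.1 hF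
    rw [← trilin_apply_fin] at hv
    exact ⟨_, _, _, apply_inv_smul_self hv⟩
  have : FiniteDimensional K X := .of_finrank_pos (by lia)
  obtain ⟨x, hind, hx⟩ := exists_linearIndependent_forall_apply_eq_zero (n := 3) hX.ge
    (LinearMap.pi ![trilin F a b, trilin F a c, trilin F b c])
  have hab i : trilin F a b (x i) = 0 := congrFun (hx i) 0
  have hac i : trilin F a c (x i) = 0 := congrFun (hx i) 1
  have hbc i : trilin F b c (x i) = 0 := congrFun (hx i) 2
  have ha i j : trilin F a (x i) (x j) = 0 :=
    (hdec a).apply_eq_zero habc ⟨hab i, hac i⟩ ⟨hab j, hac j⟩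
  have hb i j : trilin F b (x i) (x j) = 0 := by
    refine (hdec b).apply_eq_zero (p := c) (q := a) (by rw [trilin_rotate, habc]) ?_ ?_ <;>
      simp [mem_orthogonalPair, hbc, trilin_swap F a b, hab]
  have hc i j : trilin F c (x i) (x j) = 0 := by
    refine (hdec c).apply_eq_zero (p := a) (q := b) (by rw [← trilin_rotate, habc]) ?_ ?_ <;>
      simp [mem_orthogonalPair, trilin_swap F a c, trilin_swap F b c, hac, hbc]
  have hx i j k : trilin F (x i) (x j) (x k) = 0 := by
    have hbx j : trilin F (x i) b (x j) = 0 := by simp [trilin_swap F b, hb]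
    have hcx j : trilin F (x i) c (x j) = 0 := by simp [trilin_swap F c, hc]
    have := (hdec (a + x i)).apply_eq_zero (p := b) (q := c)
      (by simp [habc, ← trilin_rotate F (x i) b c, hbc])
      (r := x j) (by simp [mem_orthogonalPair, hab, hac, hbx, hcx])
      (s := x k) (by simp [mem_orthogonalPair, hab, hac, hbx, hcx])
    simpa [ha] using this
  refine formEquiv_stdForm_of_values hX ![a, b, c, x 0, x 1, x 2] (forall_lt_lt_fin_six ?_) ?_
  · simp [habc, hab, hac, hbc, ha, hb, hc, hx, orbitSum]
  · refine linearIndepOn_finset_iff.2 fun g hg ↦ ?_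
    have := Fintype.linearIndependent_iff.1 hind ![g 3, g 4, g 5]
    simpa [radicalIndices, Fin.sum_univ_three, Fin.forall_fin_succ, ← add_assoc] using this
      (by simpa [radicalIndices, Fin.sum_univ_three, ← add_assoc] using hg)

lemma exists_isDecomposable_mem_ker [IsAlgClosed K] (hX : finrank K X = 6)
    (he : ¬ IsDecomposable (trilin F e)) :
    ∃ f ≠ 0, trilin F e f = 0 ∧ IsDecomposable (trilin F f) := by
  have : FiniteDimensional K X := .of_finrank_pos (by lia)
  have he0 : e ≠ 0 := by
    rintro rfl
    exact he (by simp [IsDecomposable])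
  have hB0 : trilin F e ≠ 0 := fun h ↦ he (by simp [IsDecomposable, h])
  obtain ⟨a, b, c, d, hs⟩ := exists_isSymplectic (isAlt_trilin_apply F e) he
  obtain ⟨f, hind, hker⟩ := hs.exists_ker_eq_span_pair (isAlt_trilin_apply F e) hX he0
    (trilin_self F e)
  have hef : trilin F e f = 0 := by
    rw [← LinearMap.mem_ker, hker]
    exact Submodule.mem_span_of_mem (by simp)
  have hle : LinearMap.ker (trilin F e) ≤ LinearMap.ker (trilin F f) := by
    rw [hker, Submodule.span_le]
    rintro x (rfl | rfl)
    · simp [trilin_swap F x f, hef]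
    · simp
  obtain ⟨t, y, hy, hty⟩ := exists_apply_eq_smul_apply (isAlt_trilin_apply F e)
    (isAlt_trilin_apply F f) hB0 hle
  refine ⟨f - t • e, ?_, by simp [hef], isDecomposable_of_finrank_le (isAlt_trilin_apply F _) ?_⟩
  · intro h
    have := LinearIndependent.pair_iff.1 hind (-t) 1 (by rw [← h]; module)
    exact one_ne_zero this.2
  · have hlt : LinearMap.ker (trilin F e) < LinearMap.ker (trilin F (f - t • e)) := by
      refine SetLike.lt_iff_le_and_exists.2 ⟨fun x hx ↦ ?_, y, by simp [hty], hy⟩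
      have hfx : trilin F f x = 0 := hle hx
      have hex : trilin F e x = 0 := hx
      simp [hfx, hex]
    have htwo : finrank K (LinearMap.ker (trilin F e)) = 2 := by
      have := finrank_span_eq_card hind
      rwa [Matrix.range_cons_cons_empty, Fintype.card_fin, ← hker] at this
    have := Submodule.finrank_lt_finrank_of_lt hlt
    lia

lemma formEquiv_stdForm_three_of_forall_orthogonalPair (hX : finrank K X = 6)
    (hef : trilin F e f = 0) (he : ¬ IsDecomposable (trilin F e))
    (hf : IsDecomposable (trilin F f)) (hpq : trilin F f p q = 1)
    (h : ∀ r ∈ orthogonalPair (trilin F f) p q, ∀ s ∈ orthogonalPair (trilin F f) p q,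
      trilin F e r s = 0) : FormEquiv F (stdForm K 3) := by
  have halt_e := isAlt_trilin_apply F e
  have halt_f := isAlt_trilin_apply F f
  obtain ⟨r, hr, s, hs, hpr, hqr, hps, hqs⟩ := exists_dual_pair halt_f halt_e hpq h he
  have hers := h r hr s hs
  have hfrs := hf.apply_eq_zero hpq hr hs
  have herq : trilin F e r q = 0 := by rw [← halt_e.neg, hqr, neg_zero]
  have hfrq : trilin F f r q = 0 := ((mem_orthogonalPair_iff_apply halt_f).1 hr).2
  rw [mem_orthogonalPair] at hr hs
  have hsymp : IsSymplectic (trilin F (e - trilin F e p q • f)) p r q s := by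
    constructor <;> simp [hpq, hpr, hps, hqs, hers, hfrs, herq, hfrq, hr, hs]
  obtain ⟨_, _, _, _, hpencil⟩ := hsymp.exists_isPencil (f := f) (by simp [hef])
  refine hpencil.formEquiv_stdForm_three hX ?_ ?_ ?_ ?_ ?_ ?_ <;>
    rw [trilin_sub_smul (by simp [hef])] <;> simp [hpq, hr, hs, hfrs, hfrq]

lemma formEquiv_stdForm_four_of_mem_orthogonalPair (hX : finrank K X = 6)
    (hef : trilin F e f = 0) (hf : IsDecomposable (trilin F f)) (hpq : trilin F f p q = 1)
    {r s : X} (hr : r ∈ orthogonalPair (trilin F f) p q)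
    (hs : s ∈ orthogonalPair (trilin F f) p q) (hrs : trilin F e r s = 1) :
    FormEquiv F (stdForm K 4) := by
  have halt_e := isAlt_trilin_apply F e
  have halt_f := isAlt_trilin_apply F f
  have hfrs := hf.apply_eq_zero hpq hr hs
  have hrq := ((mem_orthogonalPair_iff_apply halt_f).1 hr).2
  have hsq := ((mem_orthogonalPair_iff_apply halt_f).1 hs).2
  have hfsr : trilin F f s r = 0 := by rw [← halt_f.neg, hfrs, neg_zero]
  let proj (y : X) : X := y + trilin F e s y • r - trilin F e r y • s
  have apply_e (y : X) : trilin F e (proj y) r = 0 ∧ trilin F e (proj y) s = 0 :=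
    (mem_orthogonalPair_iff_apply halt_e).1 (add_smul_sub_smul_mem_orthogonalPair halt_e hrs y)
  have apply_f : trilin F f (proj p) (proj q) = 1 ∧ trilin F f (proj p) r = 0 ∧
      trilin F f (proj p) s = 0 ∧ trilin F f (proj q) r = 0 ∧ trilin F f (proj q) s = 0 := by
    rw [mem_orthogonalPair] at hr hs
    simp [proj, hpq, hr, hs, hrq, hsq, hfrs, hfsr, halt_f.self_eq_zero]
  have hsymp : IsSymplectic (trilin F (e + (1 - trilin F e (proj p) (proj q)) • f))
      (proj p) (proj q) r s := by
    constructor <;> simp [apply_e, apply_f, hrs, hfrs]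
  obtain ⟨_, _, _, _, hpencil⟩ := hsymp.exists_isPencil (f := f) (by simp [hef])
  refine hpencil.formEquiv_stdForm_four hX ?_ ?_ ?_ ?_ ?_ ?_ <;>
    rw [trilin_sub_smul (by simp [hef])] <;> simp [apply_f, hfrs]

lemma exists_formEquiv_stdForm [IsAlgClosed K] (hX : finrank K X = 6)
    (F : X [⋀^Fin 3]→ₗ[K] K) : ∃ r, FormEquiv F (stdForm K r) := by
  rcases eq_or_ne F 0 with rfl | hF
  · exact ⟨0, formEquiv_stdForm_zero hX⟩
  by_cases hdec : ∀ e, IsDecomposable (trilin F e)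
  · exact ⟨1, formEquiv_stdForm_one hX hF hdec⟩
  push Not at hdec
  obtain ⟨e, he⟩ := hdec
  obtain ⟨f, hf0, hef, hf⟩ := exists_isDecomposable_mem_ker hX he
  by_cases hσ : trilin F f = 0
  · obtain ⟨a, b, c, d, hs⟩ := exists_isSymplectic (isAlt_trilin_apply F e) he
    obtain ⟨_, _, _, _, hpencil⟩ := hs.exists_isPencil hef
    exact ⟨2, hpencil.formEquiv_stdForm_two hX hf0 hσ⟩
  obtain ⟨p, q, hpq⟩ : ∃ p q, trilin F f p q = 1 := by
    obtain ⟨p, hp⟩ := DFunLike.ne_iff.1 hσ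
    obtain ⟨q, hq⟩ := DFunLike.ne_iff.1 hp
    exact ⟨p, _, apply_inv_smul_self hq⟩
  by_cases h : ∀ r ∈ orthogonalPair (trilin F f) p q, ∀ s ∈ orthogonalPair (trilin F f) p q,
      trilin F e r s = 0
  · exact ⟨3, formEquiv_stdForm_three_of_forall_orthogonalPair hX hef he hf hpq h⟩
  · push Not at h
    obtain ⟨r, hr, s, hs, hrs⟩ := h
    exact ⟨4, formEquiv_stdForm_four_of_mem_orthogonalPair hX hef hf hpq hr
      (Submodule.smul_mem _ _ hs) (apply_inv_smul_self hrs)⟩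

end Classification

lemma orbitRep_eq_orbitSum :
    orbitRep = orbitSum fun s ↦ ExteriorAlgebra.ιMulti ℂ 3 (Pi.basisFun ℂ (Fin 6) ∘ s) := by
  have wedge3_eq (a b c : Fin 6) : wedge3 a b c =
      ExteriorAlgebra.ιMulti ℂ 3 (Pi.basisFun ℂ (Fin 6) ∘ ![a, b, c]) := by
    rw [wedge3]
    congr 1
    ext i
    fin_cases i <;> simp [stdBasis6]
  simp only [orbitRep, orbitSum, wedge3_eq]

end Trivector

open Module Trivector in
theorem wedge_cube_C6_five_orbits_general {K V : Type*} [Field K] [IsAlgClosed K]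
    [AddCommGroup V] [Module K V] (b : Basis (Fin 6) K V) :
    ∀ v ∈ ⋀[K]^3 V, ∃! r : Fin 5, ∃ g : V ≃ₗ[K] V,
      ExteriorAlgebra.map (g : V →ₗ[K] V)
        (orbitSum (fun s ↦ ExteriorAlgebra.ιMulti K 3 (b ∘ s)) r) = v := by
  intro v hv
  lift v to ⋀[K]^3 V using hv
  have : FiniteDimensional K V := b.finiteDimensional_of_finite
  have hdual : finrank K (Dual K V) = 6 := by
    rw [Subspace.dual_finrank_eq, finrank_eq_card_basis b, Fintype.card_fin]
  have orbit_iff (r : Fin 5) : (∃ g : V ≃ₗ[K] V, ExteriorAlgebra.map (g : V →ₗ[K] V)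
      (orbitSum (fun s ↦ ExteriorAlgebra.ιMulti K 3 (b ∘ s)) r) = v) ↔
        FormEquiv (dualForm v) (stdForm K r) := by
    have hr := formEquiv_dualForm_orbitSum b r
    simp only [← coe_orbitSum, ← coe_map, SetLike.coe_eq_coe, ← formEquiv_dualForm_iff]
    exact ⟨fun h ↦ h.trans hr, fun h ↦ h.trans hr.symm⟩
  obtain ⟨r, hr⟩ := exists_formEquiv_stdForm hdual (dualForm v)
  exact ⟨r, (orbit_iff r).2 hr,
    fun s hs ↦ eq_of_formEquiv_stdForm (((orbit_iff s).1 hs).symm.trans hr)⟩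

/-- The action of `GL₆(ℂ)` on `⋀³ℂ⁶` has exactly 5 orbits, with representatives
`0`, `e₁∧e₂∧e₃`, `e₁∧e₂∧e₃ + e₁∧e₄∧e₅`, `e₁∧e₂∧e₃ + e₁∧e₄∧e₅ + e₂∧e₄∧e₆` and
`e₁∧e₂∧e₃ + e₄∧e₅∧e₆`: every element of `⋀³ℂ⁶` lies in the orbit of exactly one
of the representatives. -/
theorem wedge_cube_C6_five_orbits :
    ∀ v ∈ ⋀[ℂ]^3 (Fin 6 → ℂ),
      ∃! i : Fin 5, ∃ g : (Fin 6 → ℂ) ≃ₗ[ℂ] (Fin 6 → ℂ),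
        ExteriorAlgebra.map (g : (Fin 6 → ℂ) →ₗ[ℂ] (Fin 6 → ℂ)) (orbitRep i) = v := by
  rw [Trivector.orbitRep_eq_orbitSum]
  exact wedge_cube_C6_five_orbits_general (Pi.basisFun ℂ (Fin 6))
end
end

section
/- The action of SL_2(ℂ) × SL_5(ℂ) × ℂ^× on ℂ² ⊗ ⋀²ℂ⁵, where (g,h,t) acts by e ⊗ ω ↦ t·(ge) ⊗ ((⋀²h)ω) extended linearly, has exactly 8 orbits. -/
noncomputable section

open TensorProduct

/-- The ambient module `ℂ² ⊗ ⋀(ℂ⁵)` (tensor product with the full exterior algebra). -/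
abbrev AmbientT9 : Type := TensorProduct ℂ (Fin 2 → ℂ) (ExteriorAlgebra ℂ (Fin 5 → ℂ))

/-- The submodule `ℂ² ⊗ ⋀²ℂ⁵` of `ℂ² ⊗ ⋀(ℂ⁵)`. -/
def tensorWedgeSq : Submodule ℂ AmbientT9 :=
  LinearMap.range (TensorProduct.map (LinearMap.id : (Fin 2 → ℂ) →ₗ[ℂ] (Fin 2 → ℂ))
    (Submodule.subtype (⋀[ℂ]^2 (Fin 5 → ℂ))))

/-- Two elements of `ℂ² ⊗ ⋀²ℂ⁵` are related if one is obtained from the other by the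
action of an element `(g, h, t)` of `SL₂(ℂ) × SL₅(ℂ) × ℂ^×`, where `g` acts on the
first factor, `h` acts on the second factor through `⋀²h` (induced by the action on
`ℂ⁵`), and `t` acts by scaling. -/
def relT9 (v w : tensorWedgeSq) : Prop :=
  ∃ (g : Matrix.SpecialLinearGroup (Fin 2) ℂ) (h : Matrix.SpecialLinearGroup (Fin 5) ℂ)
    (t : ℂˣ),
    (w : AmbientT9) = (t : ℂ) •
      (TensorProduct.map ((g : Matrix (Fin 2) (Fin 2) ℂ)).mulVecLin
        (ExteriorAlgebra.map ((h : Matrix (Fin 5) (Fin 5) ℂ)).mulVecLin).toLinearMap)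
      (v : AmbientT9)

/-! A tensor in `E ⊗ ⋀²V`, with `dim E = 2` and `dim V = 5`, is a pencil of bivectors `E* → ⋀²V`,
and a bivector is an alternating map `V* → V`. Over an algebraically closed field every element of
`GL` is a scalar multiple of one of `SL`, so the orbits are the classes of pencils up to the choice
of bases of `E` and `V`. If some nonzero element of `E*` maps to a decomposable bivector, possibly
zero, splitting off hyperbolic planes brings the pencil to a normal form. Otherwise `ker B` is not
contained in `ker A` for independent members `A` and `B`, since an eigenvector argument would then
make some `A - x • B` decomposable; a kernel vector `φ` of `B` with `A φ ≠ 0` leads to the generic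
normal form. The eight normal forms are distinguished by the dimension of the common kernel of the
pencil and the dimension of the span of its decomposable members. -/

open Module

section Bivector

variable {R V : Type*} [CommRing R] [AddCommGroup V] [Module R V] {M : Dual R V →ₗ[R] V}

variable (R V) in
/-- Bivectors over `V`, encoded as the alternating maps `V* → V`: an element `ω` of `⋀²V`
corresponds to its contraction `φ ↦ φ ⌋ ω`. -/
def bivectors : Submodule R (Dual R V →ₗ[R] V) where
  carrier := {M | ∀ φ : Dual R V, φ (M φ) = 0}
  add_mem' hM hN φ := by rw [LinearMap.add_apply, map_add, hM φ, hN φ, add_zero]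
  zero_mem' φ := by rw [LinearMap.zero_apply, map_zero]
  smul_mem' c M hM φ := by rw [LinearMap.smul_apply, map_smul, hM φ, smul_zero]

theorem dual_apply_self_of_mem_bivectors (hM : M ∈ bivectors R V) (φ : Dual R V) :
    φ (M φ) = 0 :=
  hM φ

theorem dual_apply_swap_of_mem_bivectors (hM : M ∈ bivectors R V) (φ ψ : Dual R V) :
    φ (M ψ) = -ψ (M φ) := by
  have h := dual_apply_self_of_mem_bivectors hM (φ + ψ)
  simp only [map_add, LinearMap.add_apply, dual_apply_self_of_mem_bivectors hM, zero_add,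
    add_zero] at h
  linear_combination h

theorem dual_apply_eq_zero_of_mem_bivectors (hM : M ∈ bivectors R V) {φ : Dual R V}
    (hφ : M φ = 0) (ψ : Dual R V) : φ (M ψ) = 0 := by
  rw [dual_apply_swap_of_mem_bivectors hM, hφ, map_zero, neg_zero]

variable (R) in
/-- The bivector `u ∧ v`. -/
def wedge (u v : V) : Dual R V →ₗ[R] V :=
  (Dual.eval R V u).smulRight v - (Dual.eval R V v).smulRight u

@[simp]
theorem wedge_apply (u v : V) (φ : Dual R V) : wedge R u v φ = φ u • v - φ v • u :=
  rfl

theorem wedge_mem_bivectors (u v : V) : wedge R u v ∈ bivectors R V := fun φ => by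
  simp [mul_comm]

theorem zero_wedge (v : V) : wedge R 0 v = 0 := by
  ext φ
  simp

theorem wedge_zero (u : V) : wedge R u 0 = 0 := by
  ext φ
  simp

theorem range_wedge_le (u v : V) :
    LinearMap.range (wedge R u v) ≤ Submodule.span R (Set.range ![u, v]) := by
  rintro _ ⟨φ, rfl⟩
  exact sub_mem (Submodule.smul_mem _ _ (Submodule.subset_span ⟨1, rfl⟩))
    (Submodule.smul_mem _ _ (Submodule.subset_span ⟨0, rfl⟩))

/-- A bivector is decomposable if it is of the form `u ∧ v`. -/
def IsDecomposable (M : Dual R V →ₗ[R] V) : Prop :=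
  ∃ u v, M = wedge R u v

theorem isDecomposable_wedge (u v : V) : IsDecomposable (wedge R u v) :=
  ⟨u, v, rfl⟩

theorem isDecomposable_zero : IsDecomposable (0 : Dual R V →ₗ[R] V) :=
  ⟨0, 0, (zero_wedge 0).symm⟩

theorem IsDecomposable.pluecker (hM : IsDecomposable M) (α β γ δ : Dual R V) :
    β (M α) * δ (M γ) - γ (M α) * δ (M β) + δ (M α) * γ (M β) = 0 := by
  obtain ⟨u, v, rfl⟩ := hM
  simp only [wedge_apply, map_sub, map_smul, smul_eq_mul]
  ring

end Bivector

section Functionals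

variable {K V : Type*} [Field K] [AddCommGroup V] [Module K V]

theorem exists_dual_apply_eq_of_linearIndependent {ι : Type*} {v : ι → V}
    (hv : LinearIndependent K v) (c : ι → K) : ∃ φ : Dual K V, ∀ i, φ (v i) = c i := by
  obtain ⟨φ, hφ⟩ := LinearMap.exists_extend ((Basis.span hv).constr K c)
  refine ⟨φ, fun i => ?_⟩
  rw [← (Basis.span hv).constr_basis K c i, ← hφ, LinearMap.comp_apply, Submodule.subtype_apply,
    Basis.span_apply]

theorem mem_span_of_forall_dual {s : Set V} {x : V}
    (h : ∀ φ : Dual K V, (∀ v ∈ s, φ v = 0) → φ x = 0) : x ∈ Submodule.span K s := by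
  refine (Subspace.forall_mem_dualAnnihilator_apply_eq_zero_iff _ x).1 fun φ hφ =>
    h φ fun v hv => ?_
  exact (Submodule.mem_dualAnnihilator φ).1 hφ v (Submodule.subset_span hv)

theorem linearIndependent_vecCons_of_dual {n : ℕ} {v : Fin n → V} (hv : LinearIndependent K v)
    {φ : Dual K V} (hφ : ∀ i, φ (v i) = 0) {x : V} (hx : φ x ≠ 0) :
    LinearIndependent K (Matrix.vecCons x v) := by
  refine linearIndependent_finCons.2 ⟨hv, fun hmem => hx ?_⟩
  have hle : Submodule.span K (Set.range v) ≤ LinearMap.ker φ :=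
    Submodule.span_le.2 (Set.range_subset_iff.2 hφ)
  exact hle hmem

theorem exists_dual_ne_zero_of_card_lt_finrank [FiniteDimensional K V] {n : ℕ} (v : Fin n → V)
    (hn : n < finrank K V) : ∃ φ : Dual K V, φ ≠ 0 ∧ ∀ i, φ (v i) = 0 := by
  have hlt : Submodule.span K (Set.range v) < ⊤ := by
    refine lt_top_iff_ne_top.2 fun htop => hn.not_ge ?_
    rw [← finrank_top K V, ← htop]
    exact (finrank_range_le_card v).trans_eq (Fintype.card_fin n)
  obtain ⟨φ, hφ, hmap⟩ := Submodule.exists_dual_map_eq_bot_of_lt_top hlt inferInstance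
  exact ⟨φ, hφ, fun i => LinearMap.le_ker_iff_map.2 hmap (Submodule.subset_span ⟨i, rfl⟩)⟩

theorem card_le_finrank_of_linearIndependent_of_mem {ι : Type*} [Fintype ι] {v : ι → V}
    (hv : LinearIndependent K v) {W : Submodule K V} [FiniteDimensional K W] (h : ∀ i, v i ∈ W) :
    Fintype.card ι ≤ finrank K W := by
  rw [← finrank_span_eq_card hv]
  exact Submodule.finrank_mono (Submodule.span_le.2 (Set.range_subset_iff.2 h))

theorem dual_ext_of_linearIndependent [FiniteDimensional K V] {n : ℕ} {v : Fin n → V}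
    (hv : LinearIndependent K v) (hn : finrank K V = n) {φ ψ : Dual K V}
    (h : ∀ i, φ (v i) = ψ (v i)) : φ = ψ := by
  refine LinearMap.ext_on_range (hv.span_eq_top_of_card_eq_finrank' ?_) h
  rw [Fintype.card_fin, hn]

theorem sumExtend_inl {ι : Type*} {v : ι → V} (hv : LinearIndependent K v) (i : ι) :
    Basis.sumExtend hv (Sum.inl i) = v i := by
  rw [Basis.sumExtend, Basis.reindex_apply, Basis.extend_apply_self]
  rfl

theorem exists_basis_natAdd [FiniteDimensional K V] {k m : ℕ} {v : Fin m → V}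
    (hv : LinearIndependent K v) (hV : finrank K V = k + m) :
    ∃ b : Basis (Fin (k + m)) K V, ∀ i, b (Fin.natAdd k i) = v i := by
  set b := Basis.sumExtend hv
  have : Finite (Fin m ⊕ Basis.sumExtendIndex hv) := Module.Finite.finite_basis b
  have : Finite (Basis.sumExtendIndex hv) := Finite.sum_right (Fin m)
  have hcard : Nat.card (Basis.sumExtendIndex hv) = k := by
    rw [finrank_eq_nat_card_basis b, Nat.card_sum, Nat.card_fin] at hV
    omega
  refine ⟨b.reindex ((Equiv.sumComm _ _).trans
    (((Finite.equivFinOfCardEq hcard).sumCongr (Equiv.refl _)).trans finSumFinEquiv)), fun i => ?_⟩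
  simp [b, sumExtend_inl]

theorem finrank_span_image_of_linearIndepOn {ι : Type*} {v : ι → V} {s : Finset ι}
    (h : LinearIndepOn K v s) : finrank K (Submodule.span K (v '' s)) = s.card := by
  rw [Set.image_eq_range]
  exact (finrank_span_eq_card h).trans (Fintype.card_coe s)

end Functionals

section Splitting

variable {K V : Type*} [Field K] [AddCommGroup V] [Module K V] {M N : Dual K V →ₗ[K] V}
  {φ ψ χ ω : Dual K V}

theorem exists_eq_wedge_add (hM : M ∈ bivectors K V) (h : ψ (M φ) = 1) :
    ∃ N ∈ bivectors K V, M = wedge K (M φ) (M ψ) + N ∧ N φ = 0 ∧ N ψ = 0 ∧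
      ∀ χ, M χ = 0 → N χ = 0 := by
  have h' : φ (M ψ) = -1 := by rw [dual_apply_swap_of_mem_bivectors hM, h]
  refine ⟨M - wedge K (M φ) (M ψ), sub_mem hM (wedge_mem_bivectors _ _),
    (add_sub_cancel _ _).symm, ?_, ?_, fun χ hχ => ?_⟩
  · simp [dual_apply_self_of_mem_bivectors hM, h']
  · simp [dual_apply_self_of_mem_bivectors hM, h]
  · simp [dual_apply_eq_zero_of_mem_bivectors hM hχ, hχ]

theorem linearIndependent_vecCons_vecCons_of_mem_bivectors (hM : M ∈ bivectors K V)
    (h : ψ (M φ) = 1) {n : ℕ} {v : Fin n → V} (hv : LinearIndependent K v)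
    (hφ : ∀ i, φ (v i) = 0) (hψ : ∀ i, ψ (v i) = 0) :
    LinearIndependent K (Matrix.vecCons (M φ) (Matrix.vecCons (M ψ) v)) := by
  have h' : φ (M ψ) = -1 := by rw [dual_apply_swap_of_mem_bivectors hM, h]
  refine linearIndependent_vecCons_of_dual (φ := ψ) ?_ (Fin.cases ?_ hψ) (by simp [h])
  · exact linearIndependent_vecCons_of_dual hv hφ (by simp [h'])
  · exact dual_apply_self_of_mem_bivectors hM ψ

theorem linearIndependent_of_mem_bivectors_of_mem_bivectors (hM : M ∈ bivectors K V)
    (hN : N ∈ bivectors K V) (h : ψ (M φ) = 1) (h' : ω (N χ) = 1) (hφ : N φ = 0) (hψ : N ψ = 0)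
    {n : ℕ} {v : Fin n → V} (hv : LinearIndependent K v) (hvφ : ∀ i, φ (v i) = 0)
    (hvψ : ∀ i, ψ (v i) = 0) (hvχ : ∀ i, χ (v i) = 0) (hvω : ∀ i, ω (v i) = 0) :
    LinearIndependent K
      (Matrix.vecCons (M φ) (Matrix.vecCons (M ψ)
        (Matrix.vecCons (N χ) (Matrix.vecCons (N ω) v)))) :=
  linearIndependent_vecCons_vecCons_of_mem_bivectors hM h
    (linearIndependent_vecCons_vecCons_of_mem_bivectors hN h' hv hvχ hvω)
    (Fin.cases (dual_apply_eq_zero_of_mem_bivectors hN hφ χ)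
      (Fin.cases (dual_apply_eq_zero_of_mem_bivectors hN hφ ω) hvφ))
    (Fin.cases (dual_apply_eq_zero_of_mem_bivectors hN hψ χ)
      (Fin.cases (dual_apply_eq_zero_of_mem_bivectors hN hψ ω) hvψ))

theorem exists_dual_apply_apply_eq_one (hM : M ≠ 0) : ∃ φ ψ : Dual K V, ψ (M φ) = 1 := by
  obtain ⟨φ, hφ⟩ := DFunLike.exists_ne hM
  exact ⟨φ, Projective.exists_dual_eq_one K hφ⟩

theorem isDecomposable_of_finrank_range_le (hM : M ∈ bivectors K V)
    [FiniteDimensional K (LinearMap.range M)] (hr : finrank K (LinearMap.range M) ≤ 3) :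
    IsDecomposable M := by
  by_cases hM0 : M = 0
  · exact hM0 ▸ isDecomposable_zero
  obtain ⟨φ, ψ, h⟩ := exists_dual_apply_apply_eq_one hM0
  obtain ⟨N, hN, hMN, hφ, hψ, -⟩ := exists_eq_wedge_add hM h
  suffices hN0 : N = 0 from ⟨M φ, M ψ, by rwa [hN0, add_zero] at hMN⟩
  by_contra hN0
  obtain ⟨χ, ω, h'⟩ := exists_dual_apply_apply_eq_one hN0
  have hLI := linearIndependent_of_mem_bivectors_of_mem_bivectors hM hN h h' hφ hψ
    (linearIndependent_empty_type (v := ![])) finZeroElim finZeroElim finZeroElim finZeroElim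
  have hNrange : ∀ τ, N τ ∈ LinearMap.range M := fun τ => by
    rw [eq_sub_of_add_eq' hMN.symm]
    exact sub_mem ⟨τ, rfl⟩ (sub_mem (Submodule.smul_mem _ _ ⟨ψ, rfl⟩)
      (Submodule.smul_mem _ _ ⟨φ, rfl⟩))
  have hcard := card_le_finrank_of_linearIndependent_of_mem hLI (W := LinearMap.range M)
    (by simpa [Fin.forall_fin_succ] using ⟨hNrange χ, hNrange ω⟩)
  rw [Fintype.card_fin] at hcard
  omega

theorem linearIndependent_of_wedge_ne_zero {u v : V} (h : wedge K u v ≠ 0) :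
    LinearIndependent K ![u, v] := by
  have hu : u ≠ 0 := by
    rintro rfl
    exact h (zero_wedge v)
  refine (LinearIndependent.pair_iff' hu).2 fun a ha => h ?_
  ext φ
  simp [← ha, mul_comm, smul_smul]

theorem linearIndependent_of_not_isDecomposable {u v w z : V}
    (h : ¬ IsDecomposable (wedge K u v + wedge K w z)) : LinearIndependent K ![u, v, w, z] := by
  have hle : LinearMap.range (wedge K u v + wedge K w z) ≤
      Submodule.span K (Set.range ![u, v, w, z]) := by
    refine (LinearMap.range_add_le _ _).trans (sup_le ?_ ?_)
    · exact (range_wedge_le u v).trans (Submodule.span_mono (by simp [Set.insert_subset_iff]))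
    · exact (range_wedge_le w z).trans (Submodule.span_mono (by simp [Set.insert_subset_iff]))
  have : FiniteDimensional K (Submodule.span K (Set.range ![u, v, w, z])) :=
    FiniteDimensional.span_of_finite K (Set.finite_range _)
  have : FiniteDimensional K (LinearMap.range (wedge K u v + wedge K w z)) :=
    Submodule.finiteDimensional_of_le hle
  rw [linearIndependent_iff_card_le_finrank_span, Fintype.card_fin]
  by_contra hlt
  refine h (isDecomposable_of_finrank_range_le
    (add_mem (wedge_mem_bivectors _ _) (wedge_mem_bivectors _ _)) ?_)
  have := Submodule.finrank_mono hle
  rw [Set.finrank] at hlt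
  omega

theorem eq_wedge_of_eq_wedge_add [FiniteDimensional K V] (hV : finrank K V ≤ 5)
    (hM : M ∈ bivectors K V) (hN : N ∈ bivectors K V) (h : ψ (M φ) = 1) (hφ : N φ = 0)
    (hψ : N ψ = 0) (h' : ω (N χ) = 1) : N = wedge K (N χ) (N ω) := by
  obtain ⟨P, hP, hNP, hχ, hω, hker⟩ := exists_eq_wedge_add hN h'
  suffices hP0 : P = 0 by rwa [hP0, add_zero] at hNP
  by_contra hP0
  obtain ⟨σ, τ, h''⟩ := exists_dual_apply_apply_eq_one hP0
  have hvanish : ∀ ρ : Dual K V, P ρ = 0 → ∀ i, ρ (![P σ, P τ] i) = 0 := fun ρ hρ =>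
    Fin.forall_fin_two.2 ⟨dual_apply_eq_zero_of_mem_bivectors hP hρ σ,
      dual_apply_eq_zero_of_mem_bivectors hP hρ τ⟩
  have hLI := linearIndependent_of_mem_bivectors_of_mem_bivectors hM hN h h' hφ hψ
    (linearIndependent_vecCons_vecCons_of_mem_bivectors hP h''
      (linearIndependent_empty_type (v := ![])) finZeroElim finZeroElim)
    (hvanish φ (hker φ hφ)) (hvanish ψ (hker ψ hψ)) (hvanish χ hχ) (hvanish ω hω)
  have := hLI.fintype_card_le_finrank
  rw [Fintype.card_fin] at this
  omega

theorem exists_eq_wedge_add_wedge [FiniteDimensional K V] (hV : finrank K V ≤ 5)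
    (hM : M ∈ bivectors K V) (hdec : ¬ IsDecomposable M) (hφ : M φ ≠ 0) :
    ∃ v w z, M = wedge K (M φ) v + wedge K w z := by
  obtain ⟨ψ, h⟩ := Projective.exists_dual_eq_one K hφ
  obtain ⟨N, hN, hMN, hφ, hψ, -⟩ := exists_eq_wedge_add hM h
  have hN0 : N ≠ 0 := by
    rintro rfl
    exact hdec ⟨_, _, hMN.trans (add_zero _)⟩
  obtain ⟨χ, ω, h'⟩ := exists_dual_apply_apply_eq_one hN0
  exact ⟨M ψ, N χ, N ω, by rwa [← eq_wedge_of_eq_wedge_add hV hM hN h hφ hψ h']⟩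

end Splitting

section Coordinates

variable {K V : Type*} [Field K] [AddCommGroup V] [Module K V] {N : Dual K V →ₗ[K] V}

theorem mem_span_range_of_mem_bivectors {ι : Type*} {v : ι → V} (hN : N ∈ bivectors K V)
    (hker : ∀ φ : Dual K V, (∀ i, φ (v i) = 0) → N φ = 0) (χ : Dual K V) :
    N χ ∈ Submodule.span K (Set.range v) :=
  mem_span_of_forall_dual fun φ hφ =>
    dual_apply_eq_zero_of_mem_bivectors hN (hker φ fun i => hφ _ ⟨i, rfl⟩) χ

theorem bivectors_apply_eq_sum {ι : Type*} [Fintype ι] [DecidableEq ι] {v : ι → V}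
    {d : ι → Dual K V} (hd : ∀ i j, d i (v j) = if i = j then 1 else 0)
    (hN : N ∈ bivectors K V) (hker : ∀ φ : Dual K V, (∀ i, φ (v i) = 0) → N φ = 0)
    (χ : Dual K V) : N χ = ∑ i, ∑ j, (χ (v j) * d i (N (d j))) • v i := by
  have hspan : ∀ τ, N τ = ∑ i, d i (N τ) • v i := fun τ => by
    obtain ⟨c, hc⟩ := (Submodule.mem_span_range_iff_exists_fun K).1
      (mem_span_range_of_mem_bivectors hN hker τ)
    simp [← hc, hd]
  rw [hspan χ]
  refine Finset.sum_congr rfl fun i _ => ?_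
  rw [← Finset.sum_smul, dual_apply_swap_of_mem_bivectors hN, hspan (d i), map_sum,
    ← Finset.sum_neg_distrib]
  congr 1
  refine Finset.sum_congr rfl fun j _ => ?_
  rw [map_smul, smul_eq_mul, dual_apply_swap_of_mem_bivectors hN (d i)]
  ring

theorem exists_eq_smul_wedge_add_wedge {v w z : V} (hLI : LinearIndependent K ![v, w, z])
    (hN : N ∈ bivectors K V) (hker : ∀ φ : Dual K V, (∀ i, φ (![v, w, z] i) = 0) → N φ = 0) :
    ∃ k d e : K, N = k • wedge K w z + wedge K v (d • w + e • z) := by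
  choose d hd using fun i => exists_dual_apply_eq_of_linearIndependent hLI
    fun j => if i = j then 1 else 0
  refine ⟨d 2 (N (d 1)), d 1 (N (d 0)), d 2 (N (d 0)), LinearMap.ext fun χ => ?_⟩
  rw [bivectors_apply_eq_sum hd hN hker]
  simp only [Fin.sum_univ_three, dual_apply_self_of_mem_bivectors hN,
    dual_apply_swap_of_mem_bivectors hN (d 0), dual_apply_swap_of_mem_bivectors hN (d 1) (d 2),
    Matrix.cons_val, LinearMap.add_apply, LinearMap.smul_apply, wedge_apply, map_add, map_smul,
    smul_eq_mul]
  module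

theorem wedge_apply_eq_zero_iff {u v : V} (h : wedge K u v ≠ 0) {φ : Dual K V} :
    wedge K u v φ = 0 ↔ ∀ i, φ (![u, v] i) = 0 := by
  refine ⟨fun h0 => ?_, fun hφ => ?_⟩
  · have := LinearIndependent.pair_iff.1 (linearIndependent_of_wedge_ne_zero h) (-φ v) (φ u)
      (by rw [← h0, wedge_apply]; module)
    exact Fin.forall_fin_two.2 ⟨this.2, neg_eq_zero.1 this.1⟩
  · have hu : φ u = 0 := hφ 0
    have hv : φ v = 0 := hφ 1
    rw [wedge_apply, hu, hv, zero_smul, zero_smul, sub_zero]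

theorem exists_eq_smul_wedge {u v : V} (huv : wedge K u v ≠ 0) (hN : N ∈ bivectors K V)
    (hker : ∀ φ, wedge K u v φ = 0 → N φ = 0) : ∃ c : K, N = c • wedge K u v := by
  choose d hd using fun i => exists_dual_apply_eq_of_linearIndependent
    (linearIndependent_of_wedge_ne_zero huv) fun j => if i = j then 1 else 0
  refine ⟨d 1 (N (d 0)), LinearMap.ext fun χ => ?_⟩
  rw [bivectors_apply_eq_sum hd hN fun φ hφ => hker φ ((wedge_apply_eq_zero_iff huv).2 hφ)]
  simp only [Fin.sum_univ_two, dual_apply_self_of_mem_bivectors hN,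
    dual_apply_swap_of_mem_bivectors hN (d 0) (d 1), Matrix.cons_val_zero, Matrix.cons_val_one,
    Matrix.cons_val_fin_one, LinearMap.smul_apply, wedge_apply]
  module

theorem exists_wedge_eq_wedge {w z : V} {d e : K} (h : d • w + e • z ≠ 0) :
    ∃ y, wedge K (d • w + e • z) y = wedge K w z := by
  rcases eq_or_ne d 0 with rfl | hd
  · have he : e ≠ 0 := fun he => h (by simp [he])
    refine ⟨-e⁻¹ • w, LinearMap.ext fun φ => ?_⟩
    simp only [wedge_apply, map_add, map_smul, smul_eq_mul]
    match_scalars <;> field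
  · refine ⟨d⁻¹ • z, LinearMap.ext fun φ => ?_⟩
    simp only [wedge_apply, map_add, map_smul, smul_eq_mul]
    match_scalars <;> field

theorem exists_apply_eq_of_forall_apply_eq_zero (hN : N ∈ bivectors K V)
    (hN0 : N ≠ 0) {u v : V} (huv : wedge K u v ≠ 0) {ψ : Dual K V} (hψu : ψ u = 1)
    (hψv : ψ v = 0) (hNψ : N ψ = 0)
    (hzero : ∀ φ χ, wedge K u v φ = 0 → wedge K u v χ = 0 → χ (N φ) = 0) :
    ∃ χ, N χ = v := by
  obtain ⟨τ, hτ, hNτ⟩ : ∃ τ, wedge K u v τ = 0 ∧ N τ ≠ 0 := by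
    by_contra! hker
    obtain ⟨c, rfl⟩ := exists_eq_smul_wedge huv hN hker
    have hcv : c • v = 0 := by simpa [hψu, hψv] using hNψ
    have hv : v ≠ 0 := by
      rintro rfl
      exact huv (wedge_zero u)
    exact hN0 (by rw [(smul_eq_zero.1 hcv).resolve_right hv, zero_smul])
  have hspan : N τ ∈ Submodule.span K {v} := mem_span_of_forall_dual fun σ hσ => by
    have hσv : σ v = 0 := hσ v rfl
    have h0 := hzero τ (σ - σ u • ψ) hτ (by simp [hψu, hψv, hσv])
    simpa [dual_apply_eq_zero_of_mem_bivectors hN hNψ] using h0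
  obtain ⟨c, hc⟩ := Submodule.mem_span_singleton.1 hspan
  have hc0 : c ≠ 0 := by
    rintro rfl
    exact hNτ (by rw [← hc, zero_smul])
  exact ⟨c⁻¹ • τ, by rw [map_smul, ← hc, inv_smul_smul₀ hc0]⟩

end Coordinates

section NormalForms

/-- The eight normal forms of a pair of bivectors with respect to five vectors `b 0, …, b 4`, where
`m` is the product which plays the role of `∧`. -/
def normalForm {V M : Type*} [Zero M] [Add M] (m : V → V → M) (b : Fin 5 → V) :
    Fin 8 → Fin 2 → M
  | 0 => ![0, 0]
  | 1 => ![m (b 3) (b 4), 0]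
  | 2 => ![m (b 1) (b 2) + m (b 3) (b 4), 0]
  | 3 => ![m (b 2) (b 3), m (b 3) (b 4)]
  | 4 => ![m (b 1) (b 2), m (b 3) (b 4)]
  | 5 => ![m (b 1) (b 2) + m (b 3) (b 4), m (b 1) (b 3)]
  | 6 => ![m (b 0) (b 1) + m (b 2) (b 3), m (b 3) (b 4)]
  | 7 => ![m (b 0) (b 1) + m (b 2) (b 3), m (b 1) (b 2) + m (b 3) (b 4)]

variable {K V : Type*} [Field K] [AddCommGroup V] [Module K V]

/-- The pair `(A, B)` becomes one of the normal forms after subtracting a multiple of `B` from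
`A`. -/
def IsNormalizable (A B : Dual K V →ₗ[K] V) : Prop :=
  ∃ (k : Fin 8) (b : Basis (Fin 5) K V) (x : K),
    A = normalForm (wedge K) b k 0 + x • normalForm (wedge K) b k 1 ∧
      B = normalForm (wedge K) b k 1

variable [FiniteDimensional K V]

theorem isNormalizable_wedge_zero (hV : finrank K V = 5) {u v : V}
    (h : LinearIndependent K ![u, v]) : IsNormalizable (wedge K u v) 0 := by
  obtain ⟨b, hb⟩ := exists_basis_natAdd (k := 3) h hV
  have h3 : b 3 = u := hb 0
  have h4 : b 4 = v := hb 1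
  exact ⟨1, b, 0, by simp [normalForm, h3, h4]⟩

theorem isNormalizable_wedge_add_wedge_zero (hV : finrank K V = 5) {u v w z : V}
    (h : LinearIndependent K ![u, v, w, z]) : IsNormalizable (wedge K u v + wedge K w z) 0 := by
  obtain ⟨b, hb⟩ := exists_basis_natAdd (k := 1) h hV
  have h1 : b 1 = u := hb 0
  have h2 : b 2 = v := hb 1
  have h3 : b 3 = w := hb 2
  have h4 : b 4 = z := hb 3
  exact ⟨2, b, 0, by simp [normalForm, h1, h2, h3, h4]⟩

theorem isNormalizable_wedge_wedge (hV : finrank K V = 5) {a u v : V}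
    (h : LinearIndependent K ![a, u, v]) : IsNormalizable (wedge K a u) (wedge K u v) := by
  obtain ⟨b, hb⟩ := exists_basis_natAdd (k := 2) h hV
  have h2 : b 2 = a := hb 0
  have h3 : b 3 = u := hb 1
  have h4 : b 4 = v := hb 2
  exact ⟨3, b, 0, by simp [normalForm, h2, h3, h4]⟩

theorem isNormalizable_wedge_add_smul_wedge (hV : finrank K V = 5) {p q u v : V}
    (h : LinearIndependent K ![p, q, u, v]) (x : K) :
    IsNormalizable (wedge K p q + x • wedge K u v) (wedge K u v) := by
  obtain ⟨b, hb⟩ := exists_basis_natAdd (k := 1) h hV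
  have h1 : b 1 = p := hb 0
  have h2 : b 2 = q := hb 1
  have h3 : b 3 = u := hb 2
  have h4 : b 4 = v := hb 3
  exact ⟨4, b, x, by simp [normalForm, h1, h2, h3, h4]⟩

theorem isNormalizable_wedge_add_wedge_wedge (hV : finrank K V = 5) {u a v s : V}
    (h : LinearIndependent K ![u, a, v, s]) :
    IsNormalizable (wedge K u a + wedge K v s) (wedge K u v) := by
  obtain ⟨b, hb⟩ := exists_basis_natAdd (k := 1) h hV
  have h1 : b 1 = u := hb 0
  have h2 : b 2 = a := hb 1
  have h3 : b 3 = v := hb 2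
  have h4 : b 4 = s := hb 3
  exact ⟨5, b, 0, by simp [normalForm, h1, h2, h3, h4]⟩

theorem isNormalizable_wedge_add_wedge_add_smul_wedge (hV : finrank K V = 5) {p q r u v : V}
    (h : LinearIndependent K ![p, q, r, u, v]) (x : K) :
    IsNormalizable (wedge K p q + wedge K r u + x • wedge K u v) (wedge K u v) := by
  obtain ⟨b, hb⟩ := exists_basis_natAdd (k := 0) h hV
  have h0 : b 0 = p := hb 0
  have h1 : b 1 = q := hb 1
  have h2 : b 2 = r := hb 2
  have h3 : b 3 = u := hb 3
  have h4 : b 4 = v := hb 4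
  exact ⟨6, b, x, by simp [normalForm, h0, h1, h2, h3, h4]⟩

theorem isNormalizable_wedge_add_wedge_add_smul (hV : finrank K V = 5) {a u v w z : V}
    (h : LinearIndependent K ![a, u, v, w, z]) (x : K) :
    IsNormalizable (wedge K a u + wedge K v w + x • (wedge K u v + wedge K w z))
      (wedge K u v + wedge K w z) := by
  obtain ⟨b, hb⟩ := exists_basis_natAdd (k := 0) h hV
  have h0 : b 0 = a := hb 0
  have h1 : b 1 = u := hb 1
  have h2 : b 2 = v := hb 2
  have h3 : b 3 = w := hb 3
  have h4 : b 4 = z := hb 4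
  exact ⟨7, b, x, by simp [normalForm, h0, h1, h2, h3, h4]⟩

variable {A B : Dual K V →ₗ[K] V}

theorem isNormalizable_zero_right (hV : finrank K V = 5) (hA : A ∈ bivectors K V) :
    IsNormalizable A 0 := by
  rcases eq_or_ne A 0 with rfl | hA0
  · exact ⟨0, finBasisOfFinrankEq K V hV, 0, by simp [normalForm]⟩
  by_cases hdec : IsDecomposable A
  · obtain ⟨u, v, rfl⟩ := hdec
    exact isNormalizable_wedge_zero hV (linearIndependent_of_wedge_ne_zero hA0)
  · obtain ⟨φ, hφ⟩ := DFunLike.exists_ne hA0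
    obtain ⟨v, w, z, hA'⟩ := exists_eq_wedge_add_wedge hV.le hA hdec hφ
    rw [hA'] at hdec ⊢
    exact isNormalizable_wedge_add_wedge_zero hV (linearIndependent_of_not_isDecomposable hdec)

theorem exists_eq_wedge_add_smul_add_wedge (hV : finrank K V = 5) (hA : A ∈ bivectors K V)
    {φ ψ : Dual K V} (h : ψ (A φ) = 1) {r u v : V} (hLI : LinearIndependent K ![r, u, v])
    (hφ : ∀ i, φ (![r, u, v] i) = 0) (hψ : ∀ i, ψ (![r, u, v] i) = 0) :
    ∃ k d e : K, A = wedge K (A φ) (A ψ) + (k • wedge K u v + wedge K r (d • u + e • v)) := by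
  obtain ⟨N, hN, hAN, hNφ, hNψ, -⟩ := exists_eq_wedge_add hA h
  have hφψ : φ (A ψ) = -1 := by rw [dual_apply_swap_of_mem_bivectors hA, h]
  have hker : ∀ χ : Dual K V, (∀ i, χ (![r, u, v] i) = 0) → N χ = 0 := fun χ hχ => by
    have hχ : χ = χ (A φ) • ψ - χ (A ψ) • φ :=
      dual_ext_of_linearIndependent
        (linearIndependent_vecCons_vecCons_of_mem_bivectors hA h hLI hφ hψ) hV
        (Fin.cases (by simp [h, dual_apply_self_of_mem_bivectors hA])
          (Fin.cases (by simp [hφψ, dual_apply_self_of_mem_bivectors hA]) fun i => by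
            simp [hφ i, hψ i, hχ i]))
    rw [hχ, map_sub, map_smul, map_smul, hNφ, hNψ, smul_zero, smul_zero, sub_zero]
  obtain ⟨k, d, e, hkde⟩ := exists_eq_smul_wedge_add_wedge hLI hN hker
  exact ⟨k, d, e, hkde ▸ hAN⟩

theorem exists_dual_apply_ne_zero_of_mem_bivectors (hA : A ∈ bivectors K V) {φ ψ : Dual K V}
    (h : ψ (A φ) = 1) {n : ℕ} (v : Fin n → V) (hn : n + 2 < finrank K V) :
    ∃ (ρ : Dual K V) (r : V), ρ r ≠ 0 ∧ φ r = 0 ∧ ψ r = 0 ∧ ρ (A φ) = 0 ∧ ρ (A ψ) = 0 ∧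
      ∀ i, ρ (v i) = 0 := by
  obtain ⟨ρ, hρ0, hρ⟩ := exists_dual_ne_zero_of_card_lt_finrank
    (Matrix.vecCons (A φ) (Matrix.vecCons (A ψ) v)) hn
  obtain ⟨s, hs⟩ := DFunLike.exists_ne hρ0
  have hρp : ρ (A φ) = 0 := hρ 0
  have hρq : ρ (A ψ) = 0 := hρ 1
  have hφψ : φ (A ψ) = -1 := by rw [dual_apply_swap_of_mem_bivectors hA, h]
  have hφφ := dual_apply_self_of_mem_bivectors hA φ
  have hψψ := dual_apply_self_of_mem_bivectors hA ψ
  -- The projection of `s` along the hyperbolic plane spanned by `A φ` and `A ψ`.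
  refine ⟨ρ, s + φ s • A ψ - ψ s • A φ, ?_, ?_, ?_, hρp, hρq, fun i => hρ i.succ.succ⟩
  · simpa [hρp, hρq] using hs
  · simp [hφψ, hφφ]
  · simp [h, hψψ]

theorem isNormalizable_of_apply_apply_eq_one (hV : finrank K V = 5) (hA : A ∈ bivectors K V)
    {u v : V} (huv : wedge K u v ≠ 0) {φ ψ : Dual K V} (hφ : wedge K u v φ = 0)
    (hψ : wedge K u v ψ = 0) (h : ψ (A φ) = 1) : IsNormalizable A (wedge K u v) := by
  obtain ⟨ρ, r, hρr, hφr, hψr, -, -, hρ⟩ :=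
    exists_dual_apply_ne_zero_of_mem_bivectors hA h ![u, v] (by omega)
  obtain ⟨k, d, e, hA'⟩ := exists_eq_wedge_add_smul_add_wedge hV hA h
    (linearIndependent_vecCons_of_dual (linearIndependent_of_wedge_ne_zero huv) hρ hρr)
    (Fin.cases hφr ((wedge_apply_eq_zero_iff huv).1 hφ))
    (Fin.cases hψr ((wedge_apply_eq_zero_iff huv).1 hψ))
  by_cases hu₁ : d • u + e • v = 0
  · rw [hA', hu₁, wedge_zero, add_zero]
    exact isNormalizable_wedge_add_smul_wedge hV
      (linearIndependent_vecCons_vecCons_of_mem_bivectors hA h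
        (linearIndependent_of_wedge_ne_zero huv) ((wedge_apply_eq_zero_iff huv).1 hφ)
        ((wedge_apply_eq_zero_iff huv).1 hψ)) k
  · obtain ⟨v₁, hv₁⟩ := exists_wedge_eq_wedge hu₁
    have hρuv := (wedge_apply_eq_zero_iff huv).2 hρ
    rw [← hv₁] at huv hφ hψ hρuv hA' ⊢
    have hLI := linearIndependent_vecCons_vecCons_of_mem_bivectors hA h
      (linearIndependent_vecCons_of_dual (linearIndependent_of_wedge_ne_zero huv)
        ((wedge_apply_eq_zero_iff huv).1 hρuv) hρr)
      (Fin.cases hφr ((wedge_apply_eq_zero_iff huv).1 hφ))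
      (Fin.cases hψr ((wedge_apply_eq_zero_iff huv).1 hψ))
    rw [show A = wedge K (A φ) (A ψ) + wedge K r (d • u + e • v) +
      k • wedge K (d • u + e • v) v₁ by rw [add_assoc, add_comm (wedge K r _)]; exact hA']
    exact isNormalizable_wedge_add_wedge_add_smul_wedge hV hLI k

theorem isNormalizable_of_apply_eq (hV : finrank K V = 5) (hA : A ∈ bivectors K V)
    {φ : Dual K V} {u v : V} (huv : wedge K u v ≠ 0) (hφ : wedge K u v φ = 0) (hAφ : A φ = u)
    (hzero : ∀ φ ψ, wedge K u v φ = 0 → wedge K u v ψ = 0 → ψ (A φ) = 0) :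
    IsNormalizable A (wedge K u v) := by
  have hLI := linearIndependent_of_wedge_ne_zero huv
  have hφuv := (wedge_apply_eq_zero_iff huv).1 hφ
  obtain ⟨ψ, hψ⟩ := exists_dual_apply_eq_of_linearIndependent hLI ![1, 0]
  have hψu : ψ u = 1 := hψ 0
  have hψv : ψ v = 0 := hψ 1
  have h : ψ (A φ) = 1 := hAφ ▸ hψu
  obtain ⟨N, hN, hAN, hNφ, hNψ, -⟩ := exists_eq_wedge_add hA h
  rw [hAφ] at hAN
  rcases eq_or_ne N 0 with rfl | hN0
  · have hφψ : φ (-A ψ) = 1 := by rw [map_neg, ← dual_apply_swap_of_mem_bivectors hA, h]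
    rw [show A = wedge K (-A ψ) u by
      conv_lhs => rw [hAN]
      ext χ
      simp [neg_add_eq_sub]]
    exact isNormalizable_wedge_wedge hV
      (linearIndependent_vecCons_of_dual hLI hφuv (hφψ.trans_ne one_ne_zero))
  · have hzero' : ∀ σ χ, wedge K u v σ = 0 → wedge K u v χ = 0 → χ (N σ) = 0 := by
      intro σ χ hσ hχ
      have hσ' := (wedge_apply_eq_zero_iff huv).1 hσ 0
      have hχ' := (wedge_apply_eq_zero_iff huv).1 hχ 0
      simpa [eq_sub_of_add_eq' hAN.symm, show σ u = 0 from hσ', show χ u = 0 from hχ'] using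
        hzero σ χ hσ hχ
    obtain ⟨χ, hχ⟩ := exists_apply_eq_of_forall_apply_eq_zero hN hN0 huv hψu hψv hNψ hzero'
    obtain ⟨ω, hω⟩ := exists_dual_apply_eq_of_linearIndependent hLI ![0, 1]
    have hωv : ω (N χ) = 1 := hχ ▸ hω 1
    have hLI' := linearIndependent_of_mem_bivectors_of_mem_bivectors hA hN h hωv hNφ hNψ
      (linearIndependent_empty_type (v := ![])) finZeroElim finZeroElim finZeroElim finZeroElim
    rw [eq_wedge_of_eq_wedge_add hV.le hA hN h hNφ hNψ hωv, hχ] at hAN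
    rw [hAφ, hχ] at hLI'
    exact hAN ▸ isNormalizable_wedge_add_wedge_wedge hV hLI'

theorem isNormalizable_of_isDecomposable (hV : finrank K V = 5) (hA : A ∈ bivectors K V)
    (hB : IsDecomposable B) (hB0 : B ≠ 0) (hAB : ∀ c : K, A ≠ c • B) : IsNormalizable A B := by
  obtain ⟨u, v, rfl⟩ := hB
  by_cases hzero : ∀ φ ψ, wedge K u v φ = 0 → wedge K u v ψ = 0 → ψ (A φ) = 0
  · obtain ⟨φ, hφ, hAφ⟩ : ∃ φ, wedge K u v φ = 0 ∧ A φ ≠ 0 := by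
      by_contra! hker
      obtain ⟨c, hc⟩ := exists_eq_smul_wedge hB0 hA hker
      exact hAB c hc
    obtain ⟨d, e, hde⟩ : ∃ d e : K, d • u + e • v = A φ :=
      Submodule.mem_span_pair.1 <| mem_span_of_forall_dual fun ψ hψ => hzero φ ψ hφ <|
        (wedge_apply_eq_zero_iff hB0).2 (Fin.forall_fin_two.2 ⟨hψ u (by simp), hψ v (by simp)⟩)
    rw [← hde] at hAφ
    obtain ⟨y, hy⟩ := exists_wedge_eq_wedge hAφ
    rw [← hy] at hB0 hφ hzero ⊢
    exact isNormalizable_of_apply_eq hV hA hB0 hφ hde.symm hzero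
  · push Not at hzero
    obtain ⟨φ, ψ, hφ, hψ, h⟩ := hzero
    refine isNormalizable_of_apply_apply_eq_one hV hA hB0 hφ (ψ := (ψ (A φ))⁻¹ • ψ) ?_ ?_
    · rw [map_smul, hψ, smul_zero]
    · exact inv_mul_cancel₀ h

end NormalForms

section Indecomposable

variable {K V : Type*} [Field K] [AddCommGroup V] [Module K V] {A B M : Dual K V →ₗ[K] V}

theorem mem_range_iff_of_mem_bivectors (hM : M ∈ bivectors K V) {x : V} :
    x ∈ LinearMap.range M ↔ ∀ φ, M φ = 0 → φ x = 0 := by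
  constructor
  · rintro ⟨ψ, rfl⟩ φ hφ
    exact dual_apply_eq_zero_of_mem_bivectors hM hφ ψ
  · intro h
    rw [← (LinearMap.range M).span_eq]
    refine mem_span_of_forall_dual fun φ hφ =>
      h φ ((forall_dual_apply_eq_zero_iff K _).1 fun ψ => ?_)
    rw [dual_apply_swap_of_mem_bivectors hM, hφ _ ⟨ψ, rfl⟩, neg_zero]

theorem wedge_add_wedge_apply_eq_zero_iff {u v w z : V} (hLI : LinearIndependent K ![u, v, w, z])
    {φ : Dual K V} :
    (wedge K u v + wedge K w z) φ = 0 ↔ ∀ i, φ (![u, v, w, z] i) = 0 := by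
  constructor
  · intro h
    have hcoeff := Fintype.linearIndependent_iff.1 hLI ![-φ v, φ u, -φ z, φ w] (by
      rw [← h, Fin.sum_univ_four]
      simp only [Matrix.cons_val, LinearMap.add_apply, wedge_apply]
      module)
    have hv : φ v = 0 := neg_eq_zero.1 (hcoeff 0)
    have hu : φ u = 0 := hcoeff 1
    have hz : φ z = 0 := neg_eq_zero.1 (hcoeff 2)
    have hw : φ w = 0 := hcoeff 3
    simp [Fin.forall_fin_succ, hu, hv, hw, hz]
  · intro h
    have hu : φ u = 0 := h 0
    have hv : φ v = 0 := h 1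
    have hw : φ w = 0 := h 2
    have hz : φ z = 0 := h 3
    simp [hu, hv, hw, hz]

theorem exists_apply_eq_smul_apply_of_range_le [IsAlgClosed K] [FiniteDimensional K V] {W : Type*}
    [AddCommGroup W] [Module K W] {f g : W →ₗ[K] V} (hg : g ≠ 0)
    (h : LinearMap.range f ≤ LinearMap.range g) : ∃ (w : W) (x : K), g w ≠ 0 ∧ f w = x • g w := by
  obtain ⟨s, hs⟩ := g.rangeRestrict.exists_rightInverse_of_surjective g.range_rangeRestrict
  have : Nontrivial (LinearMap.range g) :=
    Submodule.nontrivial_iff_ne_bot.2 (mt LinearMap.range_eq_bot.1 hg)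
  obtain ⟨x, hx⟩ := Module.End.exists_eigenvalue
    ((f ∘ₗ s).codRestrict (LinearMap.range g) fun y => h ⟨s y, rfl⟩)
  obtain ⟨y, hy⟩ := hx.exists_hasEigenvector
  have hgs : g (s y) = y := congrArg Subtype.val (LinearMap.congr_fun hs y)
  refine ⟨s y, x, ?_, ?_⟩
  · rw [hgs]
    exact fun h0 => hy.2 (Subtype.ext h0)
  · rw [hgs]
    exact congrArg Subtype.val hy.apply_eq_smul

variable [FiniteDimensional K V]

theorem exists_ne_zero_apply_eq_zero_of_mem_bivectors (hV : finrank K V = 5)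
    (hM : M ∈ bivectors K V) (hdec : ¬ IsDecomposable M) : ∃ φ, φ ≠ 0 ∧ M φ = 0 := by
  have hM0 : M ≠ 0 := by
    rintro rfl
    exact hdec isDecomposable_zero
  obtain ⟨φ, hφ⟩ := DFunLike.exists_ne hM0
  obtain ⟨v, w, z, h⟩ := exists_eq_wedge_add_wedge hV.le hM hdec hφ
  obtain ⟨ψ, hψ0, hψ⟩ :=
    exists_dual_ne_zero_of_card_lt_finrank (K := K) ![M φ, v, w, z] (by omega)
  rw [h] at hdec
  refine ⟨ψ, hψ0, ?_⟩
  rw [h]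
  exact (wedge_add_wedge_apply_eq_zero_iff (linearIndependent_of_not_isDecomposable hdec)).2 hψ

theorem exists_smul_eq_of_not_isDecomposable (hV : finrank K V ≤ 5) (hM : M ∈ bivectors K V)
    (hdec : ¬ IsDecomposable M) {φ χ : Dual K V} (hφ0 : φ ≠ 0) (hφ : M φ = 0) (hχ : M χ = 0) :
    ∃ c : K, c • φ = χ := by
  have hrange : 3 < finrank K (LinearMap.range M) :=
    not_le.1 (mt (isDecomposable_of_finrank_range_le hM) hdec)
  have hsum := M.finrank_range_add_finrank_ker
  rw [Subspace.dual_finrank_eq] at hsum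
  have hle : finrank K (LinearMap.ker M) ≤ 1 := by omega
  have hφ' : (⟨φ, hφ⟩ : LinearMap.ker M) ≠ 0 := fun h => hφ0 (congrArg Subtype.val h)
  have hker : finrank K (LinearMap.ker M) = 1 :=
    hle.antisymm (Submodule.one_le_finrank_iff.2 ((Submodule.ne_bot_iff _).2 ⟨φ, hφ, hφ0⟩))
  obtain ⟨c, hc⟩ :=
    (finrank_eq_one_iff_of_nonzero' (V := LinearMap.ker M) ⟨φ, hφ⟩ hφ').1 hker ⟨χ, hχ⟩
  exact ⟨c, congrArg Subtype.val hc⟩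

theorem exists_apply_eq_zero_and_apply_ne_zero [IsAlgClosed K] (hV : finrank K V = 5)
    (hA : A ∈ bivectors K V) (hB : B ∈ bivectors K V) (hBdec : ¬ IsDecomposable B)
    (hdec : ∀ x : K, ¬ IsDecomposable (A - x • B)) : ∃ φ, B φ = 0 ∧ A φ ≠ 0 := by
  by_contra! hker
  have hB0 : B ≠ 0 := by
    rintro rfl
    exact hBdec isDecomposable_zero
  have hrange : LinearMap.range A ≤ LinearMap.range B := fun x hx =>
    (mem_range_iff_of_mem_bivectors hB).2 fun φ hφ =>
      (mem_range_iff_of_mem_bivectors hA).1 hx φ (hker φ hφ)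
  obtain ⟨ψ, x, hψ, hx⟩ := exists_apply_eq_smul_apply_of_range_le hB0 hrange
  obtain ⟨φ, hφ0, hφ⟩ := exists_ne_zero_apply_eq_zero_of_mem_bivectors hV hB hBdec
  obtain ⟨c, rfl⟩ := exists_smul_eq_of_not_isDecomposable hV.le
    (sub_mem hA (Submodule.smul_mem _ x hB)) (hdec x) hφ0
    (show (A - x • B) φ = 0 by simp [hφ, hker φ hφ]) (show (A - x • B) ψ = 0 by simp [hx])
  exact hψ (by rw [map_smul, hφ, smul_zero])

theorem exists_eq_wedge_add_smul_wedge_add_wedge (hV : finrank K V ≤ 5) (hA : A ∈ bivectors K V)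
    {φ : Dual K V} {v w z : V} (hB : B ∈ bivectors K V) (hBdec : ¬ IsDecomposable B)
    (hBA : B = wedge K (A φ) v + wedge K w z) (hφ0 : φ ≠ 0) (hφ : B φ = 0) :
    ∃ (g : V) (k d e : K), φ g = -1 ∧
      A = wedge K (A φ) g + (k • wedge K w z + wedge K v (d • w + e • z)) := by
  have hLI : LinearIndependent K ![A φ, v, w, z] :=
    linearIndependent_of_not_isDecomposable (hBA ▸ hBdec)
  obtain ⟨α, hα⟩ := exists_dual_apply_eq_of_linearIndependent hLI ![1, 0, 0, 0]
  have hαφ : α (A φ) = 1 := hα 0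
  have hαvwz : ∀ i, α (![v, w, z] i) = 0 := fun i => (hα i.succ).trans (by fin_cases i <;> rfl)
  obtain ⟨N, hN, hAN, hNφ, hNα, -⟩ := exists_eq_wedge_add hA hαφ
  have hker : ∀ χ : Dual K V, (∀ i, χ (![v, w, z] i) = 0) → N χ = 0 := fun χ hχ => by
    have hBχ : B (χ - χ (A φ) • α) = 0 := by
      rw [hBA]
      refine (wedge_add_wedge_apply_eq_zero_iff hLI).2 (Fin.cases ?_ fun i => ?_)
      · simp [hαφ]
      · simp [hχ i, hαvwz i]
    obtain ⟨c, hc⟩ := exists_smul_eq_of_not_isDecomposable hV hB hBdec hφ0 hφ hBχ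
    rw [← sub_add_cancel χ (χ (A φ) • α), ← hc, map_add, map_smul, map_smul, hNφ, hNα, smul_zero,
      smul_zero, add_zero]
  obtain ⟨k, d, e, hkde⟩ := exists_eq_smul_wedge_add_wedge (linearIndependent_finCons.1 hLI).1 hN
    hker
  exact ⟨A α, k, d, e, by rw [dual_apply_swap_of_mem_bivectors hA, hαφ], hkde ▸ hAN⟩

theorem isNormalizable_of_not_isDecomposable [IsAlgClosed K] (hV : finrank K V = 5)
    (hA : A ∈ bivectors K V) (hB : B ∈ bivectors K V) (hBdec : ¬ IsDecomposable B)
    (hdec : ∀ x : K, ¬ IsDecomposable (A - x • B)) : IsNormalizable A B := by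
  obtain ⟨φ, hφ, hAφ⟩ := exists_apply_eq_zero_and_apply_ne_zero hV hA hB hBdec hdec
  have hφ0 : φ ≠ 0 := by
    rintro rfl
    exact hAφ (map_zero A)
  have hmem : A φ ∈ LinearMap.range B := (mem_range_iff_of_mem_bivectors hB).2 fun χ hχ => by
    obtain ⟨c, rfl⟩ := exists_smul_eq_of_not_isDecomposable hV.le hB hBdec hφ0 hφ hχ
    rw [LinearMap.smul_apply, dual_apply_self_of_mem_bivectors hA, smul_zero]
  obtain ⟨ψ, hψ⟩ := hmem
  obtain ⟨v, w, z, hBA⟩ := exists_eq_wedge_add_wedge hV.le hB hBdec (hψ ▸ hAφ)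
  rw [hψ] at hBA
  obtain ⟨g, k, d, e, hg, hAg⟩ :=
    exists_eq_wedge_add_smul_wedge_add_wedge hV.le hA hB hBdec hBA hφ0 hφ
  have hw : d • w + e • z ≠ 0 := fun hw => hdec k ⟨A φ, g - k • v, by
    conv_lhs => rw [hAg, hBA, hw, wedge_zero, add_zero]
    ext χ
    simp only [LinearMap.sub_apply, LinearMap.add_apply, LinearMap.smul_apply, wedge_apply,
      map_sub, map_smul, smul_eq_mul]
    module⟩
  obtain ⟨z', hz'⟩ := exists_wedge_eq_wedge hw
  rw [← hz'] at hBA hAg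
  have hLI := linearIndependent_of_not_isDecomposable (hBA ▸ hBdec)
  have hφB := (wedge_add_wedge_apply_eq_zero_iff hLI).1 (hBA ▸ hφ)
  have hφv : φ v = 0 := hφB 1
  have hA' : A = wedge K (k • v - g) (A φ) + wedge K v (d • w + e • z) + k • B := by
    conv_lhs => rw [hAg]
    rw [hBA]
    ext χ
    simp only [LinearMap.add_apply, LinearMap.smul_apply, wedge_apply, map_sub, map_add, map_smul,
      smul_eq_mul]
    module
  rw [hA', hBA]
  exact isNormalizable_wedge_add_wedge_add_smul hV
    (linearIndependent_vecCons_of_dual hLI hφB (by simp [hφv, hg])) k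

end Indecomposable

section Pencil

variable {K V F : Type*} [Field K] [AddCommGroup V] [Module K V] [AddCommGroup F] [Module K F]

/-- The pencil `X` of bivectors takes the `k`-th normal form in suitable bases. -/
def HasNormalForm (X : F →ₗ[K] Dual K V →ₗ[K] V) (k : Fin 8) : Prop :=
  ∃ (c : Basis (Fin 2) K F) (b : Basis (Fin 5) K V), ∀ i, X (c i) = normalForm (wedge K) b k i

variable {X : F →ₗ[K] Dual K V →ₗ[K] V}

theorem linearIndependent_pair_sub_smul {ξ η : F} (h : LinearIndependent K ![ξ, η]) (x : K) :
    LinearIndependent K ![ξ - x • η, η] := by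
  rw [sub_eq_add_neg, ← neg_smul]
  exact (LinearIndependent.pair_add_smul_left_iff (-x)).2 h

theorem exists_hasNormalForm_of_isNormalizable (hF : finrank K F = 2) {ξ η : F}
    (hLI : LinearIndependent K ![ξ, η]) (h : IsNormalizable (X ξ) (X η)) :
    ∃ k, HasNormalForm X k := by
  obtain ⟨k, b, x, hξ, hη⟩ := h
  refine ⟨k, basisOfLinearIndependentOfCardEqFinrank
    (linearIndependent_pair_sub_smul hLI x) (by simp [hF]), b, Fin.forall_fin_two.2 ⟨?_, ?_⟩⟩
  · simp [hξ, ← hη]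
  · simp [hη]

theorem exists_hasNormalForm [IsAlgClosed K] [FiniteDimensional K V] (hV : finrank K V = 5)
    (hF : finrank K F = 2) (hX : ∀ ξ, X ξ ∈ bivectors K V) : ∃ k, HasNormalForm X k := by
  have hpair : ∀ {η : F}, η ≠ 0 → ∃ ξ, LinearIndependent K ![ξ, η] := fun hη => by
    obtain ⟨ξ, hξ⟩ := exists_linearIndependent_pair_of_one_lt_finrank (R := K) (by omega) hη
    exact ⟨ξ, LinearIndependent.pair_symm_iff.1 hξ⟩
  have hne : ∀ {ξ η : F}, LinearIndependent K ![ξ, η] → ∀ x : K, ξ - x • η ≠ 0 := fun h x =>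
    (linearIndependent_pair_sub_smul h x).ne_zero 0
  by_cases hker : ∃ η ≠ 0, X η = 0
  · obtain ⟨η, hη, hXη⟩ := hker
    obtain ⟨ξ, hLI⟩ := hpair hη
    exact exists_hasNormalForm_of_isNormalizable hF hLI
      (hXη ▸ isNormalizable_zero_right hV (hX ξ))
  push Not at hker
  by_cases hdec : ∃ η ≠ 0, IsDecomposable (X η)
  · obtain ⟨η, hη, hXη⟩ := hdec
    obtain ⟨ξ, hLI⟩ := hpair hη
    refine exists_hasNormalForm_of_isNormalizable hF hLI
      (isNormalizable_of_isDecomposable hV (hX ξ) hXη (hker η hη) fun c hc => ?_)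
    exact hker _ (hne hLI c) (by rw [map_sub, map_smul, hc, sub_self])
  · push Not at hdec
    have : Nontrivial F := nontrivial_of_finrank_pos (R := K) (by omega)
    obtain ⟨η, hη⟩ := exists_ne (0 : F)
    obtain ⟨ξ, hLI⟩ := hpair hη
    refine exists_hasNormalForm_of_isNormalizable hF hLI
      (isNormalizable_of_not_isDecomposable hV (hX ξ) (hX η) (hdec η hη) fun x => ?_)
    rw [← map_smul, ← map_sub]
    exact hdec _ (hne hLI x)

end Pencil

section Invariants

variable {K V F : Type*} [Field K] [AddCommGroup V] [Module K V] [AddCommGroup F] [Module K F]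

/-- The indices `j` such that `b j` occurs in the given normal form. -/
def supportIndices : Fin 8 → Finset (Fin 5) :=
  ![∅, {3, 4}, {1, 2, 3, 4}, {2, 3, 4}, {1, 2, 3, 4}, {1, 2, 3, 4}, Finset.univ, Finset.univ]

/-- The indices of those members of the given normal form which are a basis of the span of all
decomposable bivectors in its pencil. -/
def decomposableIndices : Fin 8 → Finset (Fin 2) :=
  ![∅, {0}, ∅, Finset.univ, Finset.univ, {1}, {1}, ∅]

theorem normalForm_apply_eq_zero_iff (b : Basis (Fin 5) K V) (k : Fin 8) (φ : Dual K V) :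
    (∀ i, normalForm (wedge K) b k i φ = 0) ↔ ∀ j ∈ supportIndices k, φ (b j) = 0 := by
  fin_cases k <;>
    simp [normalForm, supportIndices, b.ext_elem_iff, Fin.forall_fin_succ] <;>
    tauto

theorem linearIndepOn_normalForm (b : Basis (Fin 5) K V) (k : Fin 8) :
    LinearIndepOn K (normalForm (wedge K) b k) (decomposableIndices k) := by
  rw [linearIndepOn_finset_iff]
  intro g hg
  have hcoord : ∀ p q, b.coord p ((∑ i ∈ decomposableIndices k, g i • normalForm (wedge K) b k i)
      (b.coord q)) = 0 := fun p q => by rw [hg, LinearMap.zero_apply, map_zero]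
  clear hg
  fin_cases k <;>
    simp_all [normalForm, decomposableIndices, Fin.forall_fin_succ]

theorem isDecomposable_normalForm (b : Fin 5 → V) (k : Fin 8) {i : Fin 2}
    (hi : i ∈ decomposableIndices k) :
    IsDecomposable (normalForm (wedge K) b k i) := by
  fin_cases k <;> fin_cases i <;> simp_all [normalForm, decomposableIndices, isDecomposable_wedge]

theorem smul_normalForm_eq_zero_of_isDecomposable (b : Basis (Fin 5) K V) (k : Fin 8)
    {x : Fin 2 → K} (h : IsDecomposable (∑ i, x i • normalForm (wedge K) b k i)) {i : Fin 2}
    (hi : i ∉ decomposableIndices k) : x i • normalForm (wedge K) b k i = 0 := by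
  have h1 := h.pluecker (b.coord 0) (b.coord 1) (b.coord 2) (b.coord 3)
  have h2 := h.pluecker (b.coord 1) (b.coord 2) (b.coord 3) (b.coord 4)
  fin_cases k <;> fin_cases i <;> simp_all [normalForm, decomposableIndices]

variable {X : F →ₗ[K] Dual K V →ₗ[K] V} {k l : Fin 8}

theorem HasNormalForm.finrank_commonKernel_add_card (h : HasNormalForm X k) :
    finrank K ↥(⨅ ξ, LinearMap.ker (X ξ)) + (supportIndices k).card = 5 := by
  obtain ⟨c, b, hcb⟩ := h
  have : FiniteDimensional K V := Module.Finite.of_basis b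
  have hker : ⨅ ξ, LinearMap.ker (X ξ) =
      (Submodule.span K (b '' supportIndices k)).dualAnnihilator := by
    ext φ
    have hmem : φ ∈ ⨅ ξ, LinearMap.ker (X ξ) ↔ ∀ i, normalForm (wedge K) b k i φ = 0 := by
      simp only [Submodule.mem_iInf, LinearMap.mem_ker, ← hcb]
      refine ⟨fun hφ i => hφ _, fun hφ ξ => ?_⟩
      rw [← c.sum_repr ξ, map_sum, LinearMap.sum_apply]
      exact Finset.sum_eq_zero fun i _ => by rw [map_smul, LinearMap.smul_apply, hφ, smul_zero]
    rw [hmem, normalForm_apply_eq_zero_iff, ← SetLike.mem_coe, Submodule.coe_dualAnnihilator_span]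
    simp [Set.subset_def]
  rw [hker, add_comm, ← finrank_span_image_of_linearIndepOn (b.linearIndependent.linearIndepOn _),
    Subspace.finrank_add_finrank_dualAnnihilator_eq, finrank_eq_card_basis b, Fintype.card_fin]

theorem HasNormalForm.finrank_span_isDecomposable (h : HasNormalForm X k) :
    finrank K (Submodule.span K {M | IsDecomposable M ∧ M ∈ LinearMap.range X}) =
      (decomposableIndices k).card := by
  obtain ⟨c, b, hcb⟩ := h
  have hspan : Submodule.span K {M | IsDecomposable M ∧ M ∈ LinearMap.range X} =
      Submodule.span K (normalForm (wedge K) b k '' decomposableIndices k) := by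
    refine le_antisymm (Submodule.span_le.2 ?_) (Submodule.span_mono ?_)
    · rintro _ ⟨hM, ξ, rfl⟩
      have hξ : X ξ = ∑ i, c.repr ξ i • normalForm (wedge K) b k i := by
        conv_lhs => rw [← c.sum_repr ξ, map_sum]
        simp only [map_smul, hcb]
      rw [hξ] at hM ⊢
      refine Submodule.sum_mem _ fun i _ => ?_
      by_cases hi : i ∈ decomposableIndices k
      · exact Submodule.smul_mem _ _ (Submodule.subset_span ⟨i, hi, rfl⟩)
      · rw [smul_normalForm_eq_zero_of_isDecomposable b k hM hi]
        exact Submodule.zero_mem _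
    · rintro _ ⟨i, hi, rfl⟩
      exact ⟨isDecomposable_normalForm b k hi, c i, hcb i⟩
  rw [hspan, finrank_span_image_of_linearIndepOn (linearIndepOn_normalForm b k)]

theorem eq_of_card_supportIndices_eq_of_card_decomposableIndices_eq :
    ∀ {k l : Fin 8}, (supportIndices k).card = (supportIndices l).card →
      (decomposableIndices k).card = (decomposableIndices l).card → k = l := by
  decide

theorem HasNormalForm.unique (hk : HasNormalForm X k) (hl : HasNormalForm X l) : k = l := by
  have hsupp := hk.finrank_commonKernel_add_card.trans hl.finrank_commonKernel_add_card.symm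
  have hdec := hk.finrank_span_isDecomposable.symm.trans hl.finrank_span_isDecomposable
  exact eq_of_card_supportIndices_eq_of_card_decomposableIndices_eq (add_left_cancel hsupp) hdec

end Invariants

section Contraction

variable {R V : Type*} [CommRing R] [AddCommGroup V] [Module R V]

/-- The contraction `φ ↦ φ ⌋ ω` of an element `ω` of the exterior algebra, projected to `V`. -/
def contraction : ExteriorAlgebra R V →ₗ[R] Dual R V →ₗ[R] V :=
  CliffordAlgebra.contractLeft.flip.compr₂ ExteriorAlgebra.ιInv

theorem contraction_ι_mul_ι (u v : V) :
    contraction (ExteriorAlgebra.ι R u * ExteriorAlgebra.ι R v) = wedge R u v := by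
  ext φ
  have h : CliffordAlgebra.contractLeft φ (ExteriorAlgebra.ι R u * ExteriorAlgebra.ι R v) =
      ExteriorAlgebra.ι R (φ u • v - φ v • u) := by
    rw [CliffordAlgebra.contractLeft_ι_mul, CliffordAlgebra.contractLeft_ι, ← Algebra.commutes,
      ← Algebra.smul_def, map_sub, map_smul, map_smul]
  exact (congrArg ExteriorAlgebra.ιInv h).trans (ExteriorAlgebra.ι_leftInverse _)

theorem ι_mul_ι_mem_exteriorPower (u v : V) :
    ExteriorAlgebra.ι R u * ExteriorAlgebra.ι R v ∈ ⋀[R]^2 V := by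
  rw [ExteriorAlgebra.exteriorPower, pow_two]
  exact Submodule.mul_mem_mul ⟨u, rfl⟩ ⟨v, rfl⟩

theorem exteriorPower_two_induction {p : ExteriorAlgebra R V → Prop}
    (mul : ∀ u v, p (ExteriorAlgebra.ι R u * ExteriorAlgebra.ι R v))
    (add : ∀ ω η, p ω → p η → p (ω + η)) {ω : ExteriorAlgebra R V} (hω : ω ∈ ⋀[R]^2 V) : p ω := by
  rw [ExteriorAlgebra.exteriorPower, pow_two] at hω
  refine Submodule.mul_induction_on hω ?_ add
  rintro _ ⟨u, rfl⟩ _ ⟨v, rfl⟩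
  exact mul u v

theorem contraction_mem_bivectors {ω : ExteriorAlgebra R V} (hω : ω ∈ ⋀[R]^2 V) :
    contraction ω ∈ bivectors R V := by
  refine exteriorPower_two_induction (p := fun ω => contraction ω ∈ bivectors R V)
    (fun u v => ?_) (fun _ _ h h' => ?_) hω
  · rw [contraction_ι_mul_ι]
    exact wedge_mem_bivectors u v
  · rw [map_add]
    exact add_mem h h'

section Basis

variable {I : Type*} [LinearOrder I] (b : Basis I R V)

theorem coord_wedge_coord_of_lt {p q i j : I} (hpq : p < q) (hij : i < j) :
    b.coord j (wedge R (b p) (b q) (b.coord i)) = if i = p ∧ j = q then 1 else 0 := by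
  have hne : ¬(i = q ∧ j = p) := fun ⟨hq, hp⟩ => (hq ▸ hp ▸ hij).not_gt hpq
  simp only [wedge_apply, map_sub, map_smul, Basis.coord_apply, Basis.repr_self,
    Finsupp.single_apply, smul_eq_mul]
  grind

variable [Fintype I]

theorem sum_coord_wedge_coord_smul_of_lt {M : Type*} [AddCommGroup M] [Module R M] {p q : I}
    (hpq : p < q) (m : I → I → M) :
    ∑ i, ∑ j with i < j, b.coord j (wedge R (b p) (b q) (b.coord i)) • m i j = m p q := by
  have hcoord : ∀ i, ∀ j ∈ Finset.univ.filter (i < ·),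
      b.coord j (wedge R (b p) (b q) (b.coord i)) • m i j =
        if i = p ∧ j = q then m i j else 0 := fun i j hij => by
    rw [coord_wedge_coord_of_lt b hpq (Finset.mem_filter.1 hij).2, ite_smul, one_smul, zero_smul]
  rw [Finset.sum_congr rfl fun i _ => Finset.sum_congr rfl (hcoord i)]
  rw [Finset.sum_eq_single p (fun i _ hi => Finset.sum_eq_zero fun j _ => if_neg fun h => hi h.1)
    (fun h => absurd (Finset.mem_univ p) h),
    Finset.sum_eq_single q (fun j _ hj => if_neg fun h => hj h.2) (fun h => absurd (by simpa) h),
    if_pos ⟨rfl, rfl⟩]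

theorem sum_contraction_smul_ι_mul_ι {ω : ExteriorAlgebra R V} (hω : ω ∈ ⋀[R]^2 V) :
    ∑ i, ∑ j with i < j, b.coord j (contraction ω (b.coord i)) •
      (ExteriorAlgebra.ι R (b i) * ExteriorAlgebra.ι R (b j)) = ω := by
  let product : V →ₗ[R] V →ₗ[R] ExteriorAlgebra R V :=
    (LinearMap.mul R (ExteriorAlgebra R V)).compl₁₂ (ExteriorAlgebra.ι R) (ExteriorAlgebra.ι R)
  let expansion : ExteriorAlgebra R V →ₗ[R] ExteriorAlgebra R V :=
    ∑ i, ∑ j with i < j, (b.coord j ∘ₗ contraction.flip (b.coord i)).smulRight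
      (product (b i) (b j))
  have hexp : ∀ ω, expansion ω = ∑ i, ∑ j with i < j,
      b.coord j (contraction ω (b.coord i)) • product (b i) (b j) := fun ω => by
    simp [expansion]
  have hlt : ∀ p q, p < q → expansion (product (b p) (b q)) = product (b p) (b q) := by
    intro p q hpq
    have hwedge : contraction (product (b p) (b q)) = wedge R (b p) (b q) :=
      contraction_ι_mul_ι (b p) (b q)
    rw [hexp, hwedge, sum_coord_wedge_coord_smul_of_lt b hpq fun i j => product (b i) (b j)]
  have hproduct : product.compr₂ expansion = product := by
    refine LinearMap.ext_basis b b fun p q => ?_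
    rcases lt_trichotomy p q with hpq | rfl | hqp
    · exact hlt p q hpq
    · have h0 : product (b p) (b p) = 0 := ExteriorAlgebra.ι_sq_zero (b p)
      rw [LinearMap.compr₂_apply, h0, map_zero]
    · have hswap : product (b p) (b q) = -product (b q) (b p) :=
        eq_neg_of_add_eq_zero_left (ExteriorAlgebra.ι_add_mul_swap (b p) (b q))
      rw [LinearMap.compr₂_apply, hswap, map_neg, hlt q p hqp]
  refine (hexp ω).symm.trans (exteriorPower_two_induction (p := fun ω => expansion ω = ω)
    (fun u v => LinearMap.congr_fun₂ hproduct u v) (fun ω η hω hη => ?_) hω)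
  rw [map_add, hω, hη]

end Basis

theorem contraction_injOn {I : Type*} [Finite I] (b : Basis I R V) :
    Set.InjOn contraction (⋀[R]^2 V : Set (ExteriorAlgebra R V)) := fun ω hω η hη h => by
  have := Fintype.ofFinite I
  let _ : LinearOrder I := IsWellOrder.linearOrder WellOrderingRel
  rw [← sum_contraction_smul_ι_mul_ι b hω, ← sum_contraction_smul_ι_mul_ι b hη, h]

end Contraction

section Slice

variable {R E M : Type*} [CommRing R] [AddCommGroup E] [Module R E] [AddCommGroup M] [Module R M]

/-- The map `E* → M` defined by a tensor in `E ⊗ M`. -/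
def slice : E ⊗[R] M →ₗ[R] Dual R E →ₗ[R] M :=
  (LinearMap.rTensorHom M).flip.compr₂ (TensorProduct.lid R M).toLinearMap

@[simp]
theorem slice_tmul (e : E) (x : M) (ξ : Dual R E) : slice (e ⊗ₜ[R] x) ξ = ξ e • x :=
  rfl

theorem sum_tmul_slice_coord {I : Type*} [Fintype I] (e : Basis I R E) (v : E ⊗[R] M) :
    ∑ i, e i ⊗ₜ slice v (e.coord i) = v := by
  induction v with
  | zero => simp
  | tmul x y =>
    simp only [slice_tmul, ← TensorProduct.smul_tmul, ← TensorProduct.sum_tmul]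
    exact congrArg (· ⊗ₜ y) (e.sum_repr x)
  | add v w hv hw =>
    simp only [map_add, LinearMap.add_apply, TensorProduct.tmul_add, Finset.sum_add_distrib, hv, hw]

theorem slice_mem {S : Submodule R M} {v : E ⊗[R] M}
    (hv : v ∈ LinearMap.range (TensorProduct.map LinearMap.id S.subtype)) (ξ : Dual R E) :
    slice v ξ ∈ S := by
  obtain ⟨w, rfl⟩ := hv
  induction w with
  | zero => simp
  | tmul x y => exact S.smul_mem _ y.2
  | add v w hv hw =>
    rw [map_add, map_add, LinearMap.add_apply]
    exact S.add_mem hv hw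

end Slice

section NormalFormNaturality

theorem map_normalForm {V W M N F : Type*} [AddZeroClass M] [AddZeroClass N] [FunLike F M N]
    [AddMonoidHomClass F M N] (f : F) {m : V → V → M} {n : W → W → N} {g : V → W}
    (h : ∀ x y, f (m x y) = n (g x) (g y)) (b : Fin 5 → V) (k : Fin 8) (i : Fin 2) :
    f (normalForm m b k i) = normalForm n (g ∘ b) k i := by
  fin_cases k <;> fin_cases i <;> simp [normalForm, h]

theorem normalForm_mem {V M S : Type*} [AddZeroClass M] [SetLike S M] [AddSubmonoidClass S M]
    {s : S} {m : V → V → M} (h : ∀ x y, m x y ∈ s) (b : Fin 5 → V) (k : Fin 8) (i : Fin 2) :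
    normalForm m b k i ∈ s := by
  fin_cases k <;> fin_cases i <;> simp [normalForm, h, zero_mem, add_mem]

end NormalFormNaturality

section TensorNormalForm

variable {R E V : Type*} [CommRing R] [AddCommGroup E] [Module R E] [AddCommGroup V] [Module R V]

variable (R E V) in
/-- The submodule `E ⊗ ⋀²V` of `E ⊗ ⋀V`. -/
def tensorExteriorSquare : Submodule R (E ⊗[R] ExteriorAlgebra R V) :=
  LinearMap.range (TensorProduct.map (LinearMap.id : E →ₗ[R] E) (⋀[R]^2 V).subtype)

variable (R) in
/-- The `k`-th normal form of a tensor in `E ⊗ ⋀²V` with respect to two vectors of `E` and five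
vectors of `V`. -/
def tensorNormalForm (e : Fin 2 → E) (b : Fin 5 → V) (k : Fin 8) : E ⊗[R] ExteriorAlgebra R V :=
  ∑ i, e i ⊗ₜ normalForm (fun u v => ExteriorAlgebra.ι R u * ExteriorAlgebra.ι R v) b k i

theorem tensorNormalForm_mem (e : Fin 2 → E) (b : Fin 5 → V) (k : Fin 8) :
    tensorNormalForm R e b k ∈ tensorExteriorSquare R E V :=
  Submodule.sum_mem _ fun i _ =>
    ⟨e i ⊗ₜ ⟨_, normalForm_mem ι_mul_ι_mem_exteriorPower b k i⟩, rfl⟩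

theorem map_tensorNormalForm {E' V' : Type*} [AddCommGroup E'] [Module R E'] [AddCommGroup V']
    [Module R V'] (g : E →ₗ[R] E') (h : V →ₗ[R] V') (e : Fin 2 → E) (b : Fin 5 → V) (k : Fin 8) :
    TensorProduct.map g (ExteriorAlgebra.map h).toLinearMap (tensorNormalForm R e b k) =
      tensorNormalForm R (g ∘ e) (h ∘ b) k := by
  have hmul : ∀ u v, (ExteriorAlgebra.map h).toLinearMap
      (ExteriorAlgebra.ι R u * ExteriorAlgebra.ι R v) =
        ExteriorAlgebra.ι R (h u) * ExteriorAlgebra.ι R (h v) := fun u v => by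
    rw [AlgHom.toLinearMap_apply, map_mul, ExteriorAlgebra.map_apply_ι,
      ExteriorAlgebra.map_apply_ι]
  rw [tensorNormalForm, map_sum]
  exact Finset.sum_congr rfl fun i _ =>
    congrArg (g (e i) ⊗ₜ[R] ·) (map_normalForm (ExteriorAlgebra.map h).toLinearMap hmul b k i)

theorem tensorNormalForm_smul_smul (r s : R) (e : Fin 2 → E) (b : Fin 5 → V) (k : Fin 8) :
    tensorNormalForm R (r • e) (s • b) k = (r * s ^ 2) • tensorNormalForm R e b k := by
  have hmul : ∀ u v : V, LinearMap.lsmul R (ExteriorAlgebra R V) (s ^ 2)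
      (ExteriorAlgebra.ι R u * ExteriorAlgebra.ι R v) =
        ExteriorAlgebra.ι R (s • u) * ExteriorAlgebra.ι R (s • v) := fun u v => by
    rw [map_smul, map_smul, smul_mul_smul_comm, LinearMap.lsmul_apply, pow_two]
  rw [tensorNormalForm, tensorNormalForm, Finset.smul_sum]
  refine Finset.sum_congr rfl fun i _ => ?_
  rw [Pi.smul_apply, mul_smul, ← TensorProduct.tmul_smul, TensorProduct.smul_tmul']
  exact congrArg ((r • e i) ⊗ₜ[R] ·) (map_normalForm _ hmul b k i).symm

/-- The pencil of bivectors defined by a tensor in `E ⊗ ⋀²V`. -/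
def pencil (v : E ⊗[R] ExteriorAlgebra R V) : Dual R E →ₗ[R] Dual R V →ₗ[R] V :=
  contraction ∘ₗ slice v

theorem pencil_mem_bivectors {v : E ⊗[R] ExteriorAlgebra R V}
    (hv : v ∈ tensorExteriorSquare R E V)
    (ξ : Dual R E) : pencil v ξ ∈ bivectors R V :=
  contraction_mem_bivectors (slice_mem hv ξ)

theorem contraction_normalForm (b : Fin 5 → V) (k : Fin 8) (i : Fin 2) :
    contraction (normalForm (fun u v => ExteriorAlgebra.ι R u * ExteriorAlgebra.ι R v) b k i) =
      normalForm (wedge R) b k i :=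
  map_normalForm (g := id) contraction contraction_ι_mul_ι b k i

theorem pencil_tensorNormalForm_coord (e : Basis (Fin 2) R E) (b : Fin 5 → V) (k : Fin 8)
    (i : Fin 2) :
    pencil (tensorNormalForm R e b k) (e.coord i) = normalForm (wedge R) b k i := by
  rw [← contraction_normalForm]
  refine congrArg contraction ?_
  simp only [tensorNormalForm, map_sum, LinearMap.sum_apply, slice_tmul, Basis.coord_apply,
    Basis.repr_self, Finsupp.single_apply, ite_smul, one_smul, zero_smul, Finset.sum_ite_eq',
    Finset.mem_univ, if_true]

theorem eq_tensorNormalForm_of_pencil_coord {v : E ⊗[R] ExteriorAlgebra R V}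
    (hv : v ∈ tensorExteriorSquare R E V)
    {e : Basis (Fin 2) R E} {b : Basis (Fin 5) R V} {k : Fin 8}
    (h : ∀ i, pencil v (e.coord i) = normalForm (wedge R) b k i) :
    v = tensorNormalForm R e b k := by
  refine (sum_tmul_slice_coord e v).symm.trans
    (Finset.sum_congr rfl fun i _ => congrArg (e i ⊗ₜ[R] ·) ?_)
  exact contraction_injOn b (slice_mem hv _) (normalForm_mem ι_mul_ι_mem_exteriorPower b k i)
    ((h i).trans (contraction_normalForm _ k i).symm)

end TensorNormalForm

section PencilOfTensor

variable {K E V : Type*} [Field K] [AddCommGroup E] [Module K E] [AddCommGroup V] [Module K V]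

theorem exists_basis_coord_eq {ι : Type*} [Finite ι] (c : Basis ι K (Dual K E)) :
    ∃ e : Basis ι K E, ∀ i, e.coord i = c i := by
  classical
  have : FiniteDimensional K E := (finite_dual_iff K).1 (Module.Finite.of_basis c)
  let e := c.dualBasis.map (evalEquiv K E).symm
  refine ⟨e, fun i => e.ext fun j => ?_⟩
  have hij : c i (e j) = c.dualBasis j (c i) := by
    rw [Basis.map_apply, apply_evalEquiv_symm_apply]
  rw [hij, Basis.coord_apply, Basis.repr_self_apply, Basis.dualBasis_apply_self]
  exact if_congr eq_comm rfl rfl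

theorem hasNormalForm_pencil_tensorNormalForm (e : Basis (Fin 2) K E) (b : Basis (Fin 5) K V)
    (k : Fin 8) : HasNormalForm (pencil (tensorNormalForm K e b k)) k :=
  ⟨e.dualBasis, b, fun i => by
    rw [e.coe_dualBasis, pencil_tensorNormalForm_coord]⟩

theorem HasNormalForm.exists_eq_tensorNormalForm {k : Fin 8}
    {v : E ⊗[K] ExteriorAlgebra K V} (hv : v ∈ tensorExteriorSquare K E V)
    (h : HasNormalForm (pencil v) k) :
    ∃ (e : Basis (Fin 2) K E) (b : Basis (Fin 5) K V), v = tensorNormalForm K e b k := by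
  obtain ⟨c, b, hcb⟩ := h
  obtain ⟨e, he⟩ := exists_basis_coord_eq c
  exact ⟨e, b, eq_tensorNormalForm_of_pencil_coord hv fun i => (he i).symm ▸ hcb i⟩

end PencilOfTensor

section Orbits

variable {K : Type*} [Field K]

theorem exists_specialLinearGroup_mulVecLin_comp_eq_smul [IsAlgClosed K] {n : Type*} [Fintype n]
    [DecidableEq n] [Nonempty n] (b b' : Basis n K (n → K)) :
    ∃ (A : Matrix.SpecialLinearGroup n K) (c : K), c ≠ 0 ∧ A.1.mulVecLin ∘ b = c • ⇑b' := by
  obtain ⟨c, hc⟩ := IsAlgClosed.exists_pow_nat_eq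
    (LinearMap.det (b.equiv b' (Equiv.refl n)).toLinearMap)⁻¹ (Fintype.card_pos (α := n))
  have hdet : LinearMap.det (b.equiv b' (Equiv.refl n)).toLinearMap ≠ 0 :=
    (LinearEquiv.isUnit_det' _).ne_zero
  refine ⟨⟨c • LinearMap.toMatrix' (b.equiv b' (Equiv.refl n)).toLinearMap, ?_⟩, c, ?_, ?_⟩
  · rw [Matrix.det_smul, hc, LinearMap.det_toMatrix', inv_mul_cancel₀ hdet]
  · rintro rfl
    rw [zero_pow Fintype.card_ne_zero] at hc
    exact inv_ne_zero hdet hc.symm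
  · ext1 i
    simp

/-- Two tensors in `K² ⊗ ⋀²K⁵` are related if an element of `SL₂(K) × SL₅(K) × K^×` moves one to
the other. -/
def specialLinearRel (v w : tensorExteriorSquare K (Fin 2 → K) (Fin 5 → K)) : Prop :=
  ∃ (g : Matrix.SpecialLinearGroup (Fin 2) K) (h : Matrix.SpecialLinearGroup (Fin 5) K) (t : Kˣ),
    (w : (Fin 2 → K) ⊗[K] ExteriorAlgebra K (Fin 5 → K)) = (t : K) •
      TensorProduct.map g.1.mulVecLin (ExteriorAlgebra.map h.1.mulVecLin).toLinearMap v

variable {v w : tensorExteriorSquare K (Fin 2 → K) (Fin 5 → K)} {k : Fin 8}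

theorem HasNormalForm.of_specialLinearRel (hvw : specialLinearRel v w)
    (hv : HasNormalForm (pencil v.1) k) : HasNormalForm (pencil w.1) k := by
  obtain ⟨g, h, t, hw⟩ := hvw
  obtain ⟨e, b, hv⟩ := hv.exists_eq_tensorNormalForm v.2
  have hw' : w.1 = tensorNormalForm K
      ((e.map (Matrix.SpecialLinearGroup.toLin' g)).unitsSMul fun _ => t)
      (b.map (Matrix.SpecialLinearGroup.toLin' h)) k := by
    rw [hw, hv, map_tensorNormalForm]
    have hsmul := tensorNormalForm_smul_smul (t : K) 1 (g.1.mulVecLin ∘ e) (h.1.mulVecLin ∘ b) k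
    rw [one_pow, mul_one, one_smul] at hsmul
    have he : (t : K) • g.1.mulVecLin ∘ e =
        (e.map (Matrix.SpecialLinearGroup.toLin' g)).unitsSMul fun _ => t := funext fun i => by
      rw [Basis.unitsSMul_apply]
      rfl
    rw [← hsmul, he]
    rfl
  rw [hw']
  exact hasNormalForm_pencil_tensorNormalForm _ _ k

theorem HasNormalForm.specialLinearRel [IsAlgClosed K] (hv : HasNormalForm (pencil v.1) k)
    (hw : HasNormalForm (pencil w.1) k) : specialLinearRel v w := by
  obtain ⟨e, b, hv⟩ := hv.exists_eq_tensorNormalForm v.2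
  obtain ⟨e', b', hw⟩ := hw.exists_eq_tensorNormalForm w.2
  obtain ⟨g, r, hr, hg⟩ := exists_specialLinearGroup_mulVecLin_comp_eq_smul e e'
  obtain ⟨h, s, hs, hh⟩ := exists_specialLinearGroup_mulVecLin_comp_eq_smul b b'
  have hrs : r * s ^ 2 ≠ 0 := mul_ne_zero hr (pow_ne_zero 2 hs)
  refine ⟨g, h, Units.mk0 _ (inv_ne_zero hrs), ?_⟩
  rw [hv, hw, map_tensorNormalForm, hg, hh, tensorNormalForm_smul_smul, Units.val_mk0,
    inv_smul_smul₀ hrs]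

variable (K) in
theorem sl2_sl5_action_eight_orbits_general [IsAlgClosed K] :
    Nat.card (Quot (specialLinearRel (K := K))) = 8 := by
  have htype : ∀ v : tensorExteriorSquare K (Fin 2 → K) (Fin 5 → K),
      ∃ k, HasNormalForm (pencil v.1) k := fun v =>
    exists_hasNormalForm (finrank_fin_fun K)
      ((Subspace.dual_finrank_eq).trans (finrank_fin_fun K)) (pencil_mem_bivectors v.2)
  choose type htype using htype
  have hsurj : Function.Surjective type := fun k => by
    let v := tensorNormalForm K (Pi.basisFun K (Fin 2)) (Pi.basisFun K (Fin 5)) k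
    exact ⟨⟨v, tensorNormalForm_mem _ _ k⟩, (htype _).unique
      (hasNormalForm_pencil_tensorNormalForm _ _ k)⟩
  have hrel : specialLinearRel = Setoid.ker type := by
    ext v w
    exact ⟨fun h => ((htype v).of_specialLinearRel h).unique (htype w),
      fun h => (htype v).specialLinearRel (h ▸ htype w)⟩
  rw [hrel]
  exact (Nat.card_congr (Setoid.quotientKerEquivOfSurjective type hsurj)).trans (Nat.card_fin 8)

end Orbits

/-- The action of `SL₂(ℂ) × SL₅(ℂ) × ℂ^×` on `ℂ² ⊗ ⋀²ℂ⁵` has exactly 8 orbits. -/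
theorem sl2_sl5_action_eight_orbits : Nat.card (Quot relT9) = 8 :=
  sl2_sl5_action_eight_orbits_general ℂ
end
end
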